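/- arXiv:2308.13120 — 6 statements merged into one kernel-verified Lean document; each statement's English description precedes it below -/
import Mathlib

section
/- Let k be a field of characteristic 0 and Γ a group. The group algebra k[Γ] is a prime ring if and only if every finite normal subgroup of Γ is trivial. -/
/-!
If `N` is a finite normal subgroup and `n ∈ N`, the sum `s` of the elements of `N` is central and
`s * (1 - n) = 0`, so primeness forces `n = 1`.

For the converse, let `Δ` be the FC-centre of `Γ`: the elements with finitely many conjugates,
equivalently with centralizer of finite index. Suppose `Γ` has no nontrivial finite normal subgroup.
The normal closure `H` of a finite subset of `Δ` is finitely generated and its centralizer has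
finite index, so by Schur's theorem `[H, H]` is finite, hence trivial, and `H` is abelian
(`normalClosure_le_centralizer`). An element of `Δ` of finite order then has a finite normal
closure, so `Δ` is torsion-free (`eq_one_of_mem_fcCenter`). Finitely generated torsion-free abelian
groups have unique products, so finite nonempty subsets of `Δ` have a uniquely represented product.

The other ingredient is Passman's argument (`fcPart_mul_eq_zero`): if `x k[Γ] y = 0` and `x₀` is the
part of `x` supported on `Δ`, then `x₀ y = 0`. Indeed, for `h` in the finite-index centralizer `W`
of the support of `x₀` one has `x₀ y + (h (x - x₀) h⁻¹) y = 0`, so if `z` is in the support of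
`x₀ y` then every `h ∈ W` conjugates some `u ∈ supp x \ Δ` to some `z v⁻¹` with `v ∈ supp y`.
This covers `W` by finitely many cosets of centralizers of elements outside `Δ`, which have
infinite index, contradicting B. H. Neumann's lemma.

Nonzero `x` and `y` may be translated so that `1` is in both supports. A uniquely represented
product of `supp x ∩ Δ` and `supp y ∩ Δ` then gives a nonzero coefficient of `x₀ y`, a contradiction.
-/

open scoped Pointwise commutatorElement

/-- The FC-centre of a group: the elements whose centralizer has finite index, that is, those with
finitely many conjugates. -/
def fcCenter (Γ : Type*) [Group Γ] : Subgroup Γ where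
  carrier := {g | (Subgroup.centralizer {g}).FiniteIndex}
  one_mem' := by
    have h : Subgroup.centralizer {(1 : Γ)} = ⊤ := by
      ext x
      simp [Subgroup.mem_centralizer_singleton_iff]
    simp only [Set.mem_ofPred_eq, h]
    infer_instance
  mul_mem' := by
    intro a b ha hb
    simp only [Set.mem_ofPred_eq] at ha hb ⊢
    refine Subgroup.finiteIndex_of_le
      (H := Subgroup.centralizer {a} ⊓ Subgroup.centralizer {b}) ?_
    rintro x ⟨hxa, hxb⟩
    have h1 : Commute x a := Subgroup.mem_centralizer_singleton_iff.1 hxa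
    have h2 : Commute x b := Subgroup.mem_centralizer_singleton_iff.1 hxb
    exact Subgroup.mem_centralizer_singleton_iff.2 (h1.mul_right h2)
  inv_mem' := by
    intro a ha
    simp only [Set.mem_ofPred_eq] at ha ⊢
    refine Subgroup.finiteIndex_of_le (H := Subgroup.centralizer {a}) ?_
    intro x hx
    have h1 : Commute x a := Subgroup.mem_centralizer_singleton_iff.1 hx
    exact Subgroup.mem_centralizer_singleton_iff.2 h1.inv_right

section Group

variable {Γ : Type*} [Group Γ]

lemma mem_fcCenter_iff {g : Γ} : g ∈ fcCenter Γ ↔ (Subgroup.centralizer {g}).FiniteIndex :=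
  Iff.rfl

lemma finiteIndex_centralizer_of_finite {S : Set Γ} (hS : S.Finite) (h : S ⊆ fcCenter Γ) :
    (Subgroup.centralizer S).FiniteIndex := by
  have : Finite S := hS
  have hf : (⨅ s : S, Subgroup.centralizer {(s : Γ)}).FiniteIndex :=
    Subgroup.finiteIndex_iInf fun s => h s.2
  refine Subgroup.finiteIndex_of_le (H := ⨅ s : S, Subgroup.centralizer {(s : Γ)}) ?_
  intro x hx
  rw [Subgroup.mem_iInf] at hx
  rw [Subgroup.mem_centralizer_iff]
  intro s hs
  exact (Subgroup.mem_centralizer_singleton_iff.1 (hx ⟨s, hs⟩)).symm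

lemma finite_conjugatesOf {g : Γ} (hg : g ∈ fcCenter Γ) : (conjugatesOf g).Finite := by
  rw [mem_fcCenter_iff] at hg
  -- `x ↦ x g x⁻¹` descends to the finite coset space of the centralizer of `g`.
  let f : Γ ⧸ Subgroup.centralizer {g} → Γ := Quotient.lift (fun x : Γ => x * g * x⁻¹) (by
    intro a b hab
    have h := Subgroup.mem_centralizer_singleton_iff.1 (QuotientGroup.leftRel_apply.1 hab)
    calc a * g * a⁻¹ = a * (g * (a⁻¹ * b)) * b⁻¹ := by group
      _ = a * ((a⁻¹ * b) * g) * b⁻¹ := by rw [h]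
      _ = b * g * b⁻¹ := by group)
  refine (Set.finite_range f).subset ?_
  intro y hy
  obtain ⟨c, rfl⟩ := isConj_iff.1 (show IsConj g y from hy)
  exact ⟨(c : Γ ⧸ Subgroup.centralizer {g}), rfl⟩

lemma conj_mem_fcCenter {g : Γ} (hg : g ∈ fcCenter Γ) (c : Γ) : c * g * c⁻¹ ∈ fcCenter Γ := by
  rw [mem_fcCenter_iff] at hg ⊢
  have h : Subgroup.centralizer {c * g * c⁻¹} =
      (Subgroup.centralizer {g}).comap (MulAut.conj c⁻¹).toMonoidHom := by
    ext x
    simp only [Subgroup.mem_centralizer_singleton_iff, Subgroup.mem_comap, MulEquiv.coe_toMonoidHom,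
      MulAut.conj_apply, inv_inv]
    rw [← mul_right_inj c⁻¹, ← mul_left_inj c]
    simp only [mul_assoc, inv_mul_cancel_left, inv_mul_cancel, mul_one]
  rw [h, Subgroup.finiteIndex_iff,
    Subgroup.index_comap_of_surjective _ (MulAut.conj c⁻¹).surjective]
  exact hg.index_ne_zero

lemma finite_conjugatesOfSet {S : Set Γ} (hS : S.Finite) (h : S ⊆ fcCenter Γ) :
    (Group.conjugatesOfSet S).Finite :=
  hS.biUnion fun _ hs => finite_conjugatesOf (h hs)

lemma conjugatesOfSet_subset_fcCenter {S : Set Γ} (h : S ⊆ fcCenter Γ) :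
    Group.conjugatesOfSet S ⊆ fcCenter Γ := by
  intro y hy
  obtain ⟨a, ha, hay⟩ := Group.mem_conjugatesOfSet_iff.1 hy
  obtain ⟨c, rfl⟩ := isConj_iff.1 hay
  exact conj_mem_fcCenter (h ha) c

lemma finiteIndex_centralizer_normalClosure {S : Set Γ} (hS : S.Finite) (h : S ⊆ fcCenter Γ) :
    (Subgroup.centralizer (Subgroup.normalClosure S : Set Γ)).FiniteIndex := by
  rw [Subgroup.normalClosure, Subgroup.centralizer_closure]
  exact finiteIndex_centralizer_of_finite (finite_conjugatesOfSet hS h)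
    (conjugatesOfSet_subset_fcCenter h)

lemma fg_normalClosure {S : Set Γ} (hS : S.Finite) (h : S ⊆ fcCenter Γ) :
    Group.FG (Subgroup.normalClosure S) :=
  (Group.fg_iff_subgroup_fg _).2
    ((Subgroup.fg_iff _).2 ⟨_, rfl, finite_conjugatesOfSet hS h⟩)

/-- A commutator only depends on the classes of its entries modulo the centre. -/
lemma finite_commutatorSet (G : Type*) [Group G] [(Subgroup.center G).FiniteIndex] :
    Finite (commutatorSet G) := by
  let q : G ⧸ Subgroup.center G → G := Quotient.out
  refine ((Set.finite_range fun p : (G ⧸ Subgroup.center G) × (G ⧸ Subgroup.center G) =>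
    ⁅q p.1, q p.2⁆).subset ?_).to_subtype
  rintro _ ⟨a, b, rfl⟩
  refine ⟨(a, b), ?_⟩
  obtain ⟨z, hz⟩ := QuotientGroup.mk_out_eq_mul (Subgroup.center G) a
  obtain ⟨w, hw⟩ := QuotientGroup.mk_out_eq_mul (Subgroup.center G) b
  change ⁅Quotient.out (a : G ⧸ Subgroup.center G), Quotient.out (b : G ⧸ Subgroup.center G)⁆ = _
  rw [hz, hw]
  have hz' : ∀ g, g * (z : G) = z * g := Subgroup.mem_center_iff.1 z.2
  have hw' : ∀ g, g * (w : G) = w * g := Subgroup.mem_center_iff.1 w.2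
  calc ⁅a * z, b * w⁆ = a * (z * b) * ((w * (z : G)⁻¹) * a⁻¹) * (w : G)⁻¹ * b⁻¹ := by
        rw [commutatorElement_def]; group
    _ = a * (b * z) * (((z : G)⁻¹ * w) * a⁻¹) * (w : G)⁻¹ * b⁻¹ := by rw [← hz', hw']
    _ = a * b * (w * a⁻¹) * (w : G)⁻¹ * b⁻¹ := by group
    _ = a * b * (a⁻¹ * w) * (w : G)⁻¹ * b⁻¹ := by rw [← hw']
    _ = ⁅a, b⁆ := by rw [commutatorElement_def]; group

/-- By Schur's theorem the derived subgroup of the normal closure of a finite subset of the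
FC-centre is finite; so it is trivial when there are no nontrivial finite normal subgroups. -/
lemma normalClosure_le_centralizer
    (hN : ∀ N : Subgroup Γ, N.Normal → (N : Set Γ).Finite → N = ⊥)
    {S : Set Γ} (hS : S.Finite) (h : S ⊆ fcCenter Γ) :
    Subgroup.normalClosure S ≤ Subgroup.centralizer (Subgroup.normalClosure S : Set Γ) := by
  set H := Subgroup.normalClosure S with hH
  have hc : (Subgroup.centralizer (H : Set Γ)).FiniteIndex :=
    finiteIndex_centralizer_normalClosure hS h
  have hz : (Subgroup.center H).FiniteIndex := by
    refine Subgroup.finiteIndex_of_le (H := (Subgroup.centralizer (H : Set Γ)).subgroupOf H) ?_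
    intro x hx
    rw [Subgroup.mem_center_iff]
    intro g
    exact Subtype.ext (Subgroup.mem_centralizer_iff.1 (Subgroup.mem_subgroupOf.1 hx) g g.2)
  have := finite_commutatorSet H
  have hfin : ((⁅H, H⁆ : Subgroup Γ) : Set Γ).Finite := by
    rw [← Subgroup.map_subtype_commutator, Subgroup.coe_map]
    have hfc : Finite (commutator H) := inferInstance
    exact Set.Finite.image _ hfc
  rw [← Subgroup.commutator_eq_bot_iff_le_centralizer]
  exact hN _ inferInstance hfin

lemma eq_one_of_mem_fcCenter
    (hN : ∀ N : Subgroup Γ, N.Normal → (N : Set Γ).Finite → N = ⊥)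
    {g : Γ} (hg : g ∈ fcCenter Γ) (ho : IsOfFinOrder g) : g = 1 := by
  have hS : ({g} : Set Γ) ⊆ fcCenter Γ := by simpa using hg
  have hcomm := normalClosure_le_centralizer hN (Set.finite_singleton g) hS
  have hfg := fg_normalClosure (Set.finite_singleton g) hS
  set H := Subgroup.normalClosure {g} with hH
  obtain ⟨n, hn, hgn⟩ := isOfFinOrder_iff_pow_eq_one.1 ho
  have hpow : ∀ x ∈ H, x ^ n = 1 := by
    intro x hx
    have hx' : x ∈ Subgroup.closure (Group.conjugatesOfSet {g}) := hx
    induction hx' using Subgroup.closure_induction with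
    | mem y hy =>
      obtain ⟨a, ha, hay⟩ := Group.mem_conjugatesOfSet_iff.1 hy
      obtain ⟨c, rfl⟩ := isConj_iff.1 hay
      rw [Set.mem_singleton_iff.1 ha, conj_pow, hgn]
      simp
    | one => simp
    | mul y z hy hz ihy ihz =>
      have hyz : Commute y z := Subgroup.mem_centralizer_iff.1 (hcomm hz) y hy
      rw [hyz.mul_pow, ihy hy, ihz hz, one_mul]
    | inv y hy ih => rw [inv_pow, ih hy, inv_one]
  let _ : CommGroup H :=
    { (inferInstance : Group H) with
      mul_comm := fun a b => Subtype.ext (Subgroup.mem_centralizer_iff.1 (hcomm b.2) a a.2) }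
  have hfin : Finite H := CommGroup.finite_of_fg_isMulTorsion H fun x =>
    isOfFinOrder_iff_pow_eq_one.2 ⟨n, hn, Subtype.ext (hpow x x.2)⟩
  have hbot := hN H Subgroup.normalClosure_normal (Set.toFinite _)
  have hgH : g ∈ H := Subgroup.subset_normalClosure rfl
  rwa [hbot, Subgroup.mem_bot] at hgH

/-- The normal closure of `A ∪ B` is a finitely generated torsion-free abelian group, and such
groups have unique products. -/
lemma exists_uniqueMul
    (hN : ∀ N : Subgroup Γ, N.Normal → (N : Set Γ).Finite → N = ⊥)
    {A B : Finset Γ} (hA : A.Nonempty) (hB : B.Nonempty)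
    (hAΔ : ∀ a ∈ A, a ∈ fcCenter Γ) (hBΔ : ∀ b ∈ B, b ∈ fcCenter Γ) :
    ∃ a ∈ A, ∃ b ∈ B, UniqueMul A B a b := by
  classical
  have hSf : ((A : Set Γ) ∪ B).Finite := A.finite_toSet.union B.finite_toSet
  have hS : (A : Set Γ) ∪ B ⊆ fcCenter Γ := Set.union_subset hAΔ hBΔ
  have hcomm := normalClosure_le_centralizer hN hSf hS
  have hfg := fg_normalClosure hSf hS
  have hci := finiteIndex_centralizer_normalClosure hSf hS
  have hSH := Subgroup.subset_normalClosure (s := (A : Set Γ) ∪ B)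
  set H := Subgroup.normalClosure ((A : Set Γ) ∪ B) with hH
  let _ : CommGroup H :=
    { (inferInstance : Group H) with
      mul_comm := fun a b => Subtype.ext (Subgroup.mem_centralizer_iff.1 (hcomm b.2) a a.2) }
  have htf : IsMulTorsionFree H := by
    refine IsMulTorsionFree.of_not_isOfFinOrder fun x hx hfo => hx (Subtype.ext ?_)
    refine eq_one_of_mem_fcCenter hN ?_ (H.subtype.isOfFinOrder hfo)
    exact Subgroup.finiteIndex_of_le (H := Subgroup.centralizer (H : Set Γ))
      (Subgroup.centralizer_le (Set.singleton_subset_iff.2 x.2))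
  have hmon : Monoid.FG H := Group.fg_iff_monoid_fg.1 hfg
  have hup : UniqueProds H := inferInstance
  have lift : ∀ C : Finset Γ, (C : Set Γ) ⊆ H →
      ∃ C' : Finset H, C'.map (Function.Embedding.subtype _) = C := fun C hC =>
    ⟨C.subtype (· ∈ H), Finset.subtype_map_of_mem hC⟩
  obtain ⟨A', hA'⟩ := lift A (Set.subset_union_left.trans hSH)
  obtain ⟨B', hB'⟩ := lift B (Set.subset_union_right.trans hSH)
  rw [← hA'] at hA ⊢
  rw [← hB'] at hB ⊢
  obtain ⟨a, ha, b, hb, hab⟩ :=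
    hup.uniqueMul_of_nonempty (Finset.map_nonempty.1 hA) (Finset.map_nonempty.1 hB)
  exact ⟨a, Finset.mem_map_of_mem _ ha, b, Finset.mem_map_of_mem _ hb,
    (UniqueMul.mulHom_map_iff (Function.Embedding.subtype (· ∈ H)) fun _ _ => rfl).2 hab⟩

end Group

section Algebra

open MonoidAlgebra

variable {k : Type*} [Field k] {Γ : Type*} [Group Γ]

open Classical in
/-- The part of an element of the group algebra supported on the FC-centre. -/
noncomputable def fcPart (x : MonoidAlgebra k Γ) : MonoidAlgebra k Γ :=
  .ofCoeff (x.coeff.filter (· ∈ fcCenter Γ))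

lemma conj_eq_self {x : MonoidAlgebra k Γ} {h : Γ} (hx : ∀ g ∈ x.coeff.support, h * g = g * h) :
    single h 1 * x * single h⁻¹ 1 = x := by
  ext g
  rw [coeff_mul_single_apply, coeff_single_mul_apply]
  simp only [inv_inv, one_mul, mul_one]
  by_cases hg : g ∈ x.coeff.support
  · rw [← hx g hg, inv_mul_cancel_left]
  · by_cases hg' : h⁻¹ * (g * h) ∈ x.coeff.support
    · have := hx _ hg'
      have e : g = h⁻¹ * (g * h) := by
        rw [mul_inv_cancel_left] at this
        exact mul_right_cancel this
      rw [← e]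
    · rw [Finsupp.notMem_support_iff.1 hg, Finsupp.notMem_support_iff.1 hg']

/-- Passman's argument: if `x k[Γ] y = 0`, then `y` is annihilated by the part of `x` supported on
the FC-centre. -/
lemma fcPart_mul_eq_zero {x y : MonoidAlgebra k Γ} (hxy : ∀ a, x * a * y = 0) :
    fcPart x * y = 0 := by
  classical
  by_contra hne
  obtain ⟨z, hz⟩ : ∃ z, (fcPart x * y).coeff z ≠ 0 := by
    by_contra! hcon
    exact hne (MonoidAlgebra.ext (Finsupp.ext hcon))
  set x₀ := fcPart x with hx₀
  set x₁ := x - x₀ with hx₁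
  have hsupp₀ : (x₀.coeff.support : Set Γ) ⊆ fcCenter Γ := by
    intro g hg
    simp only [hx₀, fcPart, coeff_ofCoeff, Finsupp.support_filter, Finset.coe_filter] at hg
    exact hg.2
  have hsupp₁ : ∀ u ∈ x₁.coeff.support, u ∉ fcCenter Γ := by
    intro u hu hmem
    apply Finsupp.mem_support_iff.1 hu
    simp [hx₁, hx₀, fcPart, hmem]
  set W := Subgroup.centralizer (x₀.coeff.support : Set Γ) with hW
  have hWfin : W.FiniteIndex :=
    finiteIndex_centralizer_of_finite (Finset.finite_toSet _) hsupp₀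
  have key : ∀ h : W, ∃ u ∈ x₁.coeff.support, ∃ v ∈ y.coeff.support,
      (h : Γ) * u * (h : Γ)⁻¹ = z * v⁻¹ := by
    intro h
    have h0 : single (h : Γ) 1 * x₀ * single (h : Γ)⁻¹ 1 = x₀ :=
      conj_eq_self fun g hg => (Subgroup.mem_centralizer_iff.1 h.2 g hg).symm
    have h1 : x₀ * y + single (h : Γ) 1 * x₁ * single (h : Γ)⁻¹ 1 * y = 0 := by
      calc _ = single (h : Γ) 1 * (x * single (h : Γ)⁻¹ 1 * y) := by
            nth_rewrite 1 [← h0]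
            rw [hx₁]
            noncomm_ring
        _ = 0 := by rw [hxy, mul_zero]
    have h2 : z ∈ (single (h : Γ) 1 * x₁ * single (h : Γ)⁻¹ 1 * y).coeff.support := by
      rw [Finsupp.mem_support_iff]
      intro h3
      apply hz
      rw [eq_neg_of_add_eq_zero_left h1, coeff_neg, Finsupp.neg_apply, h3, neg_zero]
    obtain ⟨w, hw, v, hv, hwv⟩ := Finset.mem_mul.1 (support_coeff_mul_subset _ _ h2)
    obtain ⟨w', hw', rfl⟩ := Finset.mem_image.1 (support_coeff_mul_single_subset _ _ _ hw)
    obtain ⟨u, hu, rfl⟩ := Finset.mem_image.1 (support_coeff_single_mul_subset _ _ _ hw')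
    exact ⟨u, hu, v, hv, eq_mul_inv_of_mul_eq hwv⟩
  -- For each pair `(u, v)`, an element of `W` conjugating `u` to `z v⁻¹`, if there is one.
  let c : Γ × Γ → W := fun p =>
    if H : ∃ h : W, (h : Γ) * p.1 * (h : Γ)⁻¹ = z * p.2⁻¹ then H.choose else 1
  have hcover : ⋃ p ∈ x₁.coeff.support ×ˢ y.coeff.support,
      c p • (((Subgroup.centralizer {p.1}).subgroupOf W : Subgroup W) : Set W) = Set.univ := by
    refine Set.eq_univ_of_forall fun h => ?_
    obtain ⟨u, hu, v, hv, huv⟩ := key h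
    refine Set.mem_biUnion (x := (u, v)) (Finset.mem_coe.2 (Finset.mem_product.2 ⟨hu, hv⟩)) ?_
    have H : ∃ h : W, (h : Γ) * u * (h : Γ)⁻¹ = z * v⁻¹ := ⟨h, huv⟩
    have hc : (c (u, v) : Γ) * u * (c (u, v) : Γ)⁻¹ = z * v⁻¹ := by
      simp only [c, dif_pos H]
      exact H.choose_spec
    rw [mem_leftCoset_iff, SetLike.mem_coe, Subgroup.mem_subgroupOf,
      Subgroup.mem_centralizer_singleton_iff]
    push_cast
    have e : (h : Γ) * u = (c (u, v) : Γ) * u * (c (u, v) : Γ)⁻¹ * h := by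
      rw [hc, ← huv]; group
    rw [mul_assoc, e]; group
  obtain ⟨p, hp, hfi⟩ := Subgroup.exists_finiteIndex_of_leftCoset_cover hcover
  refine hsupp₁ p.1 (Finset.mem_product.1 hp).1 ?_
  rw [mem_fcCenter_iff, Subgroup.finiteIndex_iff, ← Subgroup.relIndex_top_right]
  refine Subgroup.relIndex_ne_zero_trans (K := W) hfi.index_ne_zero ?_
  rw [Subgroup.relIndex_top_right]
  exact hWfin.index_ne_zero

/-- The primeness argument after translating so that `1` lies in both supports. -/
lemma false_of_coeff_one_ne_zero
    (hN : ∀ N : Subgroup Γ, N.Normal → (N : Set Γ).Finite → N = ⊥)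
    {x y : MonoidAlgebra k Γ} (hxy : ∀ a, x * a * y = 0)
    (hx : x.coeff 1 ≠ 0) (hy : y.coeff 1 ≠ 0) : False := by
  classical
  have h0 := fcPart_mul_eq_zero hxy
  have hsupp : ∀ a, a ∈ (fcPart x).coeff.support ↔ x.coeff a ≠ 0 ∧ a ∈ fcCenter Γ := by
    intro a
    simp [fcPart, and_comm]
  obtain ⟨a, ha, b, hb, hab⟩ := exists_uniqueMul hN
    (A := (fcPart x).coeff.support) (B := y.coeff.support.filter (· ∈ fcCenter Γ))
    ⟨1, (hsupp 1).2 ⟨hx, one_mem _⟩⟩ ⟨1, by simp [hy, one_mem]⟩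
    (fun a ha => ((hsupp a).1 ha).2) (fun b hb => (Finset.mem_filter.1 hb).2)
  have hb' := Finset.mem_filter.1 hb
  -- If `a' * b' = a * b` with `a'`, `a`, `b` in the FC-centre, then so is `b'`.
  have huniq : UniqueMul (fcPart x).coeff.support y.coeff.support a b := by
    intro a' b' ha' hb'' he
    refine hab ha' (Finset.mem_filter.2 ⟨hb'', ?_⟩) he
    rw [eq_inv_mul_of_mul_eq he]
    exact mul_mem (inv_mem ((hsupp a').1 ha').2) (mul_mem ((hsupp a).1 ha).2 hb'.2)
  have hcoeff := coeff_mul_mul_of_uniqueMul huniq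
  rw [h0, coeff_zero, Finsupp.zero_apply] at hcoeff
  exact mul_ne_zero (Finsupp.mem_support_iff.1 ha) (Finsupp.mem_support_iff.1 hb'.1) hcoeff.symm

/-- The sum of the elements of a finite normal subgroup is central and absorbs its elements. -/
lemma eq_bot_of_prime
    (hP : ∀ x y : MonoidAlgebra k Γ, (∀ a : MonoidAlgebra k Γ, x * a * y = 0) → x = 0 ∨ y = 0)
    (N : Subgroup Γ) (hNn : N.Normal) (hfin : (N : Set Γ).Finite) : N = ⊥ := by
  classical
  rw [Subgroup.eq_bot_iff_forall]
  intro n hn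
  let s : MonoidAlgebra k Γ := .ofCoeff (Finsupp.onFinset hfin.toFinset
    (fun g => if g ∈ N then 1 else 0) (by intro g hg; simpa using hg))
  have hs : ∀ g, s.coeff g = if g ∈ N then 1 else 0 := fun g => rfl
  have hcomm : ∀ a : MonoidAlgebra k Γ, s * a = a * s := by
    intro a
    induction a using MonoidAlgebra.induction_linear with
    | zero => simp
    | add f g hf hg => rw [mul_add, add_mul, hf, hg]
    | single m r =>
      ext g
      rw [coeff_mul_single_apply, coeff_single_mul_apply, hs, hs, hNn.mem_comm_iff, mul_comm]
  have hsn : s * single n 1 = s := by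
    ext g
    rw [coeff_mul_single_apply, hs, hs, mul_one, N.mul_mem_cancel_right (inv_mem hn)]
  rcases hP s (1 - single n 1) (fun a => by
    rw [hcomm, mul_assoc, mul_sub, mul_one, hsn, sub_self, mul_zero]) with h | h
  · have := hs 1
    simp [h, one_mem] at this
  · rw [sub_eq_zero, one_def, single_left_inj one_ne_zero] at h
    exact h.symm

end Algebra

/-- (Connell) For a field `k` of characteristic 0 and a group `Γ`, the group algebra
`k[Γ]` is a prime ring iff every finite normal subgroup of `Γ` is trivial. -/
theorem monoidAlgebra_prime_iff (k : Type*) [Field k] [CharZero k]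
    (Γ : Type*) [Group Γ] :
    (∀ x y : MonoidAlgebra k Γ, (∀ a : MonoidAlgebra k Γ, x * a * y = 0) → x = 0 ∨ y = 0) ↔
      (∀ N : Subgroup Γ, N.Normal → (N : Set Γ).Finite → N = ⊥) := by
  refine ⟨eq_bot_of_prime, fun hN x y hxy => ?_⟩
  by_contra! hne
  have hex : ∀ w : MonoidAlgebra k Γ, w ≠ 0 → ∃ g, w.coeff g ≠ 0 := by
    intro w hw
    by_contra! hcon
    exact hw (MonoidAlgebra.ext (Finsupp.ext hcon))
  obtain ⟨g, hg⟩ := hex x hne.1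
  obtain ⟨h, hh⟩ := hex y hne.2
  refine false_of_coeff_one_ne_zero hN
    (x := MonoidAlgebra.single g⁻¹ 1 * x) (y := y * MonoidAlgebra.single h⁻¹ 1) (fun a => ?_) ?_ ?_
  · calc _ = MonoidAlgebra.single g⁻¹ 1 * (x * a * y) * MonoidAlgebra.single h⁻¹ 1 := by
          simp only [mul_assoc]
      _ = 0 := by rw [hxy, mul_zero, zero_mul]
  · rw [MonoidAlgebra.coeff_single_mul_apply]
    simpa using hg
  · rw [MonoidAlgebra.coeff_mul_single_apply]
    simpa using hh
end

section
/- Let k be a field of characteristic 0 and Γ any group. Then the group algebra k[Γ] is a semiprime ring, i.e., for every x ∈ k[Γ], if x·a·x = 0 for all a ∈ k[Γ], then x = 0. -/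
/-!
Over `ℂ`, the involution `(∑ c_g g)* = ∑ conj c_g g⁻¹` is positive: the coefficient of `1` in
`x * x*` is `∑ |c_g|²`, so `x * x* = 0` forces `x = 0`. If `x * a * x = 0` for all `a`, the
self-adjoint element `z = x * x*` satisfies `z * z* = (x * x* * x) * x* = 0`, whence `z = 0` and
`x = 0`.

For a general field `k` of characteristic zero, suppose that `x` has a nonzero coefficient `c`.
The `ℚ`-subalgebra `A` of `k` generated by the coefficients of `x` and by `c⁻¹` is of finite type,
so by Zariski's lemma it has a residue field finite over `ℚ`, and therefore a ring homomorphism to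
`ℂ`; this homomorphism does not kill the unit `c`. As `x` is defined over `A` and
`x * g * x = 0` for every group element `g`, the image `x'` of `x` in `ℂ[Γ]` satisfies
`x' * a * x' = 0` for all `a`, so it vanishes by the complex case, although `c` is not killed.
-/

namespace GroupAlgebraSemiprime

variable {Γ : Type*} [Group Γ]

/-- The conjugate-linear involution of `ℂ[Γ]` which sends `g` to `g⁻¹`. -/
noncomputable def adj : MonoidAlgebra ℂ Γ →+ MonoidAlgebra ℂ Γ where
  toFun x := .ofCoeff
    ((x.coeff.mapRange (starRingEnd ℂ) (map_zero _)).equivMapDomain (Equiv.inv Γ))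
  map_zero' := by ext; simp
  map_add' x y := by ext; simp

lemma coeff_adj (x : MonoidAlgebra ℂ Γ) (g : Γ) :
    (adj x).coeff g = starRingEnd ℂ (x.coeff g⁻¹) := by
  simp [adj]

lemma adj_single (g : Γ) (c : ℂ) :
    adj (MonoidAlgebra.single g c) = MonoidAlgebra.single g⁻¹ (starRingEnd ℂ c) := by
  simp [adj, Finsupp.equivMapDomain_single]

lemma adj_adj (x : MonoidAlgebra ℂ Γ) : adj (adj x) = x := by
  ext g
  simp [coeff_adj]

lemma adj_mul (x y : MonoidAlgebra ℂ Γ) : adj (x * y) = adj y * adj x := by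
  induction x using MonoidAlgebra.induction_linear with
  | zero => simp
  | add a b ha hb => simp [add_mul, mul_add, ha, hb]
  | single g c =>
    induction y using MonoidAlgebra.induction_linear with
    | zero => simp
    | add a b ha hb => simp [add_mul, mul_add, ha, hb]
    | single h d => simp [adj_single, mul_comm]

lemma eq_zero_of_mul_adj {x : MonoidAlgebra ℂ Γ} (h : x * adj x = 0) : x = 0 := by
  have h1 : (x * adj x).coeff 1 = ((x.coeff.sum fun _ r => Complex.normSq r : ℝ) : ℂ) := by
    rw [MonoidAlgebra.coeff_mul_apply_left]
    simp [Finsupp.sum, coeff_adj, Complex.mul_conj]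
  rw [h, MonoidAlgebra.coeff_zero, Finsupp.zero_apply, eq_comm, Complex.ofReal_eq_zero,
    Finsupp.sum, Finset.sum_eq_zero_iff_of_nonneg fun _ _ => Complex.normSq_nonneg _] at h1
  ext g
  by_contra hg
  exact hg (Complex.normSq_eq_zero.1 (h1 g (Finsupp.mem_support_iff.2 hg)))

lemma semiprime_complex {x : MonoidAlgebra ℂ Γ} (h : ∀ a, x * a * x = 0) : x = 0 := by
  apply eq_zero_of_mul_adj
  apply eq_zero_of_mul_adj
  rw [adj_mul, adj_adj, ← mul_assoc, h, zero_mul]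

/-- It suffices to test `x * a * x = 0` on group elements `a`. -/
lemma mul_mul_eq_zero_of_single {R : Type*} [CommRing R] {x : MonoidAlgebra R Γ}
    (h : ∀ g, x * MonoidAlgebra.single g 1 * x = 0) (a : MonoidAlgebra R Γ) :
    x * a * x = 0 := by
  induction a using MonoidAlgebra.induction_linear with
  | zero => simp
  | add a b ha hb => simp [add_mul, mul_add, ha, hb]
  | single g c =>
    have : MonoidAlgebra.single g c = c • MonoidAlgebra.single g (1 : R) := by simp
    rw [this, mul_smul_comm, smul_mul_assoc, h, smul_zero]

/-- By Zariski's lemma a residue field of `A` is finite over `ℚ`, hence embeds into `ℂ`. -/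
lemma exists_ringHom_complex (A : Type*) [CommRing A] [Nontrivial A] [Algebra ℚ A]
    [Algebra.FiniteType ℚ A] : Nonempty (A →+* ℂ) := by
  obtain ⟨m, hm⟩ := Ideal.exists_maximal A
  let : Field (A ⧸ m) := Ideal.Quotient.field m
  have : Module.Finite ℚ (A ⧸ m) := finite_of_finite_type_of_isJacobsonRing ℚ (A ⧸ m)
  let f : (A ⧸ m) →ₐ[ℚ] ℂ := IsAlgClosed.lift
  exact ⟨f.toRingHom.comp (Ideal.Quotient.mk m)⟩

end GroupAlgebraSemiprime

open GroupAlgebraSemiprime in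
/-- For a field `k` of characteristic 0 and any group `Γ`, the group algebra `k[Γ]`
is semiprime. -/
theorem monoidAlgebra_semiprime (k : Type*) [Field k] [CharZero k]
    (Γ : Type*) [Group Γ] :
    ∀ x : MonoidAlgebra k Γ, (∀ a : MonoidAlgebra k Γ, x * a * x = 0) → x = 0 := by
  classical
  intro x hx
  ext g₀
  by_contra hg₀
  rw [MonoidAlgebra.coeff_zero, Finsupp.zero_apply] at hg₀
  let s : Finset k := insert (x.coeff g₀)⁻¹ (x.coeff.support.image x.coeff)
  let A : Subalgebra ℚ k := Algebra.adjoin ℚ (s : Set k)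
  have hxA (g : Γ) : x.coeff g ∈ A := by
    by_cases hg : x.coeff g = 0
    · rw [hg]
      exact A.zero_mem
    · refine Algebra.subset_adjoin (Finset.mem_coe.2 (Finset.mem_insert_of_mem ?_))
      exact Finset.mem_image_of_mem _ (Finsupp.mem_support_iff.2 hg)
  have hinv : (x.coeff g₀)⁻¹ ∈ A :=
    Algebra.subset_adjoin (Finset.mem_coe.2 (Finset.mem_insert_self _ _))
  have : Algebra.FiniteType ℚ A := A.fg_iff_finiteType.1 ⟨s, rfl⟩
  obtain ⟨φ⟩ := exists_ringHom_complex A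
  -- `y` is `x`, viewed as an element of `A[Γ]`.
  let y : MonoidAlgebra A Γ := .ofCoeff
    (Finsupp.onFinset x.coeff.support (fun g => ⟨x.coeff g, hxA g⟩) fun g hg =>
      Finsupp.mem_support_iff.2 fun h => hg (Subtype.ext h))
  have hyc (g : Γ) : y.coeff g = ⟨x.coeff g, hxA g⟩ := rfl
  have hyx : MonoidAlgebra.mapRingHom Γ A.val.toRingHom y = x := by
    ext g
    simp [hyc]
  have hinj : Function.Injective (MonoidAlgebra.mapRingHom Γ A.val.toRingHom) := by
    intro a b hab
    ext g
    simpa using congrArg (fun z => z.coeff g) hab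
  have hy (a : MonoidAlgebra A Γ) : y * a * y = 0 := by
    apply hinj
    rw [map_mul, map_mul, hyx, hx, map_zero]
  have hφy : MonoidAlgebra.mapRingHom Γ φ y = 0 := by
    refine semiprime_complex (mul_mul_eq_zero_of_single fun g => ?_)
    have := congrArg (MonoidAlgebra.mapRingHom Γ φ) (hy (MonoidAlgebra.single g 1))
    simpa using this
  have h0 : φ ⟨x.coeff g₀, hxA g₀⟩ = 0 := by
    simpa [hyc] using congrArg (fun z => z.coeff g₀) hφy
  have h1 : (⟨x.coeff g₀, hxA g₀⟩ : A) * ⟨(x.coeff g₀)⁻¹, hinv⟩ = 1 :=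
    Subtype.ext (mul_inv_cancel₀ hg₀)
  have h2 := congrArg φ h1
  rw [map_mul, h0, zero_mul, map_one] at h2
  exact zero_ne_one h2
end

section
/- Let k be a field of characteristic 0 containing an element transcendental over ℚ. Then for every group Γ, the group algebra k[Γ] is semiprimitive, i.e., its Jacobson radical (the intersection of all maximal left ideals) is zero. -/
/-!
The proof is by Galois descent along all field automorphisms of an algebraically closed field.

Let `L` be an algebraic closure of `k`. By Nakayama's lemma, `J(k[Γ]) ⊆ J(L[Γ])`
(`map_mem_jacobson_of_isAlgebraic`), so it suffices to derive a contradiction from `J(L[Γ]) ≠ 0`.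
The radical is an `L`-subspace stable under every field automorphism of `L`, and the subfield of `L`
fixed by all of them is `ℚ` (`mem_range_of_fixed`). A nonzero element of the radical of
minimal support, scaled to have a coefficient `1`, therefore has rational coefficients
(`exists_rat_mem_jacobson`).

Now let `q ∈ ℚ[Γ]` be nonzero with `q ∈ J(L[Γ])`. Then `b = q* q` also lies in the radical, where
`*` is the involution `g ↦ g⁻¹`. If `t` is transcendental over `ℚ`, there are automorphisms `σₙ`
of `L` with `σₙ t = (n + 1) t`. They fix `b`, so they send the inverse of `1 + t b` to the inverses
of `1 + (n + 1) t b`, and all of these have the same finite support. Hence they are linearly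
dependent, which makes `b` algebraic over `L` (`exists_aeval_eq_zero`). An algebraic element of the
radical is nilpotent (`exists_pow_eq_zero_of_aeval_eq_zero`). But the coefficient of `x* x` at `1`
is the sum of squares of the coefficients of `x`, so the self-adjoint element `b` is not nilpotent
(`star_mul_self_pow_ne_zero`).
-/

open MonoidAlgebra

/-! ### Automorphisms of algebraically closed fields -/

/-- An automorphism of the polynomial ring on a transcendence basis of `L` over `K` extends to `L`,
because `L` is an algebraic closure of that polynomial ring. It need not fix `K`. -/
lemma exists_ringEquiv_extending {K L ι : Type*} [Field K] [Field L] [Algebra K L]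
    [IsAlgClosed L] {v : ι → L} (hv : IsTranscendenceBasis K v)
    (φ : MvPolynomial ι K ≃+* MvPolynomial ι K) :
    ∃ σ : L ≃+* L, ∀ p, σ (MvPolynomial.aeval v p) = MvPolynomial.aeval v (φ p) := by
  let := IsAlgClosed.isAlgClosure_of_transcendence_basis v hv
  let e : MvPolynomial ι K ≃+* Algebra.adjoin K (Set.range v) := hv.1.aevalEquiv.toRingEquiv
  refine ⟨IsAlgClosure.equivOfEquiv L L ((e.symm.trans φ).trans e), fun p ↦ ?_⟩
  rw [← hv.1.algebraMap_aevalEquiv, ← hv.1.algebraMap_aevalEquiv,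
    IsAlgClosure.equivOfEquiv_algebraMap]
  congr 1
  change e (φ (e.symm (e p))) = e (φ p)
  simp

/-- The automorphism multiplies every member of a transcendence basis containing `t` by `r`. -/
lemma exists_ringEquiv_scale {L : Type*} [Field L] [CharZero L] [IsAlgClosed L] {t : L}
    (ht : Transcendental ℚ t) {r : ℚ} (hr : r ≠ 0) :
    ∃ σ : L ≃+* L, σ t = algebraMap ℚ L r * t := by
  have hs : AlgebraicIndepOn ℚ id {t} := by
    simpa [AlgebraicIndepOn, algebraicIndependent_unique_type_iff] using ht
  obtain ⟨B, htB, hB⟩ := exists_isTranscendenceBasis_superset hs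
  let φ : MvPolynomial B ℚ ≃ₐ[ℚ] MvPolynomial B ℚ := AlgEquiv.ofAlgHom
    (MvPolynomial.aeval fun i ↦ MvPolynomial.C r * MvPolynomial.X i)
    (MvPolynomial.aeval fun i ↦ MvPolynomial.C r⁻¹ * MvPolynomial.X i)
    (by
      ext1 i
      simp only [AlgHom.comp_apply, MvPolynomial.aeval_X, map_mul, MvPolynomial.algHom_C,
        MvPolynomial.algebraMap_eq, AlgHom.id_apply]
      rw [← mul_assoc, ← MvPolynomial.C_mul]
      simp [hr])
    (by
      ext1 i
      simp only [AlgHom.comp_apply, MvPolynomial.aeval_X, map_mul, MvPolynomial.algHom_C,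
        MvPolynomial.algebraMap_eq, AlgHom.id_apply]
      rw [← mul_assoc, ← MvPolynomial.C_mul]
      simp [hr])
  obtain ⟨σ, hσ⟩ := exists_ringEquiv_extending hB φ.toRingEquiv
  refine ⟨σ, ?_⟩
  have := hσ (MvPolynomial.X ⟨t, htB rfl⟩)
  simpa [φ] using this

/-- The automorphisms of an algebraically closed field of characteristic zero have fixed field `ℚ`.
Transcendental elements are moved by a scaling; algebraic ones by an automorphism of the algebraic
closure of `ℚ` in `L`, applied to the coefficients of polynomials in a transcendence basis. -/
lemma mem_range_of_fixed {L : Type*} [Field L] [CharZero L] [IsAlgClosed L] {c : L}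
    (hc : ∀ σ : L ≃+* L, σ c = c) : c ∈ (algebraMap ℚ L).range := by
  by_cases ht : Transcendental ℚ c
  · obtain ⟨σ, hσ⟩ := exists_ringEquiv_scale ht (two_ne_zero : (2 : ℚ) ≠ 0)
    rw [hc] at hσ
    have h0 : c = 0 := by
      have : (2 : L) * c = c := by simpa using hσ.symm
      linear_combination this
    exact ⟨0, by simp [h0]⟩
  · let A := algebraicClosure ℚ L
    have : Normal ℚ A := (algebraicClosure.isAlgClosure ℚ L).normal
    have : IsGalois ℚ A := {}
    obtain ⟨B, hB⟩ := exists_isTranscendenceBasis A L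
    have hcA : c ∈ A := mem_algebraicClosure_iff.2 (not_not.1 ht)
    have key : (⟨c, hcA⟩ : A) ∈ (⊥ : IntermediateField ℚ A) := by
      rw [InfiniteGalois.mem_bot_iff_fixed]
      intro τ
      obtain ⟨σ, hσ⟩ := exists_ringEquiv_extending hB
        (MvPolynomial.mapEquiv B (τ : A ≃+* A))
      have := hσ (MvPolynomial.C ⟨c, hcA⟩)
      rw [MvPolynomial.algHom_C] at this
      change σ c = _ at this
      rw [hc] at this
      apply Subtype.ext
      simp at this
      exact this.symm
    obtain ⟨q, hq⟩ := key
    exact ⟨q, congrArg Subtype.val hq⟩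

/-! ### The involution of the rational group algebra -/

/-- The involution `g ↦ g⁻¹` of `ℚ[G]`, extended `ℚ`-linearly. Being an anti-automorphism, it is
encoded as an algebra homomorphism into the opposite algebra. -/
noncomputable def starHom (G : Type*) [Group G] :
    MonoidAlgebra ℚ G →ₐ[ℚ] (MonoidAlgebra ℚ G)ᵐᵒᵖ :=
  MonoidAlgebra.lift ℚ (MonoidAlgebra ℚ G)ᵐᵒᵖ G
    { toFun := fun g ↦ MulOpposite.op (MonoidAlgebra.single g⁻¹ 1)
      map_one' := by simp [MonoidAlgebra.one_def]
      map_mul' := fun g h ↦ by simp [← MulOpposite.op_mul, MonoidAlgebra.single_mul_single] }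

lemma unop_starHom_single {G : Type*} [Group G] (g : G) (r : ℚ) :
    (starHom G (single g r)).unop = single g⁻¹ r := by
  simp [starHom]

lemma starHom_starHom {G : Type*} [Group G] (f : MonoidAlgebra ℚ G) :
    (starHom G (starHom G f).unop).unop = f := by
  induction f using MonoidAlgebra.induction_linear with
  | zero => simp
  | add x y hx hy => simp [hx, hy]
  | single g r => simp [unop_starHom_single]

lemma coeff_star_mul {G : Type*} [Group G] (f h : MonoidAlgebra ℚ G) :
    ((starHom G f).unop * h).coeff 1 = f.coeff.sum fun g r ↦ r * h.coeff g := by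
  induction f using MonoidAlgebra.induction_linear with
  | zero => simp
  | add x y hx hy =>
    rw [map_add, MulOpposite.unop_add, add_mul, coeff_add, Finsupp.add_apply, hx, hy, coeff_add,
      Finsupp.sum_add_index'] <;> simp [add_mul]
  | single g r =>
    rw [unop_starHom_single]
    rw [coeff_single_mul_eq_mul_coeff g fun m _ ↦ by rw [inv_mul_eq_one, eq_comm]]
    simp

lemma star_mul_self_ne_zero {G : Type*} [Group G] {f : MonoidAlgebra ℚ G} (hf : f ≠ 0) :
    (starHom G f).unop * f ≠ 0 := by
  intro h
  have h1 := coeff_star_mul f f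
  rw [h, coeff_zero, Finsupp.zero_apply, Finsupp.sum, eq_comm,
    Finset.sum_eq_zero_iff_of_nonneg fun _ _ ↦ mul_self_nonneg _] at h1
  apply hf
  ext g
  by_contra hg
  exact hg (mul_self_eq_zero.1 (h1 g (Finsupp.mem_support_iff.2 hg)))

lemma star_mul_self_pow_ne_zero {G : Type*} [Group G] {f : MonoidAlgebra ℚ G} (hf : f ≠ 0)
    (m : ℕ) : ((starHom G f).unop * f) ^ m ≠ 0 := by
  set b := (starHom G f).unop * f with hb
  have hsb : (starHom G b).unop = b := by
    simp [hb, starHom_starHom]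
  have key : ∀ n : ℕ, b ^ 2 ^ n ≠ 0 := by
    intro n
    induction n with
    | zero => simpa using star_mul_self_ne_zero hf
    | succ n ih =>
      have := star_mul_self_ne_zero ih
      rwa [map_pow, MulOpposite.unop_pow, hsb, ← pow_add, ← two_mul, ← pow_succ'] at this
  exact fun h ↦ key m (pow_eq_zero_of_le Nat.lt_two_pow_self.le h)

/-! ### The Jacobson radical under extension of the base field -/

lemma exists_left_inverse {R : Type*} [Ring R] {a : R} (ha : a ∈ (⊥ : Ideal R).jacobson) (y : R) :
    ∃ z, z * (1 + y * a) = 1 := by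
  obtain ⟨z, hz⟩ := Ideal.mem_jacobson_iff.1 ha y
  exact ⟨z, by rw [Ideal.mem_bot, sub_eq_zero] at hz; rw [mul_add, mul_one, ← mul_assoc, add_comm, hz]⟩

lemma mem_jacobson_of_left_inverse {R : Type*} [Ring R] {a : R}
    (h : ∀ y, ∃ z, z * (1 + y * a) = 1) : a ∈ (⊥ : Ideal R).jacobson := by
  rw [Ideal.mem_jacobson_iff]
  intro y
  obtain ⟨z, hz⟩ := h y
  exact ⟨z, by rw [Ideal.mem_bot, sub_eq_zero, ← hz, mul_add, mul_one, ← mul_assoc, add_comm]⟩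

/-- If `S` is generated as a left `R`-module by finitely many elements that commute with the image of
`R`, then `J(R)` maps into `J(S)`. For `a ∈ J(R)`, the centralizing generators give
`S a ⊆ J(R) S`, so by Nakayama `S (1 + y a) + S a = S` forces `S (1 + y a) = S`. -/
lemma map_mem_jacobson_of_centralizing {R S ι : Type*} [Ring R] [Ring S] [Finite ι] (f : R →+* S)
    (e : ι → S) (hcomm : ∀ i r, Commute (e i) (f r))
    (hspan : ∀ s : S, ∃ c : ι →₀ R, s = c.sum fun i r ↦ f r * e i)
    {a : R} (ha : a ∈ (⊥ : Ideal R).jacobson) : f a ∈ (⊥ : Ideal S).jacobson := by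
  apply mem_jacobson_of_left_inverse
  intro y
  let : Module R S := Module.compHom S f
  have smul_def : ∀ (r : R) (s : S), r • s = f r * s := fun _ _ ↦ rfl
  have hfin : Module.Finite R S := by
    refine ⟨(Submodule.fg_def).2 ⟨Set.range e, Set.finite_range e, eq_top_iff.2 fun s _ ↦ ?_⟩⟩
    obtain ⟨c, rfl⟩ := hspan s
    exact Submodule.sum_mem _ fun i _ ↦
      Submodule.smul_mem _ (c i) (Submodule.subset_span ⟨i, rfl⟩)
  let m : S →ₗ[R] S :=
    { toFun := fun s ↦ s * (1 + y * f a)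
      map_add' := fun s t ↦ add_mul s t _
      map_smul' := fun r s ↦ by simp [smul_def, mul_assoc] }
  suffices h : LinearMap.range m = ⊤ from LinearMap.range_eq_top.1 h 1
  by_contra hne
  obtain ⟨P, hP, hmP⟩ := (eq_top_or_exists_le_coatom (LinearMap.range m)).resolve_left hne
  have hJ : ∀ s : S, s * f a ∈ P := by
    intro s
    obtain ⟨c, rfl⟩ := hspan s
    rw [Finsupp.sum, Finset.sum_mul]
    refine Submodule.sum_mem _ fun i _ ↦ ?_
    have h1 : f (c i) * e i * f a = (c i * a) • e i := by
      rw [smul_def, map_mul, mul_assoc, mul_assoc, (hcomm i a).eq]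
    rw [h1]
    have h2 : c i * a ∈ Ring.jacobson R := by
      rw [← Ideal.jacobson_bot]
      exact Ideal.mul_mem_left _ _ ha
    exact (sInf_le hP : Module.jacobson R S ≤ P)
      (Ring.jacobson_smul_top_le R S (Submodule.smul_mem_smul h2 trivial))
  refine hP.1 (eq_top_iff.2 fun s _ ↦ ?_)
  have h1 : s = m s - s * y * f a := by
    change s = s * (1 + y * f a) - s * y * f a
    noncomm_ring
  rw [h1]
  exact P.sub_mem (hmP ⟨s, rfl⟩) (hJ _)

lemma map_mem_jacobson_of_finite {k K : Type*} [Field k] [Field K] [Algebra k K]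
    [FiniteDimensional k K] {G : Type*} [Group G] {a : MonoidAlgebra k G}
    (ha : a ∈ (⊥ : Ideal (MonoidAlgebra k G)).jacobson) :
    mapRingHom G (algebraMap k K) a ∈ (⊥ : Ideal (MonoidAlgebra K G)).jacobson := by
  let B := Module.finBasis k K
  refine map_mem_jacobson_of_centralizing _
    (fun i ↦ algebraMap K (MonoidAlgebra K G) (B i)) (fun i r ↦ Algebra.commutes _ _)
    (fun s ↦ ?_) ha
  induction s using MonoidAlgebra.induction_linear with
  | zero => exact ⟨0, by simp⟩
  | add x y hx hy =>
    obtain ⟨c, rfl⟩ := hx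
    obtain ⟨d, rfl⟩ := hy
    exact ⟨c + d, by rw [Finsupp.sum_add_index'] <;> simp [add_mul]⟩
  | single g r =>
    refine ⟨Finsupp.equivFunOnFinite.symm fun i ↦ single g (B.repr r i), ?_⟩
    rw [Finsupp.sum_fintype _ _ (by simp)]
    simp only [Finsupp.equivFunOnFinite_symm_apply_apply, mapRingHom_single,
      MonoidAlgebra.coe_algebraMap, Function.comp_apply, Algebra.algebraMap_self, RingHom.id_apply,
      single_mul_single, mul_one, ← Algebra.smul_def]
    conv_lhs => rw [← B.sum_repr r]
    exact map_sum (singleAddHom g) _ _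

/-- The left inverse of `1 + y a` is found over the finite extension of `k` generated by the
coefficients of `y`. -/
lemma map_mem_jacobson_of_isAlgebraic {k L : Type*} [Field k] [Field L] [Algebra k L]
    [Algebra.IsAlgebraic k L] {G : Type*} [Group G] {a : MonoidAlgebra k G}
    (ha : a ∈ (⊥ : Ideal (MonoidAlgebra k G)).jacobson) :
    mapRingHom G (algebraMap k L) a ∈ (⊥ : Ideal (MonoidAlgebra L G)).jacobson := by
  classical
  apply mem_jacobson_of_left_inverse
  intro y
  let K := IntermediateField.adjoin k (y.coeff.support.image y.coeff : Set L)
  have : FiniteDimensional k K := IntermediateField.finiteDimensional_adjoin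
    fun x _ ↦ (Algebra.IsAlgebraic.isAlgebraic x).isIntegral
  have hy : ∀ g, y.coeff g ∈ K := by
    intro g
    by_cases hg : y.coeff g = 0
    · rw [hg]; exact K.zero_mem
    · exact IntermediateField.subset_adjoin _ _
        (Finset.mem_coe.2 (Finset.mem_image_of_mem _ (Finsupp.mem_support_iff.2 hg)))
  let y' : MonoidAlgebra K G := ofCoeff (Finsupp.onFinset y.coeff.support (fun g ↦ ⟨y.coeff g, hy g⟩)
    fun g hg ↦ Finsupp.mem_support_iff.2 fun h ↦ hg (Subtype.ext h))
  have hy' : mapRingHom G (algebraMap K L) y' = y := by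
    ext g
    simp [y']
  obtain ⟨z, hz⟩ := exists_left_inverse (map_mem_jacobson_of_finite (K := K) ha) y'
  refine ⟨mapRingHom G (algebraMap K L) z, ?_⟩
  have h := congrArg (mapRingHom G (algebraMap K L)) hz
  have hc : mapRingHom G (algebraMap K L) (mapRingHom G (algebraMap k K) a) =
      mapRingHom G (algebraMap k L) a := by
    ext g
    simp [← IsScalarTower.algebraMap_apply]
  rwa [map_mul, map_add, map_mul, map_one, hy', hc] at h

lemma map_ringEquiv_mem_jacobson {L : Type*} [Field L] {G : Type*} [Group G] (σ : L ≃+* L)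
    {a : MonoidAlgebra L G} (ha : a ∈ (⊥ : Ideal (MonoidAlgebra L G)).jacobson) :
    mapRingHom G (σ : L →+* L) a ∈ (⊥ : Ideal (MonoidAlgebra L G)).jacobson := by
  apply mem_jacobson_of_left_inverse
  intro y
  obtain ⟨z, hz⟩ := exists_left_inverse ha (mapRingHom G (σ.symm : L →+* L) y)
  refine ⟨mapRingHom G (σ : L →+* L) z, ?_⟩
  have h := congrArg (mapRingHom G (σ : L →+* L)) hz
  have hc : mapRingHom G (σ : L →+* L) (mapRingHom G (σ.symm : L →+* L) y) = y := by
    ext g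
    simp
  rwa [map_mul, map_add, map_mul, map_one, hc] at h

lemma smul_mem_jacobson {L : Type*} [Field L] {A : Type*} [Ring A] [Algebra L A] (c : L)
    {a : A} (ha : a ∈ (⊥ : Ideal A).jacobson) : c • a ∈ (⊥ : Ideal A).jacobson := by
  rw [Algebra.smul_def]
  exact Ideal.mul_mem_left _ _ ha

/-- Descent of the radical to `ℚ`, by strong induction on the size of the support: if an element
scaled to have a coefficient `1` is moved by `σ`, then `σ a - a` has smaller support. -/
lemma exists_rat_mem_jacobson {L : Type*} [Field L] [CharZero L]
    (hfix : ∀ c : L, (∀ σ : L ≃+* L, σ c = c) → c ∈ (algebraMap ℚ L).range)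
    {G : Type*} [Group G] (n : ℕ) (a : MonoidAlgebra L G)
    (ha : a ∈ (⊥ : Ideal (MonoidAlgebra L G)).jacobson) (ha0 : a ≠ 0)
    (hn : a.coeff.support.card = n) :
    ∃ q : MonoidAlgebra ℚ G, q ≠ 0 ∧
      mapRingHom G (algebraMap ℚ L) q ∈ (⊥ : Ideal (MonoidAlgebra L G)).jacobson := by
  induction n using Nat.strong_induction_on generalizing a with
  | _ n ih =>
  obtain ⟨g, hg⟩ : ∃ g, a.coeff g ≠ 0 := by
    by_contra! h
    exact ha0 (by ext g; simpa using h g)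
  set a' := (a.coeff g)⁻¹ • a with ha'
  have haJ : a' ∈ (⊥ : Ideal (MonoidAlgebra L G)).jacobson := smul_mem_jacobson _ ha
  have hcoeff : ∀ h, a'.coeff h = (a.coeff g)⁻¹ * a.coeff h := fun h ↦ by simp [ha']
  have hg1 : a'.coeff g = 1 := by rw [hcoeff, inv_mul_cancel₀ hg]
  by_cases hall : ∀ h, ∀ σ : L ≃+* L, σ (a'.coeff h) = a'.coeff h
  · choose r hr using fun h ↦ hfix _ (hall h)
    let q : MonoidAlgebra ℚ G := ofCoeff (Finsupp.onFinset a'.coeff.support r fun h hh ↦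
      Finsupp.mem_support_iff.2 fun h0 ↦ hh (by simpa [h0] using hr h))
    have hq : mapRingHom G (algebraMap ℚ L) q = a' := by
      ext h
      rw [coeff_mapRingHom]
      exact hr h
    refine ⟨q, fun h0 ↦ ?_, by rwa [hq]⟩
    rw [h0, map_zero] at hq
    simp [← hq] at hg1
  · push Not at hall
    obtain ⟨h, σ, hσ⟩ := hall
    have hd : ∀ x, (mapRingHom G (σ : L →+* L) a' - a').coeff x = σ (a'.coeff x) - a'.coeff x :=
      fun x ↦ by simp
    refine ih _ ?_ (mapRingHom G (σ : L →+* L) a' - a')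
      (Ideal.sub_mem _ (map_ringEquiv_mem_jacobson σ haJ) haJ) (fun h0 ↦ ?_) rfl
    · rw [← hn]
      apply Finset.card_lt_card
      rw [Finset.ssubset_iff_of_subset]
      · exact ⟨g, Finsupp.mem_support_iff.2 hg, by simp [hd, hg1, -coeff_sub]⟩
      · intro x hx
        rw [Finsupp.mem_support_iff, hd] at hx
        refine Finsupp.mem_support_iff.2 fun h0 ↦ hx ?_
        simp [hcoeff, h0]
    · have := hd h
      rw [h0] at this
      exact hσ (sub_eq_zero.1 (by simpa using this.symm))

/-! ### Algebraic elements of the radical -/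

open Polynomial

/-- If the resolvents `(1 + s b)⁻¹`, for infinitely many nonzero `s`, lie in a finite-dimensional
space, then `b` is algebraic: a linear dependence among them becomes, after multiplication by the
product of the factors `1 + s b`, a polynomial relation for `b`. -/
lemma exists_aeval_eq_zero {L A : Type*} [Field L] [Ring A] [Algebra L A] {b : A}
    {s : ℕ → L} (hs : Function.Injective s) (hs0 : ∀ n, s n ≠ 0) {u : ℕ → A}
    (hu : ∀ n, u n * (1 + s n • b) = 1) (V : Submodule L A) [FiniteDimensional L V]
    (hV : ∀ n, u n ∈ V) : ∃ q : L[X], q ≠ 0 ∧ aeval b q = 0 := by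
  classical
  have hdep : ¬ LinearIndependent L fun n ↦ (⟨u n, hV n⟩ : V) := fun h ↦ by
    have := h.finite
    exact not_finite ℕ
  rw [linearIndependent_iff'] at hdep
  push Not at hdep
  obtain ⟨F, c, hc, i, hiF, hi⟩ := hdep
  have hc' : ∑ j ∈ F, c j • u j = 0 := by
    simpa using congrArg Subtype.val hc
  let l : ℕ → L[X] := fun j ↦ 1 + C (s j) * X
  have hl : ∀ j, aeval b (l j) = 1 + s j • b := fun j ↦ by simp [l, Algebra.smul_def]
  refine ⟨∑ j ∈ F, C (c j) * ∏ x ∈ F.erase j, l x, fun h ↦ ?_, ?_⟩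
  -- At the root of `l i`, only the term with index `i` survives.
  · have h1 := congrArg (eval (-(s i)⁻¹)) h
    rw [eval_finsetSum, eval_zero, Finset.sum_eq_single_of_mem i hiF] at h1
    · rw [eval_mul, eval_C, eval_prod] at h1
      refine mul_ne_zero hi (Finset.prod_ne_zero_iff.2 fun x hx h2 ↦ ?_) h1
      have h3 : 1 + s x * -(s i)⁻¹ = 0 := by simpa [l] using h2
      have h4 : s x = s i := by
        have := hs0 i
        field_simp at h3
        linear_combination -h3
      exact (Finset.mem_erase.1 hx).1 (hs h4)
    · intro j _ hj
      rw [eval_mul, eval_prod, Finset.prod_eq_zero (Finset.mem_erase.2 ⟨hj.symm, hiF⟩), mul_zero]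
      simp [l, hs0 i]
  · have hterm : ∀ j ∈ F, aeval b (C (c j) * ∏ x ∈ F.erase j, l x) =
        (c j • u j) * aeval b (∏ x ∈ F, l x) := by
      intro j hj
      rw [← Finset.mul_prod_erase F l hj, map_mul, map_mul, hl, aeval_C, ← mul_assoc,
        smul_mul_assoc, hu, Algebra.smul_def, mul_one]
    rw [map_sum, Finset.sum_congr rfl hterm, ← Finset.sum_mul, hc', zero_mul]

/-- Write the annihilating polynomial as `X ^ m * q₁` with `q₁(0) ≠ 0`. As `b` lies in the radical,
`q₁(b)` is left invertible, so `b ^ m = 0`. -/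
lemma exists_pow_eq_zero_of_aeval_eq_zero {L A : Type*} [Field L] [Ring A] [Algebra L A] {b : A}
    (hb : b ∈ (⊥ : Ideal A).jacobson) {q : L[X]} (hq : q ≠ 0) (hqb : aeval b q = 0) :
    ∃ m, b ^ m = 0 := by
  obtain ⟨q₁, hq₁, hdvd⟩ := exists_eq_pow_rootMultiplicity_mul_and_not_dvd q hq 0
  rw [map_zero, sub_zero] at hq₁ hdvd
  rw [X_dvd_iff] at hdvd
  set m := q.rootMultiplicity 0
  set d := q₁.coeff 0
  obtain ⟨z, hz⟩ := exists_left_inverse hb (d⁻¹ • aeval b q₁.divX)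
  have h1 : aeval b q₁ = d • (1 + (d⁻¹ • aeval b q₁.divX) * b) := by
    conv_lhs => rw [← divX_mul_X_add q₁]
    rw [map_add, map_mul, aeval_X, aeval_C, smul_add, smul_mul_assoc, smul_inv_smul₀ hdvd,
      Algebra.smul_def, mul_one, add_comm]
  refine ⟨m, ?_⟩
  have h2 : aeval b q₁ * b ^ m = 0 := by
    rw [← hqb, hq₁, mul_comm (X ^ m), map_mul, map_pow, aeval_X]
  rw [h1, smul_mul_assoc, smul_eq_zero_iff_right hdvd] at h2
  calc b ^ m = z * (1 + (d⁻¹ • aeval b q₁.divX) * b) * b ^ m := by rw [hz, one_mul]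
    _ = 0 := by rw [mul_assoc, h2, mul_zero]

/-- The automorphisms `t ↦ (n + 1) t` of `L` fix `q` and carry the left inverse of `1 + t q` to left
inverses of `1 + (n + 1) t q` with the same finite support. -/
lemma exists_pow_eq_zero_of_rat_mem_jacobson {L : Type*} [Field L] [CharZero L] [IsAlgClosed L]
    {t : L} (ht : Transcendental ℚ t) {G : Type*} [Group G] {q : MonoidAlgebra ℚ G}
    (hq : mapRingHom G (algebraMap ℚ L) q ∈ (⊥ : Ideal (MonoidAlgebra L G)).jacobson) :
    ∃ m, q ^ m = 0 := by
  set b := mapRingHom G (algebraMap ℚ L) q with hb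
  have ht0 : t ≠ 0 := by
    rintro rfl
    exact ht isAlgebraic_zero
  obtain ⟨z, hz⟩ := exists_left_inverse hq (algebraMap L _ t)
  choose σ hσ using fun n : ℕ ↦ exists_ringEquiv_scale ht (Nat.cast_add_one_ne_zero (R := ℚ) n)
  have hσ' : ∀ n, σ n t = (n + 1 : L) * t := fun n ↦ by simpa using hσ n
  let V : Submodule L (MonoidAlgebra L G) :=
    Submodule.span L (Set.range fun g : z.coeff.support ↦ single (g : G) 1)
  have : FiniteDimensional L V := FiniteDimensional.span_of_finite L (Set.finite_range _)
  obtain ⟨p, hp, hpb⟩ := exists_aeval_eq_zero (b := b) (s := fun n ↦ σ n t)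
    (u := fun n ↦ mapRingHom G (σ n : L →+* L) z)
    (fun m n h ↦ by simpa [hσ', ht0] using h)
    (fun n ↦ by simpa using ht0)
    (fun n ↦ by
      have h := congrArg (mapRingHom G (σ n : L →+* L)) hz
      have hbb : mapRingHom G (σ n : L →+* L) b = b := by
        ext g
        simp [hb]
      rw [map_mul, map_add, map_mul, map_one, hbb] at h
      rw [Algebra.smul_def]
      simpa using h)
    V
    (fun n ↦ by
      have h : mapRingHom G (σ n : L →+* L) z =
          ∑ g ∈ z.coeff.support, σ n (z.coeff g) • single g (1 : L) := by
        conv_lhs => rw [← sum_coeff_single z]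
        simp [Finsupp.sum]
      rw [h]
      exact Submodule.sum_mem _ fun g hg ↦
        Submodule.smul_mem _ _ (Submodule.subset_span ⟨⟨g, hg⟩, rfl⟩))
  obtain ⟨m, hm⟩ := exists_pow_eq_zero_of_aeval_eq_zero hq hp hpb
  refine ⟨m, ?_⟩
  rw [← map_pow] at hm
  ext g
  have h1 : algebraMap ℚ L ((q ^ m).coeff g) = 0 := by
    rw [← coeff_mapRingHom, hm]
    simp
  simpa using h1

/-- If `k` is a field of characteristic 0 containing an element transcendental over `ℚ`,
then for every group `Γ` the group algebra `k[Γ]` is semiprimitive: its Jacobson radical,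
the intersection of all maximal left ideals, is zero. -/
theorem monoidAlgebra_semiprimitive (k : Type*) [Field k] [CharZero k]
    (ht : ∃ t : k, Transcendental ℚ t) (Γ : Type*) [Group Γ] :
    (⊥ : Ideal (MonoidAlgebra k Γ)).jacobson = ⊥ := by
  obtain ⟨t, ht⟩ := ht
  rw [eq_bot_iff]
  intro a ha
  rw [Ideal.mem_bot]
  by_contra ha0
  let L := AlgebraicClosure k
  have : CharZero L := charZero_of_injective_algebraMap (algebraMap k L).injective
  have htL : Transcendental ℚ (algebraMap k L t) :=
    (transcendental_algebraMap_iff (algebraMap k L).injective).2 ht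
  obtain ⟨q, hq0, hq⟩ := exists_rat_mem_jacobson (fun c ↦ mem_range_of_fixed) _ _
    (map_mem_jacobson_of_isAlgebraic (L := L) ha) (fun h ↦ ha0 (by
      ext g
      have h1 := congrArg (fun x ↦ x.coeff g) h
      simpa using h1)) rfl
  obtain ⟨m, hm⟩ := exists_pow_eq_zero_of_rat_mem_jacobson htL
    (q := (starHom Γ q).unop * q) (by
      rw [map_mul]
      exact Ideal.mul_mem_left _ _ hq)
  exact star_mul_self_pow_ne_zero hq0 m hm
end

section
/- Let k be a field and let Γ be a polycyclic-by-finite group. Then the group algebra k[Γ] is a Noetherian ring. -/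
/-!
A skew version of Hilbert's basis theorem does the work. Let `φ : R →+* S` be a ring homomorphism
with `R` left Noetherian, and let `x` be a unit of `S` such that `φ(R) x = x φ(R)` and `S` is
additively spanned by the elements `x ^ i * φ r` with `i : ℤ`. Then `S` is left Noetherian
(`isNoetherianRing_of_skew_laurent`). To a left ideal `I` of `S` attach the left ideals `Lₙ(I)` of
`R` formed by the coefficients `r` such that `x ^ n * φ r + (terms in x ^ i, 0 ≤ i < n)` lies in `I`
for some choice of lower terms. They increase with `n` and with `I`, and two nested left ideals with
the same `Lₙ` for all `n` coincide, so the ascending chain condition passes from `R` to `S`.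
No uniqueness of the expansion in powers of `x` is needed, so finite and infinite cyclic quotients
are treated alike.

For groups this says: if `g` normalizes `H` and `k[H]` is Noetherian, then so is `k[⟨g⟩H]`.
For a polycyclic group `G` the derived series is climbed from `1` to `G`, adjoining at each stage
the finitely many generators of a term one at a time; each intermediate subgroup contains the
commutators of the term, hence is normalized by the next generator. Finally, if `N` is normal of
finite index in `Γ`, then `k[Γ]` is a finitely generated left `k[N]`-module, hence Noetherian.
-/

/-- A group is polycyclic if it is solvable and every subgroup is finitely generated. -/
def IsPolycyclic (G : Type*) [Group G] : Prop :=
  IsSolvable G ∧ ∀ H : Subgroup G, H.FG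

/-- A group is polycyclic-by-finite if it has a polycyclic normal subgroup
of finite index. -/
def IsPolycyclicByFinite (G : Type*) [Group G] : Prop :=
  ∃ N : Subgroup G, N.Normal ∧ IsPolycyclic N ∧ Finite (G ⧸ N)

section SkewLaurent

variable {R S : Type*} [Ring R] [Ring S] (φ : R →+* S) (x : Sˣ)

/-- The additive subgroup of `S` of polynomial expressions `∑ i < n, x ^ i * φ (r i)` of degree less
than `n`, with coefficients written on the right. -/
def polyLT : ℕ → AddSubgroup S
  | 0 => ⊥
  | n + 1 => polyLT n ⊔ ((AddMonoidHom.mulLeft ((x : S) ^ n)).comp φ.toAddMonoidHom).range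

lemma mem_polyLT_succ {n : ℕ} {s : S} :
    s ∈ polyLT φ x (n + 1) ↔ ∃ r, s - (x : S) ^ n * φ r ∈ polyLT φ x n := by
  rw [polyLT, AddSubgroup.mem_sup]
  constructor
  · rintro ⟨a, ha, _, ⟨r, rfl⟩, rfl⟩
    exact ⟨r, by simpa using ha⟩
  · rintro ⟨r, hr⟩
    exact ⟨_, hr, _, ⟨r, rfl⟩, by simp⟩

lemma polyLT_mono : Monotone (polyLT φ x) :=
  monotone_nat_of_le_succ fun _ => le_sup_left

lemma mul_mem_polyLT {n : ℕ} {s : S} (hs : s ∈ polyLT φ x n) :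
    (x : S) * s ∈ polyLT φ x (n + 1) := by
  induction n generalizing s with
  | zero =>
    have : s = 0 := by simpa [polyLT] using hs
    simp [this]
  | succ n ih =>
    obtain ⟨r, hr⟩ := (mem_polyLT_succ φ x).1 hs
    refine (mem_polyLT_succ φ x).2 ⟨r, ?_⟩
    have := ih hr
    rwa [mul_sub, ← mul_assoc, ← pow_succ'] at this

lemma pow_mul_mem_polyLT (m : ℕ) {n : ℕ} {s : S} (hs : s ∈ polyLT φ x n) :
    (x : S) ^ m * s ∈ polyLT φ x (n + m) := by
  induction m with
  | zero => simpa using hs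
  | succ m ih =>
    rw [pow_succ', mul_assoc]
    exact mul_mem_polyLT φ x ih

lemma exists_map_mul_pow (hx : ∀ r, ∃ r', φ r * x = x * φ r') (n : ℕ) (r : R) :
    ∃ r', φ r * (x : S) ^ n = (x : S) ^ n * φ r' := by
  induction n with
  | zero => exact ⟨r, by simp⟩
  | succ n ih =>
    obtain ⟨r', hr'⟩ := ih
    obtain ⟨r'', hr''⟩ := hx r'
    exact ⟨r'', by rw [pow_succ, ← mul_assoc, hr', mul_assoc, hr'', mul_assoc]⟩

lemma map_mul_mem_polyLT (hx : ∀ r, ∃ r', φ r * x = x * φ r') {n : ℕ} {s : S}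
    (hs : s ∈ polyLT φ x n) (a : R) : φ a * s ∈ polyLT φ x n := by
  induction n generalizing s with
  | zero =>
    have : s = 0 := by simpa [polyLT] using hs
    simp [this]
  | succ n ih =>
    obtain ⟨r, hr⟩ := (mem_polyLT_succ φ x).1 hs
    obtain ⟨a', ha'⟩ := exists_map_mul_pow φ x hx n a
    refine (mem_polyLT_succ φ x).2 ⟨a' * r, ?_⟩
    have := ih hr
    rwa [mul_sub, ← mul_assoc, ha', mul_assoc, ← map_mul] at this

variable {φ x}

lemma exists_pow_mul_map (hx' : ∀ r, ∃ r', x * φ r = φ r' * x) (n : ℕ) (r : R) :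
    ∃ r', (x : S) ^ n * φ r = φ r' * (x : S) ^ n := by
  induction n with
  | zero => exact ⟨r, by simp⟩
  | succ n ih =>
    obtain ⟨r', hr'⟩ := ih
    obtain ⟨r'', hr''⟩ := hx' r'
    exact ⟨r'', by rw [pow_succ', mul_assoc, hr', ← mul_assoc, hr'', mul_assoc]⟩

/-- Every element of `S` is moved into the polynomial part by some power of `x`. -/
lemma exists_pow_mul_mem_polyLT
    (hS : AddSubgroup.closure {s : S | ∃ (i : ℤ) (r : R), s = ((x ^ i : Sˣ) : S) * φ r} = ⊤)
    (s : S) : ∃ m n, (x : S) ^ m * s ∈ polyLT φ x n := by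
  have hs : s ∈ AddSubgroup.closure {s : S | ∃ (i : ℤ) (r : R), s = ((x ^ i : Sˣ) : S) * φ r} :=
    hS ▸ AddSubgroup.mem_top s
  induction hs using AddSubgroup.closure_induction with
  | mem s hs =>
    obtain ⟨i, r, rfl⟩ := hs
    -- `m = |i|` makes the exponent `m + i` nonnegative.
    refine ⟨i.natAbs, (i.natAbs + i).toNat + 1, (mem_polyLT_succ φ x).2 ⟨r, ?_⟩⟩
    have h : (x : S) ^ i.natAbs * ((x ^ i : Sˣ) : S) = (x : S) ^ (i.natAbs + i).toNat := by
      have h' : x ^ i.natAbs * x ^ i = x ^ (i.natAbs + i).toNat := by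
        rw [← zpow_natCast, ← zpow_natCast, ← zpow_add]
        congr 1
        omega
      simpa using congrArg (Units.val) h'
    rw [← mul_assoc, h, sub_self]
    exact zero_mem _
  | zero => exact ⟨0, 0, by simp⟩
  | add a b _ _ iha ihb =>
    obtain ⟨m, n, h⟩ := iha
    obtain ⟨m', n', h'⟩ := ihb
    refine ⟨m + m', max (n + m') (n' + m), ?_⟩
    rw [mul_add]
    refine add_mem (polyLT_mono φ x (le_max_left _ _) ?_) (polyLT_mono φ x (le_max_right _ _) ?_)
    · rw [add_comm m, pow_add, mul_assoc]
      exact pow_mul_mem_polyLT φ x _ h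
    · rw [pow_add, mul_assoc]
      exact pow_mul_mem_polyLT φ x _ h'
  | neg a _ ih =>
    obtain ⟨m, n, h⟩ := ih
    exact ⟨m, n, by simpa using h⟩

/-- The left ideal of `R` of leading coefficients (possibly zero) of the elements of `I` that are
polynomials in `x` of degree at most `n`. -/
def leadingIdeal (hx : ∀ r, ∃ r', φ r * x = x * φ r') (hx' : ∀ r, ∃ r', x * φ r = φ r' * x)
    (n : ℕ) (I : Ideal S) : Ideal R where
  carrier := {r | ∃ s ∈ I, s - (x : S) ^ n * φ r ∈ polyLT φ x n}
  zero_mem' := ⟨0, zero_mem _, by simp⟩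
  add_mem' := by
    rintro a b ⟨s, hs, h⟩ ⟨t, ht, h'⟩
    refine ⟨s + t, add_mem hs ht, ?_⟩
    rw [map_add, mul_add, add_sub_add_comm]
    exact add_mem h h'
  smul_mem' := by
    rintro a r ⟨s, hs, h⟩
    -- Multiplying the leading coefficient by `a` amounts to multiplying `s` by `x ^ n a x ^ (-n)`.
    obtain ⟨b, hb⟩ := exists_pow_mul_map hx' n a
    refine ⟨φ b * s, I.mul_mem_left _ hs, ?_⟩
    have := map_mul_mem_polyLT φ x hx h b
    rwa [mul_sub, ← mul_assoc, ← hb, mul_assoc, ← map_mul] at this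

variable (hx : ∀ r, ∃ r', φ r * x = x * φ r') (hx' : ∀ r, ∃ r', x * φ r = φ r' * x)

lemma leadingIdeal_mono_right (n : ℕ) : Monotone (leadingIdeal hx hx' n) := by
  rintro I J hIJ r ⟨s, hs, h⟩
  exact ⟨s, hIJ hs, h⟩

lemma leadingIdeal_mono_left (I : Ideal S) : Monotone fun n => leadingIdeal hx hx' n I := by
  refine monotone_nat_of_le_succ fun n r => ?_
  rintro ⟨s, hs, h⟩
  refine ⟨x * s, I.mul_mem_left _ hs, ?_⟩
  have := mul_mem_polyLT φ x h
  rwa [mul_sub, ← mul_assoc, ← pow_succ'] at this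

/-- A left ideal `J ⊇ I` whose leading ideals are no larger than those of `I` equals `I`:
polynomials in `J` are brought into `I` by cancelling leading terms, by induction on the degree,
and any element becomes a polynomial after multiplication by a power of the unit `x`. -/
lemma le_of_leadingIdeal_le
    (hS : AddSubgroup.closure {s : S | ∃ (i : ℤ) (r : R), s = ((x ^ i : Sˣ) : S) * φ r} = ⊤)
    {I J : Ideal S} (hIJ : I ≤ J) (h : ∀ n, leadingIdeal hx hx' n J ≤ leadingIdeal hx hx' n I) :
    J ≤ I := by
  have key : ∀ n, ∀ s ∈ J, s ∈ polyLT φ x n → s ∈ I := by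
    intro n
    induction n with
    | zero =>
      intro s _ hs
      have : s = 0 := by simpa [polyLT] using hs
      simp [this]
    | succ n ih =>
      intro s hsJ hs
      obtain ⟨r, hr⟩ := (mem_polyLT_succ φ x).1 hs
      obtain ⟨t, htI, ht⟩ := h n (show r ∈ leadingIdeal hx hx' n J from ⟨s, hsJ, hr⟩)
      have hst : s - t ∈ I := by
        refine ih _ (sub_mem hsJ (hIJ htI)) ?_
        simpa using sub_mem hr ht
      simpa using add_mem hst htI
  intro s hs
  obtain ⟨m, n, hmn⟩ := exists_pow_mul_mem_polyLT hS s
  have := I.mul_mem_left ((x⁻¹ ^ m : Sˣ) : S) (key n _ (J.mul_mem_left _ hs) hmn)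
  rwa [← mul_assoc, ← Units.val_pow_eq_pow_val, ← Units.val_mul, inv_pow, inv_mul_cancel,
    Units.val_one, one_mul] at this

/-- A skew form of Hilbert's basis theorem, for rings of (not necessarily free) Laurent
expressions in a unit `x` normalizing the coefficients. -/
theorem isNoetherianRing_of_skew_laurent [IsNoetherianRing R]
    (hx : ∀ r, ∃ r', φ r * x = x * φ r') (hx' : ∀ r, ∃ r', x * φ r = φ r' * x)
    (hS : AddSubgroup.closure {s : S | ∃ (i : ℤ) (r : R), s = ((x ^ i : Sˣ) : S) * φ r} = ⊤) :
    IsNoetherianRing S := by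
  refine monotone_stabilizes_iff_noetherian.1 fun f => ?_
  -- The diagonal `n ↦ Lₙ(f n)` stabilizes from `N` on.
  obtain ⟨N, hN⟩ := monotone_stabilizes_iff_noetherian.2 ‹IsNoetherianRing R›
    ⟨fun n => leadingIdeal hx hx' n (f n), fun a b hab =>
      (leadingIdeal_mono_left hx hx' (f a) hab).trans
        (leadingIdeal_mono_right hx hx' b (f.mono hab))⟩
  -- Each of the finitely many remaining chains `j ↦ Lₙ(f j)`, `n < N`, stabilizes from `M n` on.
  have hfix : ∀ n, ∃ M, ∀ j, M ≤ j →
      leadingIdeal hx hx' n (f M) = leadingIdeal hx hx' n (f j) := fun n =>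
    monotone_stabilizes_iff_noetherian.2 ‹IsNoetherianRing R›
      ⟨fun j => leadingIdeal hx hx' n (f j), fun a b hab =>
        leadingIdeal_mono_right hx hx' n (f.mono hab)⟩
  choose M hM using hfix
  refine ⟨max N ((Finset.range N).sup M), fun j hj => ?_⟩
  refine le_antisymm (f.mono hj) (le_of_leadingIdeal_le hx hx' hS (f.mono hj) fun n => ?_)
  set m := max N ((Finset.range N).sup M)
  rcases lt_or_ge n N with hn | hn
  · have h₁ : M n ≤ m :=
      (Finset.le_sup (f := M) (Finset.mem_range.2 hn)).trans (le_max_right _ _)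
    exact ((hM n j (h₁.trans hj)).symm.trans (hM n m h₁)).le
  · have h₁ : N ≤ m := le_max_left _ _
    -- `Lₙ(f j) ≤ L_{n+j}(f (n+j)) = L_N(f N) ≤ Lₙ(f m)`.
    calc leadingIdeal hx hx' n (f j)
        ≤ leadingIdeal hx hx' (n + j) (f (n + j)) :=
          (leadingIdeal_mono_left hx hx' (f j) (Nat.le_add_right n j)).trans
            (leadingIdeal_mono_right hx hx' _ (f.mono (Nat.le_add_left j n)))
      _ = leadingIdeal hx hx' N (f N) := (hN (n + j) (hn.trans (Nat.le_add_right n j))).symm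
      _ ≤ leadingIdeal hx hx' n (f m) :=
          (leadingIdeal_mono_left hx hx' (f N) hn).trans
            (leadingIdeal_mono_right hx hx' _ (f.mono h₁))

end SkewLaurent

section GroupAlgebra

variable (k : Type*) [Field k]

/-- The skew basis theorem for group algebras: `G` is the product of the cyclic group generated by
`g` and the image of `f`, which is normalized by `g`. -/
lemma isNoetherianRing_monoidAlgebra_of_zpow_mul {H G : Type*} [Group H] [Group G] (f : H →* G)
    (g : G) (hg : ∀ h, ∃ h', f h * g = g * f h') (hg' : ∀ h, ∃ h', g * f h = f h' * g)
    (hG : ∀ y, ∃ (i : ℤ) (h : H), y = g ^ i * f h) [IsNoetherianRing (MonoidAlgebra k H)] :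
    IsNoetherianRing (MonoidAlgebra k G) := by
  let x : (MonoidAlgebra k G)ˣ := (MonoidAlgebra.of k G).toHomUnits g
  have hx : (x : MonoidAlgebra k G) = MonoidAlgebra.single g 1 := rfl
  have hxz : ∀ i : ℤ, ((x ^ i : (MonoidAlgebra k G)ˣ) : MonoidAlgebra k G) =
      MonoidAlgebra.single (g ^ i) 1 := by
    intro i
    rw [← map_zpow]
    rfl
  refine isNoetherianRing_of_skew_laurent (φ := MonoidAlgebra.mapDomainRingHom k f) (x := x)
    ?_ ?_ ?_
  · intro r
    induction r using MonoidAlgebra.induction_linear with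
    | zero => exact ⟨0, by simp⟩
    | add a b ha hb =>
      obtain ⟨a', ha'⟩ := ha
      obtain ⟨b', hb'⟩ := hb
      exact ⟨a' + b', by rw [map_add, map_add, add_mul, mul_add, ha', hb']⟩
    | single h c =>
      obtain ⟨h', hh'⟩ := hg h
      exact ⟨MonoidAlgebra.single h' c, by simp [hx, hh']⟩
  · intro r
    induction r using MonoidAlgebra.induction_linear with
    | zero => exact ⟨0, by simp⟩
    | add a b ha hb =>
      obtain ⟨a', ha'⟩ := ha
      obtain ⟨b', hb'⟩ := hb
      exact ⟨a' + b', by rw [map_add, map_add, add_mul, mul_add, ha', hb']⟩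
    | single h c =>
      obtain ⟨h', hh'⟩ := hg' h
      exact ⟨MonoidAlgebra.single h' c, by simp [hx, hh']⟩
  · refine eq_top_iff.2 fun s _ => ?_
    induction s using MonoidAlgebra.induction_linear with
    | zero => exact zero_mem _
    | add a b ha hb => exact add_mem (ha trivial) (hb trivial)
    | single y c =>
      obtain ⟨i, h, rfl⟩ := hG y
      exact AddSubgroup.subset_closure ⟨i, MonoidAlgebra.single h c, by simp [hxz]⟩

lemma isNoetherianRing_monoidAlgebra_zpowers_sup {G : Type*} [Group G] (H : Subgroup G) (g : G)
    (hg : g ∈ Subgroup.normalizer (H : Set G)) (hH : IsNoetherianRing (MonoidAlgebra k H)) :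
    IsNoetherianRing (MonoidAlgebra k ↥(Subgroup.zpowers g ⊔ H)) := by
  have hgK : g ∈ Subgroup.zpowers g ⊔ H :=
    Subgroup.mem_sup_left (Subgroup.mem_zpowers g)
  refine isNoetherianRing_monoidAlgebra_of_zpow_mul k
    (Subgroup.inclusion (le_sup_right : H ≤ Subgroup.zpowers g ⊔ H)) ⟨g, hgK⟩ ?_ ?_ ?_
  · intro h
    refine ⟨⟨g⁻¹ * h * g, (Subgroup.mem_normalizer_iff''.1 hg _).1 h.2⟩, Subtype.ext ?_⟩
    simp [mul_assoc]
  · intro h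
    refine ⟨⟨g * h * g⁻¹, (Subgroup.mem_normalizer_iff.1 hg _).1 h.2⟩, Subtype.ext ?_⟩
    simp [mul_assoc]
  · rintro ⟨y, hy⟩
    have hle : Subgroup.zpowers g ≤ Subgroup.normalizer (H : Set G) := by
      simpa [Subgroup.zpowers_le] using hg
    rw [← SetLike.mem_coe, Subgroup.coe_mul_of_left_le_normalizer_right _ _ hle] at hy
    obtain ⟨_, ⟨i, rfl⟩, h, hh, rfl⟩ := hy
    exact ⟨i, ⟨h, hh⟩, Subtype.ext (by simp)⟩

/-- Passage from the commutator subgroup of `D` to `D`, adjoining generators one at a time. -/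
lemma isNoetherianRing_monoidAlgebra_of_commutator {G : Type*} [Group G] (D : Subgroup G)
    (hD : D.FG) (h : IsNoetherianRing (MonoidAlgebra k ↥⁅D, D⁆)) :
    IsNoetherianRing (MonoidAlgebra k D) := by
  classical
  obtain ⟨T, hT⟩ := hD
  have hDD : ⁅D, D⁆ ≤ D := Subgroup.commutator_le_self D
  have key : ∀ U : Finset G, (U : Set G) ⊆ D →
      IsNoetherianRing (MonoidAlgebra k ↥(Subgroup.closure (U : Set G) ⊔ ⁅D, D⁆)) := by
    intro U
    induction U using Finset.induction_on with
    | empty =>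
      intro _
      rw [Finset.coe_empty, Subgroup.closure_empty, bot_sup_eq]
      exact h
    | insert g U _ ih =>
      intro hU
      rw [Finset.coe_insert, Set.insert_subset_iff] at hU
      rw [Finset.coe_insert, Set.insert_eq, Subgroup.closure_union,
        ← Subgroup.zpowers_eq_closure, sup_assoc]
      refine isNoetherianRing_monoidAlgebra_zpowers_sup k _ g ?_ (ih hU.2)
      set K := Subgroup.closure (U : Set G) ⊔ ⁅D, D⁆
      have hKD : K ≤ D := sup_le ((Subgroup.closure_le D).2 hU.2) hDD
      have hcK : ⁅D, D⁆ ≤ K := le_sup_right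
      -- A subgroup between `⁅D, D⁆` and `D` is stable under conjugation by `D`.
      have hconj : ∀ a ∈ D, ∀ y ∈ K, a * y * a⁻¹ ∈ K := by
        intro a ha y hy
        have := mul_mem (hcK (Subgroup.commutator_mem_commutator ha (hKD hy))) hy
        simpa [commutatorElement_def] using this
      exact (Subgroup.le_normalizer_iff.2 hconj) hU.1
  have := key T (hT ▸ Subgroup.subset_closure)
  rwa [hT, sup_eq_left.2 hDD] at this

theorem isNoetherianRing_monoidAlgebra_of_isPolycyclic {G : Type*} [Group G]
    (hG : IsPolycyclic G) : IsNoetherianRing (MonoidAlgebra k G) := by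
  obtain ⟨⟨n, hn⟩, hfg⟩ := hG
  have hbot : IsNoetherianRing (MonoidAlgebra k ↥(derivedSeries G n)) := by
    rw [hn]
    refine isNoetherianRing_of_surjective k _ MonoidAlgebra.singleOneRingHom fun s => ?_
    induction s using MonoidAlgebra.induction_linear with
    | zero => exact ⟨0, map_zero _⟩
    | add a b ha hb =>
      obtain ⟨a', rfl⟩ := ha
      obtain ⟨b', rfl⟩ := hb
      exact ⟨a' + b', map_add _ _ _⟩
    | single y c => exact ⟨c, by rw [Subsingleton.elim y 1]; rfl⟩
  clear hn
  have htop : IsNoetherianRing (MonoidAlgebra k ↥(derivedSeries G 0)) := by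
    induction n with
    | zero => exact hbot
    | succ n ih => exact ih (isNoetherianRing_monoidAlgebra_of_commutator k _ (hfg _) hbot)
  rw [derivedSeries_zero] at htop
  exact isNoetherianRing_of_ringEquiv _
    (MonoidAlgebra.mapDomainRingEquiv k (Subgroup.topEquiv : (⊤ : Subgroup G) ≃* G))

/-- `k[G]` is generated as a left `k[N]`-module by coset representatives of `N` in `G`. -/
lemma isNoetherianRing_monoidAlgebra_of_finite_quotient {G : Type*} [Group G] (N : Subgroup G)
    [N.Normal] [Finite (G ⧸ N)] [IsNoetherianRing (MonoidAlgebra k N)] :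
    IsNoetherianRing (MonoidAlgebra k G) := by
  let φ : MonoidAlgebra k N →+* MonoidAlgebra k G := MonoidAlgebra.mapDomainRingHom k N.subtype
  let : Module (MonoidAlgebra k N) (MonoidAlgebra k G) := Module.compHom _ φ
  have hsmul : ∀ (a : MonoidAlgebra k N) (b : MonoidAlgebra k G), a • b = φ a * b :=
    fun _ _ => rfl
  have : IsScalarTower (MonoidAlgebra k N) (MonoidAlgebra k G) (MonoidAlgebra k G) :=
    ⟨fun a b c => by simp only [hsmul, smul_eq_mul, mul_assoc]⟩
  have : Module.Finite (MonoidAlgebra k N) (MonoidAlgebra k G) := by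
    refine ⟨Submodule.fg_def.2 ⟨Set.range fun q : G ⧸ N => MonoidAlgebra.single q.out (1 : k),
      Set.finite_range _, eq_top_iff.2 fun s _ => ?_⟩⟩
    induction s using MonoidAlgebra.induction_linear with
    | zero => exact zero_mem _
    | add a b ha hb => exact add_mem (ha trivial) (hb trivial)
    | single y c =>
      have hy : y * (y : G ⧸ N).out⁻¹ ∈ N := by
        rw [← QuotientGroup.eq_one_iff, QuotientGroup.mk_mul, QuotientGroup.mk_inv,
          QuotientGroup.out_eq', mul_inv_cancel]
      have : MonoidAlgebra.single y c = (MonoidAlgebra.single (⟨_, hy⟩ : N) c) •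
          (MonoidAlgebra.single (y : G ⧸ N).out (1 : k)) := by
        simp [hsmul, φ]
      rw [this]
      exact Submodule.smul_mem _ _ (Submodule.subset_span ⟨_, rfl⟩)
  exact IsNoetherianRing.of_finite (MonoidAlgebra k N) (MonoidAlgebra k G)

end GroupAlgebra

/-- (P. Hall) The group algebra of a polycyclic-by-finite group over any field
is Noetherian. -/
theorem monoidAlgebra_noetherian_of_polycyclicByFinite (k : Type*) [Field k]
    (Γ : Type*) [Group Γ] (hΓ : IsPolycyclicByFinite Γ) :
    IsNoetherianRing (MonoidAlgebra k Γ) := by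
  obtain ⟨N, hN, hpoly, hfin⟩ := hΓ
  have := isNoetherianRing_monoidAlgebra_of_isPolycyclic k hpoly
  exact isNoetherianRing_monoidAlgebra_of_finite_quotient k N
end

section
/- Let k be a field and Γ a group. If the group algebra k[Γ] is a Noetherian ring, then every subgroup of Γ is finitely generated. -/
/-!
For a subgroup `H`, the left ideal of `k[Γ]` generated by the elements `h - 1` with `h ∈ H` is
finitely generated by Noetherianity, and finitely many of the given generators suffice: it is
spanned by the `s - 1` for `s` in a finite set `S ⊆ H`. Let `K` be the subgroup generated by `S`.
In the permutation module `k[Γ ⧸ K]`, the basis vector at the coset `K` is annihilated by every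
`s - 1` with `s ∈ S`, hence by the whole left ideal, hence by `h - 1` for every `h ∈ H`. So
`hK = K`, that is `h ∈ K`, and therefore `H = K`.
-/

/-- If `h - 1` lies in the left ideal generated by the `s - 1` with `s ∈ S`, then `h` lies in the
subgroup generated by `S`. -/
theorem mem_closure_of_single_sub_one_mem_span {k : Type*} [Field k] {Γ : Type*} [Group Γ]
    {S : Set Γ} {h : Γ}
    (hh : MonoidAlgebra.single h (1 : k) - 1 ∈
      Ideal.span ((fun g : Γ => MonoidAlgebra.single g (1 : k) - 1) '' S)) :
    h ∈ Subgroup.closure S := by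
  set K := Subgroup.closure S
  let ρ := Representation.ofMulAction k Γ (Γ ⧸ K)
  let v : MonoidAlgebra k (Γ ⧸ K) := MonoidAlgebra.single ((1 : Γ) : Γ ⧸ K) 1
  have hρ : ∀ g : Γ, ρ.asAlgebraHom (MonoidAlgebra.single g (1 : k) - 1) v
      = MonoidAlgebra.single (g : Γ ⧸ K) 1 - v := by
    intro g
    simp [ρ, v, Representation.asAlgebraHom_single, Representation.ofMulAction_single]
  have key : ∀ x ∈ Ideal.span ((fun g : Γ => MonoidAlgebra.single g (1 : k) - 1) '' S),
      ρ.asAlgebraHom x v = 0 := by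
    intro x hx
    induction hx using Submodule.span_induction with
    | mem x hx =>
      obtain ⟨s, hs, rfl⟩ := hx
      have hsK : (s : Γ ⧸ K) = ((1 : Γ) : Γ ⧸ K) :=
        (QuotientGroup.eq.2 (by simpa using Subgroup.subset_closure hs)).symm
      simp only [hρ, hsK, v, sub_self]
    | zero => simp
    | add x y _ _ hx hy => simp [hx, hy]
    | smul a x _ hx => simp [hx]
  have h0 := key _ hh
  rw [hρ, sub_eq_zero] at h0
  have := MonoidAlgebra.single_left_injective (one_ne_zero (α := k)) h0
  simpa using QuotientGroup.eq.1 this.symm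

/-- If the group algebra `k[Γ]` is Noetherian, then every subgroup of `Γ`
is finitely generated. -/
theorem subgroup_fg_of_monoidAlgebra_noetherian (k : Type*) [Field k]
    (Γ : Type*) [Group Γ] (h : IsNoetherianRing (MonoidAlgebra k Γ)) :
    ∀ H : Subgroup Γ, H.FG := by
  classical
  intro H
  let f : Γ → MonoidAlgebra k Γ := fun g => MonoidAlgebra.single g (1 : k) - 1
  obtain ⟨T, hT, hspan⟩ := (Submodule.fg_span_iff_fg_span_finset_subset (f '' (H : Set Γ))).1
    (IsNoetherian.noetherian (Submodule.span (MonoidAlgebra k Γ) (f '' (H : Set Γ))))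
  obtain ⟨S, hS, rfl⟩ := Finset.subset_set_image_iff.1 hT
  refine ⟨S, le_antisymm ((Subgroup.closure_le H).2 hS) fun g hg => ?_⟩
  apply mem_closure_of_single_sub_one_mem_span (k := k)
  have hmem : f g ∈ Submodule.span (MonoidAlgebra k Γ) (f '' (H : Set Γ)) :=
    Submodule.subset_span ⟨g, hg, rfl⟩
  rw [hspan, Finset.coe_image] at hmem
  exact hmem
end

section
/- (Tits alternative) Let k be a field of characteristic 0, n a natural number, and G a finitely generated subgroup of GL(n, k). Then either G has a solvable subgroup of finite index, or there exists an injective group homomorphism from the free group on two generators into G. -/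
/-!
The group `G` is defined over a finitely generated extension `k`
of `ℚ`, which is countable and contains only a finite extension of `ℚ` as field of constants.
After passing to a subgroup of finite index, `G` is irreducible in the Zariski topology
(`exists_irreducible`), that is, its algebra `coordAlg` of regular functions is a domain. This
property survives extensions of the field of coefficients (`noZeroDivisors_map`), and it serves to
achieve general position: finitely many nonzero regular functions have a common point of
nonvanishing.

Suppose first that, under all embeddings of `k` into `ℂ` and into the algebraic closures of the
fields `ℚ_p`, the elements of the commutator subgroup have only eigenvalues of norm at most one.
Their traces are then bounded under all these embeddings, so there are finitely many of them
(`finite_bounded`, which ends in the finiteness of the set of algebraic integers of a number field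
with bounded conjugates). By irreducibility the trace on the commutator subgroup satisfies
`trace (d * e) = trace e`; in characteristic zero this puts all `d - 1` into the nilpotent Jacobson
radical of the enveloping algebra, and the group is solvable (`isSolvable_of_finite_trace`).

Otherwise some `g` in the commutator subgroup has, over one of these fields `L`, an eigenvalue of
norm greater than one. Let `r` be the number of its eigenvalues of largest norm, with multiplicity.
On the `r`-th exterior power `g` has a single dominant eigenvalue `δ`, so that `δ⁻ᵐ gᵐ` tends
to a matrix of rank one (`tendsto_det`). Exterior powers enter only through one matrix coefficient,
the function `c x = det (α * ρ x * a)`, and the representation used is right translation on the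
span of the translates of `c`. It is irreducible, and its dimension is at least two because a
character is trivial on commutators (`exists_free_of_function`). Then `g ^ m * h * g⁻¹ ^ m` and its
inverse are both projectively close to matrices of rank one for suitable `h` and large `m`;
a translate of this element and one of its conjugates play ping-pong in projective space and
generate a free group (`exists_free_of_proximal`).
-/

/-! ### The Zariski topology of a linear group -/

namespace TitsAlternative

open Matrix Topology

section Zariski
variable {k : Type*} [Field k] {Γ : Type*} [Group Γ] {n : ℕ}

/-- The regular functions on `Γ` with respect to the representation `ρ`: the algebra of functions
generated by the matrix entries of `ρ x` and of its inverse. -/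
def coordAlg (ρ : Γ →* GL (Fin n) k) : Subalgebra k (Γ → k) :=
  Algebra.adjoin k
    (Set.range (fun (ij : Fin n × Fin n) (x : Γ) => (ρ x).1 ij.1 ij.2) ∪
      Set.range (fun (ij : Fin n × Fin n) (x : Γ) => (ρ x⁻¹).1 ij.1 ij.2))

variable (ρ : Γ →* GL (Fin n) k)

lemma coord_mem (i j : Fin n) : (fun x => (ρ x).1 i j) ∈ coordAlg ρ :=
  Algebra.subset_adjoin (Or.inl ⟨(i, j), rfl⟩)

lemma coord_inv_mem (i j : Fin n) : (fun x => (ρ x⁻¹).1 i j) ∈ coordAlg ρ :=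
  Algebra.subset_adjoin (Or.inr ⟨(i, j), rfl⟩)

/-- A substitution `x ↦ e x` preserves the coordinate algebra as soon as it sends the
generators into it. -/
lemma comp_mem (e : Γ → Γ) (h1 : ∀ i j, (fun x => (ρ (e x)).1 i j) ∈ coordAlg ρ)
    (h2 : ∀ i j, (fun x => (ρ (e x)⁻¹).1 i j) ∈ coordAlg ρ) {a : Γ → k}
    (ha : a ∈ coordAlg ρ) : (fun x => a (e x)) ∈ coordAlg ρ := by
  induction ha using Algebra.adjoin_induction with
  | mem a ha =>
    rcases ha with ⟨ij, rfl⟩ | ⟨ij, rfl⟩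
    · exact h1 _ _
    · exact h2 _ _
  | algebraMap r => exact (coordAlg ρ).algebraMap_mem r
  | add a b _ _ ha hb => exact (coordAlg ρ).add_mem ha hb
  | mul a b _ _ ha hb => exact (coordAlg ρ).mul_mem ha hb

lemma matrix_mul_mem {p q r : Type*} [Fintype q] {M : Γ → Matrix p q k} {N : Γ → Matrix q r k}
    (hM : ∀ i j, (fun x => M x i j) ∈ coordAlg ρ) (hN : ∀ i j, (fun x => N x i j) ∈ coordAlg ρ)
    (i : p) (j : r) : (fun x => (M x * N x) i j) ∈ coordAlg ρ := by
  have : (fun x => (M x * N x) i j) = ∑ l, (fun x => M x i l) * (fun x => N x l j) := by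
    ext x; simp [Matrix.mul_apply]
  rw [this]
  exact Subalgebra.sum_mem _ fun l _ => (coordAlg ρ).mul_mem (hM _ _) (hN _ _)

lemma const_mem (c : k) : (fun _ : Γ => c) ∈ coordAlg ρ := (coordAlg ρ).algebraMap_mem c

lemma left_mem (g : Γ) {a : Γ → k} (ha : a ∈ coordAlg ρ) :
    (fun x => a (g * x)) ∈ coordAlg ρ := by
  refine comp_mem ρ _ (fun i j => ?_) (fun i j => ?_) ha
  · simp only [map_mul, Units.val_mul]
    exact matrix_mul_mem ρ (M := fun _ => (ρ g).1) (fun _ _ => const_mem ρ _)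
      (fun i j => coord_mem ρ i j) i j
  · simp only [_root_.mul_inv_rev, map_mul, Units.val_mul]
    exact matrix_mul_mem ρ (N := fun _ => (ρ g⁻¹).1) (fun i j => coord_inv_mem ρ i j)
      (fun _ _ => const_mem ρ _) i j

lemma right_mem (g : Γ) {a : Γ → k} (ha : a ∈ coordAlg ρ) :
    (fun x => a (x * g)) ∈ coordAlg ρ := by
  refine comp_mem ρ _ (fun i j => ?_) (fun i j => ?_) ha
  · simp only [map_mul, Units.val_mul]
    exact matrix_mul_mem ρ (N := fun _ => (ρ g).1) (fun i j => coord_mem ρ i j)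
      (fun _ _ => const_mem ρ _) i j
  · simp only [_root_.mul_inv_rev, map_mul, Units.val_mul]
    exact matrix_mul_mem ρ (M := fun _ => (ρ g⁻¹).1) (fun _ _ => const_mem ρ _)
      (fun i j => coord_inv_mem ρ i j) i j

lemma inv_arg_mem {a : Γ → k} (ha : a ∈ coordAlg ρ) : (fun x => a x⁻¹) ∈ coordAlg ρ := by
  refine comp_mem ρ _ (fun i j => coord_inv_mem ρ i j) (fun i j => ?_) ha
  simpa using coord_mem ρ i j

instance : IsNoetherianRing (coordAlg ρ) := by
  have : (coordAlg ρ).FG := Subalgebra.fg_def.2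
    ⟨_, (Set.finite_range _).union (Set.finite_range _), rfl⟩
  have := (coordAlg ρ).fg_iff_finiteType.1 this
  exact Algebra.FiniteType.isNoetherianRing k _

/-- Regular functions on a subgroup are restrictions of regular functions. -/
lemma exists_extension (H : Subgroup Γ) {a : H → k} (ha : a ∈ coordAlg (ρ.comp H.subtype)) :
    ∃ b ∈ coordAlg ρ, ∀ h : H, b h = a h := by
  induction ha using Algebra.adjoin_induction with
  | mem a ha =>
    rcases ha with ⟨ij, rfl⟩ | ⟨ij, rfl⟩
    · exact ⟨_, coord_mem ρ ij.1 ij.2, fun h => rfl⟩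
    · exact ⟨_, coord_inv_mem ρ ij.1 ij.2, fun h => rfl⟩
  | algebraMap r => exact ⟨_, const_mem ρ r, fun h => rfl⟩
  | add a b _ _ ha hb =>
    obtain ⟨a', ha', h1⟩ := ha
    obtain ⟨b', hb', h2⟩ := hb
    exact ⟨a' + b', add_mem ha' hb', fun h => by simp [h1, h2]⟩
  | mul a b _ _ ha hb =>
    obtain ⟨a', ha', h1⟩ := ha
    obtain ⟨b', hb', h2⟩ := hb
    exact ⟨a' * b', mul_mem ha' hb', fun h => by simp [h1, h2]⟩

/-- The point of `Spec` of the coordinate algebra given by evaluation at `x`. -/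
def toSpec (x : Γ) : PrimeSpectrum (coordAlg ρ) :=
  ⟨RingHom.ker ((Pi.evalRingHom (fun _ : Γ => k) x).comp (coordAlg ρ).val.toRingHom),
    RingHom.ker_isPrime _⟩

/-- The Zariski topology on `Γ`: closed sets are the zero sets of regular functions. It is induced
from the spectrum, which makes it Noetherian. -/
@[reducible] def zariski : TopologicalSpace Γ :=
  TopologicalSpace.induced (toSpec ρ) inferInstance

lemma isClosed_zeros {a : Γ → k} (ha : a ∈ coordAlg ρ) :
    IsClosed[zariski ρ] {x | a x = 0} := by
  let _ := zariski ρ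
  refine isClosed_induced_iff.2 ⟨PrimeSpectrum.zeroLocus {⟨a, ha⟩},
    PrimeSpectrum.isClosed_zeroLocus _, ?_⟩
  ext x
  simp [toSpec, PrimeSpectrum.mem_zeroLocus]

lemma isClosed_iff_zeros {Z : Set Γ} :
    IsClosed[zariski ρ] Z ↔ ∃ S ⊆ (coordAlg ρ : Set (Γ → k)), Z = {x | ∀ a ∈ S, a x = 0} := by
  let _ := zariski ρ
  constructor
  · intro h
    obtain ⟨T, hT, rfl⟩ := isClosed_induced_iff.1 h
    obtain ⟨s, rfl⟩ := (PrimeSpectrum.isClosed_iff_zeroLocus _).1 hT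
    refine ⟨Subtype.val '' s, by rintro _ ⟨a, -, rfl⟩; exact a.2, ?_⟩
    ext x
    simp only [Set.mem_preimage, PrimeSpectrum.mem_zeroLocus, Set.mem_ofPred_eq,
      Set.forall_mem_image]
    exact Iff.rfl
  · rintro ⟨S, hS, rfl⟩
    have : {x : Γ | ∀ a ∈ S, a x = 0} = ⋂ a ∈ S, {x | a x = 0} := by ext; simp
    rw [this]
    exact isClosed_biInter fun a ha => isClosed_zeros ρ (hS ha)

lemma continuous_left (g : Γ) : Continuous[zariski ρ, zariski ρ] (fun x => g * x) := by
  let _ := zariski ρ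
  refine continuous_iff_isClosed.2 fun Z hZ => ?_
  obtain ⟨S, hS, rfl⟩ := (isClosed_iff_zeros ρ).1 hZ
  refine (isClosed_iff_zeros ρ).2 ⟨(fun a x => a (g * x)) '' S, ?_, ?_⟩
  · rintro _ ⟨a, ha, rfl⟩
    exact left_mem ρ g (hS ha)
  · ext x; simp

open Pointwise in
/-- Some finite index subgroup is irreducible in the Zariski topology: its ring of regular
functions is a domain. The stabilizer `H` of the irreducible component `C` of `1` has finite index,
because there are finitely many components; `C` is covered by finitely many translates of the
closure of `H`, so it equals that closure. -/
theorem exists_irreducible :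
    ∃ H : Subgroup Γ, H.FiniteIndex ∧ NoZeroDivisors (coordAlg (ρ.comp H.subtype)) := by
  let _ := zariski ρ
  have : TopologicalSpace.NoetherianSpace Γ :=
    (Topology.IsInducing.mk (f := toSpec ρ) rfl).noetherianSpace
  have hfin := TopologicalSpace.NoetherianSpace.finite_irreducibleComponents (α := Γ)
  let T : Γ → (Γ ≃ₜ Γ) := fun g =>
    { toEquiv := Equiv.mulLeft g
      continuous_toFun := continuous_left ρ g
      continuous_invFun := continuous_left ρ g⁻¹ }
  have hT : ∀ (g : Γ) (s : Set Γ), g • s = T g '' s := fun g s => rfl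
  let C := irreducibleComponent (1 : Γ)
  have hC : C ∈ irreducibleComponents Γ := irreducibleComponent_mem_irreducibleComponents 1
  have htrans : ∀ (g : Γ), ∀ Z ∈ irreducibleComponents Γ, g • Z ∈ irreducibleComponents Γ := by
    intro g Z hZ
    rw [hT]
    refine ⟨hZ.1.image _ (T g).continuous.continuousOn, fun W hW hle => ?_⟩
    have h1 : IsIrreducible ((T g).symm '' W) := hW.image _ (T g).symm.continuous.continuousOn
    have h2 : Z ≤ (T g).symm '' W := by
      intro z hz
      exact ⟨T g z, hle ⟨z, hz, rfl⟩, (T g).symm_apply_apply z⟩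
    intro w hw
    exact ⟨(T g).symm w, hZ.2 h1 h2 ⟨w, hw, rfl⟩, (T g).apply_symm_apply w⟩
  let H := MulAction.stabilizer Γ C
  have hindex : H.FiniteIndex := by
    constructor
    rw [MulAction.index_stabilizer]
    have : (MulAction.orbit Γ C).Finite :=
      hfin.subset (by rintro _ ⟨g, rfl⟩; exact htrans g C hC)
    exact (Set.ncard_pos this).2 (MulAction.nonempty_orbit C) |>.ne'
  have hHC : (H : Set Γ) ⊆ C := by
    intro h hh
    have : h • C = C := hh
    rw [← this]
    exact ⟨1, mem_irreducibleComponent, by simp⟩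
  have hCclosed : IsClosed C := isClosed_irreducibleComponent
  have hclos : ∀ g : Γ, IsClosed (g • closure (H : Set Γ)) := fun g => by
    rw [hT]; exact (T g).isClosedMap _ isClosed_closure
  have hCH : C ⊆ closure (H : Set Γ) := by
    have hcov : C ⊆ ⋃₀ (Set.range fun q : Γ ⧸ H => q.out • closure (H : Set Γ)) := by
      intro x _
      refine ⟨_, ⟨(x : Γ ⧸ H), rfl⟩, ?_⟩
      have : ((x : Γ ⧸ H).out)⁻¹ * x ∈ H := QuotientGroup.eq.1 (QuotientGroup.out_eq' _)
      exact ⟨_, subset_closure this, by simp⟩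
    have hirr : IsIrreducible C := isIrreducible_irreducibleComponent
    have := (isIrreducible_iff_sUnion_isClosed.1 hirr)
      (Set.finite_range fun q : Γ ⧸ H => q.out • closure (H : Set Γ)).toFinset
      (by
        intro z hz
        simp only [Set.Finite.mem_toFinset] at hz
        obtain ⟨q, rfl⟩ := hz
        exact hclos _) (by simpa using hcov)
    obtain ⟨z, hz, hCz⟩ := this
    simp only [Set.Finite.mem_toFinset] at hz
    obtain ⟨q, rfl⟩ := hz
    have h1 : q.out • closure (H : Set Γ) ⊆ q.out • C :=
      Set.smul_set_mono (closure_minimal hHC hCclosed)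
    have h2 : q.out • C = C :=
      Set.Subset.antisymm (hC.2 (htrans _ _ hC).1 (hCz.trans h1)) (hCz.trans h1)
    intro x hx
    have hgx : q.out • x ∈ C := h2 ▸ Set.smul_mem_smul_set hx
    exact (Set.smul_mem_smul_set_iff).1 (hCz hgx)
  have hHirr : IsPreirreducible (H : Set Γ) := by
    rw [← isPreirreducible_iff_closure]
    have : closure (H : Set Γ) = C := Set.Subset.antisymm (closure_minimal hHC hCclosed) hCH
    rw [this]
    exact (isIrreducible_irreducibleComponent).isPreirreducible
  refine ⟨H, hindex, ⟨?_⟩⟩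
  intro a b hab
  obtain ⟨a', ha', h1⟩ := exists_extension ρ H a.2
  obtain ⟨b', hb', h2⟩ := exists_extension ρ H b.2
  have := isPreirreducible_iff_isClosed_union_isClosed.1 hHirr _ _ (isClosed_zeros ρ ha')
    (isClosed_zeros ρ hb') (fun x hx => by
      have h3 : a.1 ⟨x, hx⟩ * b.1 ⟨x, hx⟩ = 0 := congr_fun (congr_arg Subtype.val hab) ⟨x, hx⟩
      rw [← h1, ← h2] at h3
      exact mul_eq_zero.1 h3)
  refine this.imp (fun h => ?_) (fun h => ?_)
  · ext x; rw [← h1]; exact h x.2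
  · ext x; rw [← h2]; exact h x.2

end Zariski
end TitsAlternative

/-! ### Regular functions on an irreducible group -/

namespace TitsAlternative

open Matrix Topology

section Algebra
variable {k : Type*} [Field k] {Γ : Type*} [Group Γ] {n : ℕ}

/-- If the coordinate algebra is a domain, finitely many nonzero regular functions are
simultaneously nonzero at some point. -/
lemma exists_mul_ne_zero (ρ : Γ →* GL (Fin n) k) [NoZeroDivisors (coordAlg ρ)]
    {ι : Type*} (s : Finset ι) (a : ι → Γ → k) (ha : ∀ i ∈ s, a i ∈ coordAlg ρ)
    (h0 : ∀ i ∈ s, ∃ x, a i x ≠ 0) : ∃ x, ∀ i ∈ s, a i x ≠ 0 := by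
  classical
  by_contra! hcon
  have : ∏ i ∈ s.attach, (⟨a i.1, ha i.1 i.2⟩ : coordAlg ρ) = 0 := by
    apply Subtype.ext
    ext x
    obtain ⟨i, hi, hix⟩ := hcon x
    rw [SubmonoidClass.coe_finsetProd, Finset.prod_apply]
    exact Finset.prod_eq_zero (Finset.mem_attach s ⟨i, hi⟩) hix
  obtain ⟨i, -, hi⟩ := Finset.prod_eq_zero_iff.1 this
  obtain ⟨x, hx⟩ := h0 i.1 i.2
  exact hx (congrFun (congrArg Subtype.val hi) x)

/-- A regular function with finitely many values on a Zariski irreducible group is constant. -/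
lemma const_of_finite_range (ρ : Γ →* GL (Fin n) k) [NoZeroDivisors (coordAlg ρ)]
    {a : Γ → k} (ha : a ∈ coordAlg ρ) (hfin : (Set.range a).Finite) (x y : Γ) : a x = a y := by
  classical
  by_contra hne
  obtain ⟨z, hz⟩ := exists_mul_ne_zero ρ hfin.toFinset (fun c x => a x - c)
    (fun c _ => sub_mem ha (const_mem ρ c)) (fun c hc => by
      by_cases h : a x = c
      · exact ⟨y, fun h' => hne (h.trans (sub_eq_zero.1 h').symm)⟩
      · exact ⟨x, fun h' => h (sub_eq_zero.1 h')⟩)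
  exact hz (a z) (by simp) (sub_self _)

/-- Irreducibility is preserved under field extensions: a `k`-linear functional on `L` turns
regular functions with values in `L` into regular functions with values in `k`. -/
lemma noZeroDivisors_map (ρ : Γ →* GL (Fin n) k) [NoZeroDivisors (coordAlg ρ)]
    {L : Type*} [Field L] (σ : k →+* L) :
    NoZeroDivisors (coordAlg ((Matrix.GeneralLinearGroup.map σ).comp ρ)) := by
  let _ : Algebra k L := σ.toAlgebra
  set ρ' := (Matrix.GeneralLinearGroup.map (n := Fin n) σ).comp ρ with hρ'
  have key : ∀ F ∈ coordAlg ρ', ∀ F' : Γ → L,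
      (∀ l : L →ₗ[k] k, (fun x => l (F' x)) ∈ coordAlg ρ) →
      ∀ l : L →ₗ[k] k, (fun x => l ((F * F') x)) ∈ coordAlg ρ := by
    intro F hF
    have hgen : ∀ a ∈ coordAlg ρ, ∀ F' : Γ → L,
      (∀ l : L →ₗ[k] k, (fun x => l (F' x)) ∈ coordAlg ρ) →
      ∀ l : L →ₗ[k] k, (fun x => l (σ (a x) * F' x)) ∈ coordAlg ρ := by
      intro a ha F' hF' l
      have : (fun x => l (σ (a x) * F' x)) = a * fun x => l (F' x) := by
        ext x
        have : σ (a x) * F' x = a x • F' x := by rw [Algebra.smul_def]; rfl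
        simp [this]
      rw [this]
      exact mul_mem ha (hF' l)
    induction hF using Algebra.adjoin_induction with
    | mem a ha =>
      rcases ha with ⟨ij, rfl⟩ | ⟨ij, rfl⟩
      · exact hgen _ (coord_mem ρ ij.1 ij.2)
      · exact hgen _ (coord_inv_mem ρ ij.1 ij.2)
    | algebraMap r =>
      intro F' hF' l
      exact hF' (l ∘ₗ LinearMap.mulLeft k r)
    | add a b _ _ ha hb =>
      intro F' hF' l
      have := add_mem (ha F' hF' l) (hb F' hF' l)
      convert this using 1
      ext x
      simp [add_mul]
    | mul a b _ _ ha hb =>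
      intro F' hF' l
      have := ha _ (hb F' hF') l
      simpa [mul_assoc] using this
  have key' : ∀ F ∈ coordAlg ρ', ∀ l : L →ₗ[k] k, (fun x => l (F x)) ∈ coordAlg ρ := by
    intro F hF l
    simpa using key F hF 1 (fun l => const_mem ρ (l 1)) l
  have nz : ∀ c : L, c ≠ 0 → ∃ l : L →ₗ[k] k, l c ≠ 0 := fun c hc =>
    Module.Projective.exists_dual_ne_zero k hc
  refine ⟨?_⟩
  rintro ⟨F, hF⟩ ⟨F', hF'⟩ h
  by_contra! hcon
  obtain ⟨h1, h2⟩ := hcon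
  have h1' : ∃ x, F x ≠ 0 := by
    by_contra! h; exact h1 (Subtype.ext (funext h))
  have h2' : ∃ x, F' x ≠ 0 := by
    by_contra! h; exact h2 (Subtype.ext (funext h))
  obtain ⟨x, hx⟩ := h1'
  obtain ⟨y, hy⟩ := h2'
  obtain ⟨l, hl⟩ := nz _ hx
  obtain ⟨l', hl'⟩ := nz _ hy
  obtain ⟨z, hz⟩ := exists_mul_ne_zero ρ Finset.univ
    (fun b : Bool => if b then fun x => l (F x) else fun x => l' (F' x))
    (by rintro (_ | _) - <;> simp [key' _ hF, key' _ hF'])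
    (by rintro (_ | _) -
        · exact ⟨y, by simpa using hl'⟩
        · exact ⟨x, by simpa using hl⟩)
  have e1 := hz true (Finset.mem_univ _)
  have e2 := hz false (Finset.mem_univ _)
  have e3 : F z * F' z = 0 := congrFun (congrArg Subtype.val h) z
  rcases mul_eq_zero.1 e3 with e | e
  · simp [e] at e1
  · simp [e] at e2

/-- In characteristic zero a matrix all of whose powers have trace zero is nilpotent: the
spectral idempotent `e` for the nonzero eigenvalues is a polynomial in `M` without constant term,
hence has trace, and so rank, zero. -/
lemma isNilpotent_of_trace_pow [CharZero k] (M : Matrix (Fin n) (Fin n) k)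
    (h : ∀ j : ℕ, (M ^ (j + 1)).trace = 0) : IsNilpotent M := by
  classical
  have hIntegral : IsIntegral k M := Algebra.IsIntegral.isIntegral M
  have hne : minpoly k M ≠ 0 := minpoly.ne_zero hIntegral
  obtain ⟨q, hq, hdvd⟩ := Polynomial.exists_eq_pow_rootMultiplicity_mul_and_not_dvd
    (minpoly k M) hne 0
  set m := (minpoly k M).rootMultiplicity 0
  rw [Polynomial.C_0, sub_zero] at hq hdvd
  have hcop : IsCoprime (Polynomial.X ^ (m + 1)) q :=
    IsCoprime.pow_left ((Polynomial.irreducible_X.coprime_iff_not_dvd).2 hdvd)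
  obtain ⟨a, b, hab⟩ := hcop
  have hMq : M ^ m * Polynomial.aeval M q = 0 := by
    have := minpoly.aeval k M
    rw [hq] at this
    simpa using this
  set e := Polynomial.aeval M (a * Polynomial.X ^ (m + 1)) with he
  set f := Polynomial.aeval M (b * q) with hf
  have hef : e + f = 1 := by rw [he, hf, ← map_add, hab]; simp
  have hprod : e * f = 0 := by
    rw [he, hf, ← map_mul, show a * Polynomial.X ^ (m + 1) * (b * q) =
      (a * b * Polynomial.X) * (Polynomial.X ^ m * q) by ring, map_mul]
    simp [hMq]
  have hidem : IsIdempotentElem e := by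
    have : e * (e + f) = e := by rw [hef, mul_one]
    rwa [mul_add, hprod, add_zero] at this
  have htr : e.trace = 0 := by
    have hX : ∀ p : Polynomial k, (Polynomial.aeval M (p * Polynomial.X)).trace = 0 := by
      intro p
      induction p using Polynomial.induction_on' with
      | add p q hp hq => simp only [add_mul, map_add, Matrix.trace_add, hp, hq, add_zero]
      | monomial i c =>
        rw [Polynomial.monomial_mul_X, Polynomial.aeval_monomial, ← Algebra.smul_def,
          Matrix.trace_smul, h, smul_zero]
    rw [he, pow_succ, ← mul_assoc]
    exact hX _
  have he0 : e = 0 := by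
    have h1 : IsIdempotentElem (Matrix.toLin' e) := by
      unfold IsIdempotentElem
      rw [Module.End.mul_eq_comp, ← Matrix.toLin'_mul, hidem.eq]
    have h2 := LinearMap.IsIdempotentElem.eq_zero_of_trace_eq_zero h1
      (by rw [Matrix.trace_toLin'_eq, htr])
    exact (Matrix.toLin' (R := k)).map_eq_zero_iff.1 h2
  refine ⟨m, ?_⟩
  have hf1 : f = 1 := by rw [← hef, he0, zero_add]
  calc M ^ m = M ^ m * f := by rw [hf1, mul_one]
    _ = M ^ m * Polynomial.aeval M (q * b) := by rw [hf, mul_comm q b]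
    _ = 0 := by rw [map_mul, ← mul_assoc, hMq, zero_mul]
end Algebra
end TitsAlternative

/-! ### Solvability from traces -/

namespace TitsAlternative

open Matrix Topology
open scoped commutatorElement

section Unipotent
variable {k : Type*} [Field k] {n : ℕ}

/-- The `m`-th derived subgroup is contained in the congruence subgroup of the `(m + 1)`-st power of
the Jacobson radical, which is nilpotent. -/
lemma isSolvable_of_jacobson {A D : Type*} [Ring A] [IsArtinianRing A] [Group D] (f : D →* A)
    (hinj : Function.Injective f) (hN : ∀ d, f d - 1 ∈ Ring.jacobson A) :
    Group.IsSolvable D := by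
  set N := Ring.jacobson A with hNdef
  let K : ℕ → Subgroup D := fun m =>
    { carrier := {d | f d - 1 ∈ N ^ (m + 1)}
      one_mem' := by simp
      mul_mem' := by
        intro a b ha hb
        have : f (a * b) - 1 = f a * (f b - 1) + (f a - 1) := by
          rw [map_mul, mul_sub, mul_one]; abel
        rw [Set.mem_ofPred_eq, this]
        exact add_mem (Ideal.mul_mem_left _ _ hb) ha
      inv_mem' := by
        intro a ha
        have : f a⁻¹ - 1 = - (f a⁻¹ * (f a - 1)) := by
          rw [mul_sub, ← map_mul]; simp
        rw [Set.mem_ofPred_eq, this]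
        exact neg_mem (Ideal.mul_mem_left _ _ ha) }
  have hmulmem : ∀ m (a b : A), a ∈ N ^ (m + 1) → b ∈ N ^ (m + 1) → a * b ∈ N ^ (m + 2) := by
    intro m a b ha hb
    have := Ideal.mul_mem_mul ha hb
    rw [← Ideal.IsTwoSided.pow_add] at this
    exact Ideal.pow_le_pow_right (by omega) this
  have hK : ∀ m, derivedSeries D m ≤ K m := by
    intro m
    induction m with
    | zero =>
      intro d _
      change f d - 1 ∈ N ^ (0 + 1)
      simpa [Submodule.pow_one] using hN d
    | succ m ih =>
      rw [derivedSeries_succ, Subgroup.commutator_le]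
      intro d hd e he
      have hd' := inv_mem (ih hd)
      have he' := inv_mem (ih he)
      change f ⁅d, e⁆ - 1 ∈ N ^ (m + 2)
      have : f ⁅d, e⁆ - 1 = f d * f e * ((f d⁻¹ - 1) * (f e⁻¹ - 1) - (f e⁻¹ - 1) * (f d⁻¹ - 1)) := by
        have h1 : f d * f e * (f d⁻¹ * f e⁻¹) = f ⁅d, e⁆ := by
          rw [← map_mul, ← map_mul, ← map_mul, commutatorElement_def]; group
        have h2 : f d * f e * (f e⁻¹ * f d⁻¹) = 1 := by
          rw [← map_mul, ← map_mul, ← map_mul]; simp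
        calc _ = f d * f e * (f d⁻¹ * f e⁻¹) - f d * f e * (f e⁻¹ * f d⁻¹) := by rw [h1, h2]
          _ = _ := by noncomm_ring
      rw [this]
      exact Ideal.mul_mem_left _ _ (sub_mem (hmulmem m _ _ hd' he') (hmulmem m _ _ he' hd'))
  obtain ⟨s, hs⟩ := IsSemiprimaryRing.isNilpotent (R := A)
  refine ⟨⟨s, ?_⟩⟩
  rw [eq_bot_iff]
  intro d hd
  have h1 : f d - 1 ∈ N ^ (s + 1) := hK s hd
  rw [Ideal.IsTwoSided.pow_succ, hs] at h1
  have h2 : f d = 1 := by simpa [sub_eq_zero] using h1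
  rw [Subgroup.mem_bot]
  exact hinj (h2.trans (map_one f).symm)

/-- A linear group whose trace form does not distinguish its elements from the identity is
solvable: the differences `d - 1` lie in the (nilpotent) Jacobson radical of the enveloping
algebra. -/
lemma isSolvable_of_trace [CharZero k] {D : Type*} [Group D] (ρ : D →* GL (Fin n) k)
    (hinj : Function.Injective ρ)
    (htr : ∀ d e : D, (ρ (d * e)).1.trace = (ρ e).1.trace) : Group.IsSolvable D := by
  classical
  let f0 : D →* Matrix (Fin n) (Fin n) k := (Units.coeHom _).comp ρ
  let A := Algebra.adjoin k (Set.range f0)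
  let f : D →* A := f0.codRestrict A (fun d => Algebra.subset_adjoin ⟨d, rfl⟩)
  have hf : ∀ d, (f d : Matrix (Fin n) (Fin n) k) = (ρ d).1 := fun d => rfl
  have htrA : ∀ d : D, ∀ y ∈ A, ((f0 d - 1) * y).trace = 0 := by
    intro d y hyA
    have hy' : y ∈ Submodule.span k (Set.range f0) := by
      have h1 : y ∈ Subalgebra.toSubmodule A := hyA
      rw [Algebra.adjoin_eq_span] at h1
      have : (Submonoid.closure (Set.range f0) : Set _) = Set.range f0 := by
        rw [← MonoidHom.coe_mrange, Submonoid.closure_eq]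
      rwa [this] at h1
    clear hyA
    induction hy' using Submodule.span_induction with
    | mem y hy =>
      obtain ⟨e, rfl⟩ := hy
      have := htr d e
      rw [sub_mul, one_mul, ← map_mul, Matrix.trace_sub, sub_eq_zero]
      exact this
    | zero => simp
    | add x y hx hy h1 h2 =>
      simp only [mul_add, Matrix.trace_add, h1, h2, add_zero]
    | smul c x hx h => simp only [mul_smul_comm, Matrix.trace_smul, h, smul_zero]
  have : Module.Finite k A := inferInstance
  have : IsArtinianRing A := IsArtinianRing.of_finite k A
  have hN : ∀ d, f d - 1 ∈ Ring.jacobson A := by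
    intro d
    rw [← Ideal.jacobson_bot, Ideal.mem_jacobson_iff]
    intro y
    have hnil : IsNilpotent (y * (f d - 1)) := by
      have : IsNilpotent ((y * (f d - 1) : A) : Matrix (Fin n) (Fin n) k) := by
        refine isNilpotent_of_trace_pow _ fun j => ?_
        rw [pow_succ', ← SubmonoidClass.coe_pow]
        set w := (y * (f d - 1)) ^ j
        have := htrA d (w * y : A) (w * y : A).2
        rw [Matrix.trace_mul_comm] at this
        rw [Matrix.trace_mul_comm]
        have hff : f0 d = (f d : Matrix (Fin n) (Fin n) k) := rfl
        simpa [mul_assoc, hff] using this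
      obtain ⟨m, hm⟩ := this
      exact ⟨m, Subtype.ext (by simpa using hm)⟩
    obtain ⟨u, hu⟩ := hnil.isUnit_one_add
    refine ⟨(u⁻¹ : Aˣ), ?_⟩
    have : (u⁻¹ : Aˣ).1 * (1 + y * (f d - 1)) = 1 := by rw [← hu]; simp
    rw [mul_add, mul_one, ← mul_assoc] at this
    rw [Ideal.mem_bot, sub_eq_zero, add_comm, this]
  refine isSolvable_of_jacobson f (fun a b hab => hinj (Units.ext ?_)) hN
  rw [← hf, ← hf, hab]

variable {Γ : Type*} [Group Γ]

/-- A Zariski irreducible linear group is solvable as soon as the trace takes finitely many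
values on its commutator subgroup: then `x ↦ trace (⁅x, y⁆ * d)` is a regular function with
finitely many values, hence equal to its value at `x = 1`. -/
lemma isSolvable_of_finite_trace [CharZero k] (ρ : Γ →* GL (Fin n) k)
    (hinj : Function.Injective ρ)
    [NoZeroDivisors (coordAlg ρ)]
    (hfin : ((fun x => (ρ x).1.trace) '' (commutator Γ : Set Γ)).Finite) : Group.IsSolvable Γ := by
  classical
  have htrmem : ∀ e : Γ → Γ, (∀ i j, (fun x => (ρ (e x)).1 i j) ∈ coordAlg ρ) →
      (fun x => (ρ (e x)).1.trace) ∈ coordAlg ρ := by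
    intro e he
    have : (fun x => (ρ (e x)).1.trace) = ∑ i, fun x => (ρ (e x)).1 i i := by
      ext x; simp [Matrix.trace]
    rw [this]
    exact sum_mem fun i _ => he i i
  have step : ∀ x y : Γ, ∀ d ∈ commutator Γ,
      (ρ (⁅x, y⁆ * d)).1.trace = (ρ d).1.trace := by
    intro x y d hd
    have h1 := const_of_finite_range ρ (a := fun x => (ρ (⁅x, y⁆ * d)).1.trace)
      (htrmem _ ?_) (hfin.subset ?_) x 1
    · simpa using h1
    · have e1 : ∀ x, (ρ (⁅x, y⁆ * d)).1 = (ρ x).1 * ((ρ y).1 * ((ρ x⁻¹).1 * (ρ (y⁻¹ * d)).1)) := by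
        intro x
        rw [← Units.val_mul, ← map_mul, ← Units.val_mul, ← map_mul, ← Units.val_mul, ← map_mul,
          commutatorElement_def]
        simp only [mul_assoc]
      simp only [e1]
      exact fun i j => matrix_mul_mem ρ (coord_mem ρ)
        (matrix_mul_mem ρ (M := fun _ => (ρ y).1) (fun _ _ => const_mem ρ _)
        (matrix_mul_mem ρ (N := fun _ => (ρ (y⁻¹ * d)).1) (coord_inv_mem ρ)
          (fun _ _ => const_mem ρ _))) i j
    · rintro _ ⟨x, rfl⟩
      exact ⟨_, mul_mem (Subgroup.commutator_mem_commutator (Subgroup.mem_top x)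
        (Subgroup.mem_top y)) hd, rfl⟩
  have all : ∀ d ∈ commutator Γ, ∀ e ∈ commutator Γ, (ρ (d * e)).1.trace = (ρ e).1.trace := by
    intro d hd
    rw [commutator_eq_closure] at hd
    induction hd using Subgroup.closure_induction with
    | mem x hx =>
      obtain ⟨a, b, rfl⟩ := hx
      exact step a b
    | one => simp
    | mul x y hx hy h1 h2 =>
      intro e he
      rw [← commutator_eq_closure] at hx hy
      rw [mul_assoc, h1 _ (mul_mem hy he), h2 e he]
    | inv x hx h =>
      intro e he
      rw [← commutator_eq_closure] at hx
      have := h (x⁻¹ * e) (mul_mem (inv_mem hx) he)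
      rw [mul_inv_cancel_left] at this
      exact this.symm
  have : Group.IsSolvable (commutator Γ) := by
    refine isSolvable_of_trace (ρ.comp (commutator Γ).subtype)
      (hinj.comp Subtype.val_injective) ?_
    rintro ⟨d, hd⟩ ⟨e, he⟩
    exact all d hd e he
  exact Group.isSolvable_of_ker_le_range (commutator Γ).subtype (Abelianization.of (G := Γ))
    (by rw [Abelianization.ker_of, Subgroup.range_subtype])
end Unipotent
end TitsAlternative

/-! ### Constants and embeddings of finitely generated fields -/

namespace TitsAlternative

section Constants
variable {F k : Type*} [Field F] [Field k] [Algebra F k]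

/-- Elements algebraic over `F` that are linearly independent over `F` stay independent over a
purely transcendental extension. -/
lemma linearIndependent_adjoin {ι κ : Type*} {x : κ → k} (hx : AlgebraicIndependent F x)
    (b : ι → algebraicClosure F k) (hb : LinearIndependent F b) :
    LinearIndependent (Algebra.adjoin F (Set.range x)) (fun i => (b i : k)) := by
  classical
  have hx' : AlgebraicIndependent (algebraicClosure F k) x :=
    hx.extendScalars (algebraicClosure F k)
  rw [linearIndependent_iff']
  intro s g hg i hi
  have hp : ∀ i, ∃ p : MvPolynomial κ F, MvPolynomial.aeval x p = (g i : k) := by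
    intro i
    have h0 : ∀ y ∈ Algebra.adjoin F (Set.range x),
        ∃ p : MvPolynomial κ F, MvPolynomial.aeval x p = y := by
      intro y hy
      rw [Algebra.adjoin_range_eq_range_aeval] at hy
      exact hy
    exact h0 _ (g i).2
  choose p hp using hp
  have h1 : MvPolynomial.aeval x (∑ i ∈ s, MvPolynomial.C (b i) *
      MvPolynomial.map (algebraMap F (algebraicClosure F k)) (p i)) = (0 : k) := by
    rw [← hg, map_sum]
    refine Finset.sum_congr rfl fun i _ => ?_
    rw [map_mul, MvPolynomial.aeval_C, MvPolynomial.aeval_map_algebraMap, hp, mul_comm]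
    rfl
  have h2 := (injective_iff_map_eq_zero _).1 hx' _ h1
  have h3 : p i = 0 := by
    ext m
    have h4 := congrArg (MvPolynomial.coeff m) h2
    rw [MvPolynomial.coeff_sum] at h4
    simp only [MvPolynomial.coeff_C_mul, MvPolynomial.coeff_map, MvPolynomial.coeff_zero] at h4
    have := linearIndependent_iff'.1 hb s (fun i => MvPolynomial.coeff m (p i)) (by
      rw [← h4]
      refine Finset.sum_congr rfl fun i _ => ?_
      rw [Algebra.smul_def, mul_comm]) i hi
    simpa using this
  apply Subtype.ext
  rw [← hp, h3]
  simp

open scoped IntermediateField.algebraAdjoinAdjoin in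
/-- The constants of a finitely generated field extension form a finite extension. -/
lemma finiteDimensional_algebraicClosure [Algebra.EssFiniteType F k] :
    FiniteDimensional F (algebraicClosure F k) := by
  obtain ⟨s, hs⟩ := exists_isTranscendenceBasis F k
  set x : s → k := Subtype.val
  have halg := hs.isAlgebraic_field
  let E := IntermediateField.adjoin F (Set.range x)
  have : Algebra.EssFiniteType E k := Algebra.EssFiniteType.of_comp F E k
  have : Module.Finite E k := Algebra.finite_of_essFiniteType_of_isAlgebraic
  let b := Module.Free.chooseBasis F (algebraicClosure F k)
  have h1 := linearIndependent_adjoin hs.1 b b.linearIndependent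
  have h2 : LinearIndependent E (fun i => (b i : k)) :=
    (LinearIndependent.iff_fractionRing (R := Algebra.adjoin F (Set.range x)) (K := E)).1 h1
  have : Finite (Module.Free.ChooseBasisIndex F (algebraicClosure F k)) := h2.finite
  exact Module.Finite.of_basis b

end Constants

section Embedding
open Cardinal

/-- Embeddings of countable fields into large algebraically closed fields extend to countable
overfields. -/
lemma exists_extension_embedding {F k : Type*} {L : Type} [Field F] [Field k] [Algebra F k]
    [Countable F] [Countable k]
    [Field L] [IsAlgClosed L] (hL : ℵ₀ < #L) (φ : F →+* L) :
    ∃ σ : k →+* L, σ.comp (algebraMap F k) = φ := by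
  let _ : Algebra F L := φ.toAlgebra
  obtain ⟨s, hs⟩ := exists_isTranscendenceBasis F k
  obtain ⟨t, ht⟩ := exists_isTranscendenceBasis F L
  have hF : #F ≤ ℵ₀ := mk_le_aleph0
  have h1 := IsAlgClosed.cardinal_eq_cardinal_transcendence_basis_of_aleph0_lt _ ht hF hL
  have hinf : Infinite t := by
    rw [Cardinal.infinite_iff]
    have : ℵ₀ ≤ Cardinal.lift.{0} #t := h1 ▸ (by simp)
    simpa using this
  obtain ⟨e0, he0⟩ := exists_injective_nat s
  let e : s ↪ t := (⟨e0, he0⟩ : s ↪ ℕ).trans (Infinite.natEmbedding t)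
  have hind : AlgebraicIndependent F (fun i : s => ((e i : t) : L)) := ht.1.comp e e.injective
  let A := Algebra.adjoin F (Set.range (Subtype.val : s → k))
  let ψ : A →ₐ[F] L := (MvPolynomial.aeval (fun i : s => ((e i : t) : L))).comp
    hs.1.aevalEquiv.symm.toAlgHom
  have hψ : Function.Injective ψ :=
    Function.Injective.comp (g := MvPolynomial.aeval (R := F) (fun i : s => ((e i : t) : L)))
      hind hs.1.aevalEquiv.symm.injective
  let _ : Algebra A L := ψ.toRingHom.toAlgebra
  have : Module.IsTorsionFree A L := by
    rw [Module.isTorsionFree_iff_faithfulSMul, faithfulSMul_iff_algebraMap_injective]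
    exact hψ
  have : Algebra.IsAlgebraic A k := hs.isAlgebraic
  let σ : k →ₐ[A] L := IsAlgClosed.lift
  refine ⟨σ.toRingHom, ?_⟩
  ext c
  have h2 : algebraMap F k c = algebraMap A k (algebraMap F A c) := rfl
  change σ (algebraMap F k c) = φ c
  rw [h2, AlgHom.commutes]
  exact ψ.commutes c
end Embedding
end TitsAlternative

/-! ### Elements bounded at all places -/

namespace TitsAlternative
open Polynomial Cardinal

section Bounded

lemma exists_algHom_adjoin {F k L : Type*} [Field F] [Field k] [Field L] [Algebra F k]
    [Algebra F L] {τ : k}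
    (hτ : Transcendental F τ) {μ : L} (hμ : Transcendental F μ) :
    ∃ φ : IntermediateField.adjoin F {τ} →ₐ[F] L,
      φ (IntermediateField.AdjoinSimple.gen F τ) = μ :=
  ⟨(IntermediateField.val _).comp ((RatFunc.algEquivOfTranscendental μ hμ).toAlgHom.comp
    (RatFunc.algEquivOfTranscendental τ hτ).symm.toAlgHom), by simp⟩

variable {k : Type*} [Field k] [CharZero k] [Countable k]

lemma exists_embedding_of_isAlgebraic {L : Type} [Field L] [CharZero L] [IsAlgClosed L]
    (hL : ℵ₀ < #L) {τ : k} (hτ : IsIntegral ℚ τ) {μ : L} (hμ : aeval μ (minpoly ℚ τ) = 0) :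
    ∃ σ : k →+* L, σ τ = μ := by
  have hμ' : μ ∈ (minpoly ℚ τ).aroots L :=
    (mem_aroots.2 ⟨minpoly.ne_zero hτ, hμ⟩)
  let φ := (IntermediateField.algHomAdjoinIntegralEquiv ℚ (K := L) hτ).symm ⟨μ, hμ'⟩
  have hφ : φ (IntermediateField.AdjoinSimple.gen ℚ τ) = μ :=
    IntermediateField.algHomAdjoinIntegralEquiv_symm_apply_gen ℚ hτ ⟨μ, hμ'⟩
  have : Countable (IntermediateField.adjoin ℚ {τ}) := Subtype.countable
  obtain ⟨σ, hσ⟩ := exists_extension_embedding (k := k) hL φ.toRingHom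
  exact ⟨σ, by rw [← hφ]; exact congrArg (fun f => f (IntermediateField.AdjoinSimple.gen ℚ τ)) hσ⟩

lemma exists_embedding_of_transcendental {L : Type} [Field L] [CharZero L] [IsAlgClosed L]
    (hL : ℵ₀ < #L) {τ : k} (hτ : Transcendental ℚ τ) {μ : L} (hμ : Transcendental ℚ μ) :
    ∃ σ : k →+* L, σ τ = μ := by
  obtain ⟨φ, hφ⟩ := exists_algHom_adjoin hτ hμ
  have : Countable (IntermediateField.adjoin ℚ {τ}) := Subtype.countable
  obtain ⟨σ, hσ⟩ := exists_extension_embedding (k := k) hL φ.toRingHom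
  exact ⟨σ, by rw [← hφ]; exact congrArg (fun f => f (IntermediateField.AdjoinSimple.gen ℚ τ)) hσ⟩

lemma aleph0_lt_complex : ℵ₀ < #ℂ := by
  rw [Cardinal.mk_complex]; exact Cardinal.aleph0_lt_continuum

lemma aleph0_lt_padicAlgCl (p : ℕ) [Fact p.Prime] : ℵ₀ < #(PadicAlgCl p) := by
  have h1 : ℵ₀ < #ℚ_[p] :=
    Cardinal.aleph0_lt_continuum.trans_le (continuum_le_cardinal_of_nontriviallyNormedField ℚ_[p])
  exact h1.trans_le (Cardinal.mk_le_of_injective (algebraMap ℚ_[p] (PadicAlgCl p)).injective)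

lemma exists_transcendental_norm_gt (B : ℝ) : ∃ μ : ℂ, Transcendental ℚ μ ∧ B < ‖μ‖ := by
  obtain ⟨μ, hμ⟩ : ∃ μ : ℂ, Transcendental ℚ μ := by
    by_contra! h
    have : Algebra.IsAlgebraic ℚ ℂ := ⟨fun x => not_not.1 (h x)⟩
    have h1 := Algebra.IsAlgebraic.cardinalMk_le_max ℚ ℂ
    simp at h1
    exact absurd h1 (not_le.2 Cardinal.aleph0_lt_continuum)
  obtain ⟨N, hN⟩ := exists_nat_gt (B + ‖μ‖)
  refine ⟨μ + N, fun h => hμ ?_, ?_⟩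
  · have := h.sub (isAlgebraic_natCast (R := ℚ) (A := ℂ) N)
    simpa using this
  · have := norm_sub_norm_le (N : ℂ) (-μ)
    rw [norm_neg, sub_neg_eq_add, add_comm (N : ℂ) μ, Complex.norm_natCast] at this
    linarith

/-- Gauss: a product of monic linear factors with roots of norm at most one has coefficients of
norm at most one. -/
lemma norm_coeff_prod_le {L : Type*} [NormedField L] [IsUltrametricDist L] (s : Multiset L)
    (hs : ∀ μ ∈ s, ‖μ‖ ≤ 1) (i : ℕ) : ‖((s.map fun μ => X - C μ).prod).coeff i‖ ≤ 1 := by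
  induction s using Multiset.induction_on generalizing i with
  | empty => simp [coeff_one]; split_ifs <;> simp
  | cons a s ih =>
    have h1 := ih (fun μ hμ => hs μ (Multiset.mem_cons_of_mem hμ))
    have h2 := hs a (Multiset.mem_cons_self a s)
    rw [Multiset.map_cons, Multiset.prod_cons, sub_mul, coeff_sub, coeff_C_mul]
    rw [sub_eq_add_neg]
    refine (IsUltrametricDist.norm_add_le_max _ _).trans (max_le ?_ ?_)
    · cases i with
      | zero => simp
      | succ i => rw [coeff_X_mul]; exact h1 i
    · rw [norm_neg, norm_mul]; exact mul_le_one₀ h2 (norm_nonneg _) (h1 i)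

/-- An algebraic number bounded by `1` under all `p`-adic embeddings is an algebraic integer: its
conjugates in `PadicAlgCl p` have norm at most one, hence so do the coefficients of its minimal
polynomial, for every `p`. -/
lemma isIntegral_of_bounded {τ : k} (hτ : IsIntegral ℚ τ)
    (h : ∀ (p : ℕ) [Fact p.Prime] (σ : k →+* PadicAlgCl p), ‖σ τ‖ ≤ 1) : IsIntegral ℤ τ := by
  have hc : ∀ i, ∃ z : ℤ, ((z : ℤ) : ℚ) = (minpoly ℚ τ).coeff i := by
    intro i
    set c := (minpoly ℚ τ).coeff i with hc
    suffices hd : c.den = 1 from ⟨c.num, (Rat.den_eq_one_iff c).1 hd⟩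
    by_contra hd
    obtain ⟨p, hp, hpd⟩ := Nat.exists_prime_and_dvd hd
    have : Fact p.Prime := ⟨hp⟩
    have hs : ((minpoly ℚ τ).map (algebraMap ℚ (PadicAlgCl p))) =
        (((minpoly ℚ τ).aroots (PadicAlgCl p)).map fun μ => X - C μ).prod := by
      refine (IsAlgClosed.splits _).eq_prod_roots_of_monic ((minpoly.monic hτ).map _)
    have h1 := norm_coeff_prod_le ((minpoly ℚ τ).aroots (PadicAlgCl p)) (fun μ hμ => by
      obtain ⟨σ, hσ⟩ := exists_embedding_of_isAlgebraic (aleph0_lt_padicAlgCl p) hτ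
        (mem_aroots.1 hμ).2
      rw [← hσ]
      exact h p σ) i
    rw [← hs, coeff_map, ← hc] at h1
    have h2 : algebraMap ℚ (PadicAlgCl p) c = algebraMap ℚ_[p] (PadicAlgCl p) (c : ℚ_[p]) := by
      simp
    rw [h2, norm_algebraMap'] at h1
    have h3 : (c : ℚ_[p]) * (c.den : ℚ_[p]) = (c.num : ℚ_[p]) := by
      exact_mod_cast Rat.mul_den_eq_num c
    have h4 : ‖(c.num : ℚ_[p])‖ < 1 := by
      rw [← h3, norm_mul]
      have h5 : ‖((c.den : ℤ) : ℚ_[p])‖ < 1 :=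
        Padic.norm_intCast_lt_one_iff.2 (by exact_mod_cast hpd)
      push_cast at h5
      exact mul_lt_one_of_nonneg_of_lt_one_right h1 (norm_nonneg _) h5
    have h6 : p ∣ c.num.natAbs := Int.natCast_dvd.1 (Padic.norm_intCast_lt_one_iff.1 h4)
    exact hp.one_lt.ne' (Nat.dvd_one.1 (c.reduced ▸ Nat.dvd_gcd h6 hpd))
  obtain ⟨q, hq, -, hqm⟩ := lifts_and_natDegree_eq_and_monic
    ((lifts_iff_coeff_lifts (f := Int.castRingHom ℚ) (minpoly ℚ τ)).2 (fun i => hc i))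
    (minpoly.monic hτ)
  refine ⟨q, hqm, ?_⟩
  have := minpoly.aeval ℚ τ
  rw [← hq, aeval_def, eval₂_map] at this
  rw [← this]
  exact congrArg (fun f => eval₂ f τ q) (RingHom.ext_int _ _)

/-- If the algebraic numbers in a countable field `k` form a number field, the elements of `k`
that are bounded by `B` under all embeddings into `ℂ`, and by `1` under all embeddings into the
fields `PadicAlgCl p`, form a finite set. Such an element is algebraic, because a transcendental
one could be sent to any transcendental complex number; it is an algebraic integer, and there are
finitely many of those with conjugates of bounded absolute value. -/
lemma finite_bounded [FiniteDimensional ℚ (algebraicClosure ℚ k)] (B : ℝ) :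
    {τ : k | (∀ σ : k →+* ℂ, ‖σ τ‖ ≤ B) ∧
      ∀ (p : ℕ) [Fact p.Prime] (σ : k →+* PadicAlgCl p), ‖σ τ‖ ≤ 1}.Finite := by
  have : NumberField (algebraicClosure ℚ k) := {}
  refine ((NumberField.Embeddings.finite_of_norm_le (algebraicClosure ℚ k) ℂ B).image
    (algebraMap _ k)).subset ?_
  rintro τ ⟨h1, h2⟩
  have halg : IsAlgebraic ℚ τ := by
    by_contra htr
    obtain ⟨μ, hμ, hB⟩ := exists_transcendental_norm_gt B
    obtain ⟨σ, rfl⟩ := exists_embedding_of_transcendental aleph0_lt_complex htr hμ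
    exact absurd (h1 σ) (not_le.2 hB)
  have hmem : τ ∈ algebraicClosure ℚ k := mem_algebraicClosure_iff.2 halg
  have hIntegral := isIntegral_of_bounded halg.isIntegral h2
  refine ⟨⟨τ, hmem⟩, ⟨?_, fun φ => ?_⟩, rfl⟩
  · exact (isIntegral_algebraMap_iff (algebraMap (algebraicClosure ℚ k) k).injective).1 hIntegral
  · have : Countable (algebraicClosure ℚ k) := Subtype.countable
    obtain ⟨σ, hσ⟩ := exists_extension_embedding (k := k) aleph0_lt_complex φ
    rw [← hσ]
    exact h1 σ
end Bounded

section Trace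
open Matrix
variable {L : Type*} [NormedField L] [IsAlgClosed L] {n : ℕ}

lemma norm_trace_le (M : Matrix (Fin n) (Fin n) L) (h : ∀ μ ∈ M.charpoly.roots, ‖μ‖ ≤ 1) :
    ‖M.trace‖ ≤ n := by
  rw [Matrix.trace_eq_sum_roots_charpoly]
  have hcard : M.charpoly.roots.card ≤ n := by
    simpa using M.charpoly.card_roots'
  have : ∀ s : Multiset L, (∀ μ ∈ s, ‖μ‖ ≤ 1) → ‖s.sum‖ ≤ s.card := by
    intro s
    induction s using Multiset.induction_on with
    | empty => simp
    | cons a s ih =>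
      intro hs
      have h1 := ih (fun μ hμ => hs μ (Multiset.mem_cons_of_mem hμ))
      have h2 := hs a (Multiset.mem_cons_self a s)
      rw [Multiset.sum_cons, Multiset.card_cons]
      push_cast
      linarith [norm_add_le a s.sum]
  exact (this _ h).trans (by exact_mod_cast hcard)

lemma norm_trace_le_one [IsUltrametricDist L] (M : Matrix (Fin n) (Fin n) L)
    (h : ∀ μ ∈ M.charpoly.roots, ‖μ‖ ≤ 1) : ‖M.trace‖ ≤ 1 := by
  rw [Matrix.trace_eq_sum_roots_charpoly]
  have : ∀ s : Multiset L, (∀ μ ∈ s, ‖μ‖ ≤ 1) → ‖s.sum‖ ≤ 1 := by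
    intro s
    induction s using Multiset.induction_on with
    | empty => simp
    | cons a s ih =>
      intro hs
      have h1 := ih (fun μ hμ => hs μ (Multiset.mem_cons_of_mem hμ))
      have h2 := hs a (Multiset.mem_cons_self a s)
      rw [Multiset.sum_cons]
      exact (IsUltrametricDist.norm_add_le_max _ _).trans (max_le h2 h1)
  exact this _ h
end Trace
end TitsAlternative

/-! ### Ping-pong -/

namespace TitsAlternative
open Matrix Topology

/-- **Ping-pong.** Each of the four letters `γ i ^ ±1` sends the base point `x₀` into its own
set `U`, and sends into it every set `U` but that of the inverse letter. -/
theorem injective_of_ping_pong {H L : Type*} [Group H] [CommRing L] {d : ℕ}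
    (π : H →* Matrix (Fin d) (Fin d) L) (γ : Fin 2 → H) (U : Fin 2 × Bool → Set (Fin d → L))
    (x₀ : Fin d → L) (hx : ∀ l, x₀ ∉ U l)
    (h0 : ∀ l : Fin 2 × Bool, π (cond l.2 (γ l.1) (γ l.1)⁻¹) *ᵥ x₀ ∈ U l)
    (hU : ∀ l l' : Fin 2 × Bool, (l.1 = l'.1 → l.2 = l'.2) → ∀ w ∈ U l',
      π (cond l.2 (γ l.1) (γ l.1)⁻¹) *ᵥ w ∈ U l) :
    Function.Injective (FreeGroup.lift γ) := by
  have key : ∀ (w : List (Fin 2 × Bool)) (l : Fin 2 × Bool), FreeGroup.IsReduced (l :: w) →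
      π (((l :: w).map fun x => cond x.2 (γ x.1) (γ x.1)⁻¹).prod) *ᵥ x₀ ∈ U l := by
    intro w
    induction w with
    | nil => intro l _; simpa using h0 l
    | cons l' w ih =>
      intro l hl
      rw [FreeGroup.isReduced_cons_cons] at hl
      have := hU l l' hl.1 _ (ih l' hl.2)
      rw [List.map_cons, List.prod_cons, map_mul, ← Matrix.mulVec_mulVec]
      exact this
  rw [injective_iff_map_eq_one]
  intro a ha
  by_contra hne
  have hred : FreeGroup.IsReduced a.toWord := FreeGroup.isReduced_toWord
  rw [← FreeGroup.mk_toWord (x := a), FreeGroup.lift_mk] at ha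
  cases hw : a.toWord with
  | nil => exact hne (FreeGroup.toWord_eq_nil_iff.1 hw)
  | cons l w =>
    rw [hw] at hred ha
    have := key w l hred
    rw [ha, map_one, Matrix.one_mulVec] at this
    exact hx l this

end TitsAlternative

/-! ### Free groups from proximal elements -/

namespace TitsAlternative
open Matrix Topology Filter

theorem eventually_forall_ball {E : Type*} [NormedAddCommGroup E] {a : E} {P : E → Prop}
    (h : ∀ᶠ w in 𝓝 a, P w) : ∀ᶠ ε in 𝓝[>] (0 : ℝ), ∀ w, ‖w - a‖ < ε → P w := by
  obtain ⟨r, hr, h⟩ := Metric.eventually_nhds_iff.1 h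
  filter_upwards [Ioo_mem_nhdsGT hr] with ε hε w hw
  exact h (by rw [dist_eq_norm]; exact hw.trans hε.2)

theorem norm_mulVec_le {L : Type*} [NormedField L] {d : ℕ} (N : Matrix (Fin d) (Fin d) L)
    (w : Fin d → L) : ‖N *ᵥ w‖ ≤ (∑ i, ∑ j, ‖N i j‖) * ‖w‖ := by
  rw [pi_norm_le_iff_of_nonneg (by positivity)]
  intro i
  calc ‖(N *ᵥ w) i‖ ≤ ∑ j, ‖N i j * w j‖ :=
        norm_sum_le Finset.univ fun j => N i j * w j
    _ ≤ ∑ j, ‖N i j‖ * ‖w‖ := by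
        refine Finset.sum_le_sum fun j _ => ?_
        rw [norm_mul]
        exact mul_le_mul_of_nonneg_left (norm_le_pi_norm w j) (norm_nonneg _)
    _ = (∑ j, ‖N i j‖) * ‖w‖ := by rw [Finset.sum_mul]
    _ ≤ _ := by
        refine mul_le_mul_of_nonneg_right ?_ (norm_nonneg _)
        exact Finset.single_le_sum (f := fun i => ∑ j, ‖N i j‖)
          (fun i _ => Finset.sum_nonneg fun j _ => norm_nonneg _) (Finset.mem_univ i)

/-- Matrices close to the rank one matrix `a ⊗ f` map a ball on which `f` is bounded away
from `0` into a projective neighbourhood of `a`. -/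
theorem eventually_maps_ball {L ι : Type*} [NormedField L] {d : ℕ} {l : Filter ι}
    {M : ι → Matrix (Fin d) (Fin d) L} {a f b : Fin d → L}
    (hM : Tendsto M l (𝓝 (vecMulVec a f))) {ε η : ℝ} (hε : 0 < ε) (hη : 0 < η)
    (hf : ∀ w, ‖w - b‖ < ε → η ≤ ‖f ⬝ᵥ w‖) :
    ∀ᶠ m in l, ∀ w, ‖w - b‖ < ε → ‖(f ⬝ᵥ w)⁻¹ • (M m *ᵥ w) - a‖ < ε := by
  have hcont : Continuous fun N : Matrix (Fin d) (Fin d) L =>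
      ∑ i, ∑ j, ‖(N - vecMulVec a f) i j‖ := by
    refine continuous_finsetSum _ fun i _ => continuous_finsetSum _ fun j _ => ?_
    exact ((continuous_id.sub continuous_const).matrix_elem i j).norm
  have ht := (hcont.tendsto _).comp hM
  simp only [sub_self, Matrix.zero_apply, norm_zero, Finset.sum_const_zero] at ht
  have hpos : 0 < ε * η / (‖b‖ + ε) := by positivity
  filter_upwards [ht.eventually_lt_const hpos] with m hm w hw
  have h1 := hf w hw
  have hne : f ⬝ᵥ w ≠ 0 := fun h => by rw [h, norm_zero] at h1; linarith
  have hw2 : ‖w‖ ≤ ‖b‖ + ε := by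
    have := norm_add_le b (w - b)
    rw [add_sub_cancel] at this
    linarith
  have e : (f ⬝ᵥ w)⁻¹ • (M m *ᵥ w) - a = (f ⬝ᵥ w)⁻¹ • ((M m - vecMulVec a f) *ᵥ w) := by
    have : vecMulVec a f *ᵥ w = (f ⬝ᵥ w) • a := by
      ext i
      simp only [Matrix.mulVec, vecMulVec_apply, dotProduct, Finset.sum_mul, Pi.smul_apply,
        smul_eq_mul]
      exact Finset.sum_congr rfl fun j _ => by ring
    rw [Matrix.sub_mulVec, this, smul_sub, inv_smul_smul₀ hne]
  rw [e, norm_smul, norm_inv, inv_mul_lt_iff₀ (hη.trans_le h1)]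
  simp only [Function.comp_apply] at hm
  rw [lt_div_iff₀ (by positivity)] at hm
  calc _ ≤ _ := norm_mulVec_le _ w
    _ ≤ (∑ i, ∑ j, ‖(M m - vecMulVec a f) i j‖) * (‖b‖ + ε) :=
        mul_le_mul_of_nonneg_left hw2
          (Finset.sum_nonneg fun i _ => Finset.sum_nonneg fun j _ => norm_nonneg _)
    _ < ε * η := hm
    _ ≤ ‖f ⬝ᵥ w‖ * ε := by nlinarith

/-- If the four letters `γ m i ^ ±1`, suitably rescaled, tend to rank one matrices `a ⊗ f` in
general position, then for some `m` they play ping-pong. -/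
theorem exists_free_of_tendsto {H L ι : Type*} [Group H] [NormedField L] {d : ℕ}
    (π : H →* Matrix (Fin d) (Fin d) L) {l : Filter ι} [l.NeBot] (γ : ι → Fin 2 → H)
    (s : ι → Fin 2 × Bool → L) (hs : ∀ m l, s m l ≠ 0) (a f η : Fin 2 × Bool → Fin d → L)
    (x₀ : Fin d → L)
    (hlim : ∀ p : Fin 2 × Bool,
      Tendsto (fun m => s m p • π (cond p.2 (γ m p.1) (γ m p.1)⁻¹)) l (𝓝 (vecMulVec (a p) (f p))))
    (hf : ∀ p p' : Fin 2 × Bool, (p.1 = p'.1 → p.2 = p'.2) → f p ⬝ᵥ a p' ≠ 0)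
    (hf0 : ∀ p, f p ⬝ᵥ x₀ ≠ 0) (hη : ∀ p, η p ⬝ᵥ a p = 0) (hη0 : ∀ p, η p ⬝ᵥ x₀ ≠ 0) :
    ∃ ψ : FreeGroup (Fin 2) →* H, Function.Injective ψ := by
  have cdot : ∀ v : Fin d → L, Continuous fun w : Fin d → L => v ⬝ᵥ w := fun v =>
    continuous_const.dotProduct continuous_id
  have low : ∀ v b : Fin d → L, v ⬝ᵥ b ≠ 0 →
      ∀ᶠ ε in 𝓝[>] (0 : ℝ), ∀ w, ‖w - b‖ < ε → ‖v ⬝ᵥ b‖ / 2 ≤ ‖v ⬝ᵥ w‖ := by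
    intro v b hv
    refine eventually_forall_ball ?_
    have : ‖v ⬝ᵥ b‖ / 2 < ‖v ⬝ᵥ b‖ := half_lt_self (norm_pos_iff.2 hv)
    exact (((cdot v).norm.tendsto b).eventually_const_lt this).mono fun _ h => h.le
  have ha : ∀ p, a p ≠ 0 := fun p h => hf p p (fun _ => rfl) (by rw [h, dotProduct_zero])
  -- on a small ball around `a p` the functional `η p` separates the line of `w` from that of `x₀`
  have far : ∀ p, ∀ᶠ ε in 𝓝[>] (0 : ℝ), ∀ w, ‖w - a p‖ < ε →
      (η p ⬝ᵥ x₀) • w - (η p ⬝ᵥ w) • x₀ ≠ 0 := by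
    intro p
    refine eventually_forall_ball ?_
    have hc : Continuous fun w : Fin d → L => (η p ⬝ᵥ x₀) • w - (η p ⬝ᵥ w) • x₀ := by
      have := cdot (η p)
      fun_prop
    refine (hc.tendsto (a p)).eventually_ne ?_
    rw [hη, zero_smul, sub_zero]
    exact smul_ne_zero (hη0 p) (ha p)
  have E1 : ∀ᶠ ε in 𝓝[>] (0 : ℝ), ∀ p p' : Fin 2 × Bool, (p.1 = p'.1 → p.2 = p'.2) →
      ∀ w, ‖w - a p'‖ < ε → ‖f p ⬝ᵥ a p'‖ / 2 ≤ ‖f p ⬝ᵥ w‖ := by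
    simp only [eventually_all]
    exact fun p p' h => low _ _ (hf p p' h)
  have E2 : ∀ᶠ ε in 𝓝[>] (0 : ℝ), ∀ p : Fin 2 × Bool,
      ∀ w, ‖w - x₀‖ < ε → ‖f p ⬝ᵥ x₀‖ / 2 ≤ ‖f p ⬝ᵥ w‖ := by
    rw [eventually_all]
    exact fun p => low _ _ (hf0 p)
  obtain ⟨ε, h1, h2, h3, hε⟩ :=
    (E1.and (E2.and ((eventually_all.2 far).and self_mem_nhdsWithin))).exists
  have hε : 0 < ε := hε
  have M1 : ∀ᶠ m in l, ∀ p p' : Fin 2 × Bool, (p.1 = p'.1 → p.2 = p'.2) →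
      ∀ w, ‖w - a p'‖ < ε →
        ‖(f p ⬝ᵥ w)⁻¹ • ((s m p • π (cond p.2 (γ m p.1) (γ m p.1)⁻¹)) *ᵥ w) - a p‖ < ε := by
    simp only [eventually_all]
    exact fun p p' h => eventually_maps_ball (hlim p) hε
      (half_pos (norm_pos_iff.2 (hf p p' h))) (h1 p p' h)
  have M2 : ∀ᶠ m in l, ∀ p : Fin 2 × Bool, ∀ w, ‖w - x₀‖ < ε →
        ‖(f p ⬝ᵥ w)⁻¹ • ((s m p • π (cond p.2 (γ m p.1) (γ m p.1)⁻¹)) *ᵥ w) - a p‖ < ε := by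
    rw [eventually_all]
    exact fun p => eventually_maps_ball (hlim p) hε
      (half_pos (norm_pos_iff.2 (hf0 p))) (h2 p)
  obtain ⟨m, m1, m2⟩ := (M1.and M2).exists
  refine ⟨FreeGroup.lift (γ m), injective_of_ping_pong π (γ m)
    (fun p => {w | ∃ κ : L, κ ≠ 0 ∧ ‖κ • w - a p‖ < ε}) x₀ ?_ ?_ ?_⟩
  · rintro p ⟨κ, -, h⟩
    refine h3 p _ h ?_
    rw [dotProduct_smul, smul_smul, smul_eq_mul, mul_comm, sub_self]
  · intro p
    refine ⟨(f p ⬝ᵥ x₀)⁻¹ * s m p, mul_ne_zero (inv_ne_zero (hf0 p)) (hs m p), ?_⟩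
    have := m2 p x₀ (by simpa using hε)
    rwa [Matrix.smul_mulVec, smul_smul] at this
  · rintro p p' hpp w ⟨κ, hκ, hw⟩
    have hne : f p ⬝ᵥ (κ • w) ≠ 0 := fun h => by
      have := h1 p p' hpp _ hw
      rw [h, norm_zero] at this
      have := norm_pos_iff.2 (hf p p' hpp)
      linarith
    refine ⟨(f p ⬝ᵥ (κ • w))⁻¹ * s m p * κ, mul_ne_zero (mul_ne_zero (inv_ne_zero hne) (hs m p)) hκ,
      ?_⟩
    have := m1 p p' hpp _ hw
    rwa [Matrix.smul_mulVec, Matrix.mulVec_smul, smul_smul, smul_smul] at this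

/-- Every finite subset lies in a subfield with compact unit ball. This holds for `ℂ` and for
the algebraic closure of `ℚ_p`, and replaces local compactness for the latter. -/
def LocallyProper (L : Type*) [NormedField L] : Prop :=
  ∀ S : Set L, S.Finite → ∃ E : Subfield L, S ⊆ E ∧ IsCompact {x | x ∈ E ∧ ‖x‖ ≤ 1}

/-- Along an ultrafilter, the powers of `A`, rescaled by an entry of largest norm, converge to a
nonzero matrix. -/
theorem exists_tendsto_pow {L : Type*} [NormedField L] (hL : LocallyProper L) {d : ℕ}
    (A : Matrix (Fin d) (Fin d) L) (hA : ∀ m, A ^ m ≠ 0) :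
    ∃ (s : ℕ → L) (Q : Matrix (Fin d) (Fin d) L), (∀ m, s m ≠ 0) ∧ Q ≠ 0 ∧
      Tendsto (fun m => s m • A ^ m) (hyperfilter ℕ) (𝓝 Q) := by
  obtain ⟨E, hE, hc⟩ := hL (Set.range fun p : Fin d × Fin d => A p.1 p.2) (Set.finite_range _)
  have hmem : ∀ m i j, (A ^ m) i j ∈ E := by
    intro m
    induction m with
    | zero =>
      intro i j
      rw [pow_zero, Matrix.one_apply]
      split_ifs
      exacts [E.one_mem, E.zero_mem]
    | succ m ih =>
      intro i j
      rw [pow_succ, Matrix.mul_apply]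
      exact E.sum_mem fun x _ => E.mul_mem (ih i x) (hE ⟨(x, j), rfl⟩)
  have hmax : ∀ m, ∃ p : Fin d × Fin d, (A ^ m) p.1 p.2 ≠ 0 ∧
      ∀ i j, ‖(A ^ m) i j‖ ≤ ‖(A ^ m) p.1 p.2‖ := by
    intro m
    have : ∃ i j, (A ^ m) i j ≠ 0 := by
      by_contra! h
      exact hA m (Matrix.ext h)
    obtain ⟨i, j, hij⟩ := this
    obtain ⟨p, -, hp⟩ := Finset.exists_max_image (Finset.univ : Finset (Fin d × Fin d))
      (fun p => ‖(A ^ m) p.1 p.2‖) ⟨(i, j), Finset.mem_univ _⟩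
    refine ⟨p, fun h => ?_, fun i j => hp (i, j) (Finset.mem_univ _)⟩
    have := hp (i, j) (Finset.mem_univ _)
    rw [h, norm_zero, norm_le_zero_iff] at this
    exact hij this
  choose p hp0 hp using hmax
  let s : ℕ → L := fun m => ((A ^ m) (p m).1 (p m).2)⁻¹
  let K : Set (Matrix (Fin d) (Fin d) L) :=
    Set.univ.pi fun _ => Set.univ.pi fun _ => {x | x ∈ E ∧ ‖x‖ ≤ 1}
  have hK : IsCompact K := isCompact_univ_pi fun _ => isCompact_univ_pi fun _ => hc
  have hsK : ∀ m, s m • A ^ m ∈ K := by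
    intro m i _ j _
    refine ⟨E.mul_mem (E.inv_mem (hmem _ _ _)) (hmem _ _ _), ?_⟩
    change ‖s m * (A ^ m) i j‖ ≤ 1
    rw [norm_mul, norm_inv, inv_mul_le_iff₀ (norm_pos_iff.2 (hp0 m)), mul_one]
    exact hp m i j
  obtain ⟨Q, -, hQ⟩ := hK.ultrafilter_le_nhds ((hyperfilter ℕ).map fun m => s m • A ^ m) (by
    rw [Ultrafilter.coe_map, le_principal_iff]
    exact Filter.mem_map.2 (Filter.univ_mem' hsK))
  have hQ : Tendsto (fun m => s m • A ^ m) (hyperfilter ℕ) (𝓝 Q) := hQ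
  refine ⟨s, Q, fun m => inv_ne_zero (hp0 m), ?_, hQ⟩
  rintro rfl
  have hcont : Continuous fun N : Matrix (Fin d) (Fin d) L => ∑ i, ∑ j, ‖N i j‖ :=
    continuous_finsetSum _ fun i _ => continuous_finsetSum _ fun j _ =>
      (continuous_id.matrix_elem i j).norm
  have h1 : (1 : ℝ) ≤ ∑ i : Fin d, ∑ j : Fin d, ‖(0 : Matrix (Fin d) (Fin d) L) i j‖ := by
    refine ge_of_tendsto ((hcont.tendsto _).comp hQ) (Eventually.of_forall fun m => ?_)
    have e : ‖(s m • A ^ m) (p m).1 (p m).2‖ = 1 := by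
      change ‖s m * _‖ = 1
      rw [inv_mul_cancel₀ (hp0 m), norm_one]
    rw [← e]
    calc _ ≤ ∑ j, ‖(s m • A ^ m) (p m).1 j‖ :=
          Finset.single_le_sum (f := fun j => ‖(s m • A ^ m) (p m).1 j‖)
            (fun j _ => norm_nonneg _) (Finset.mem_univ _)
      _ ≤ _ := Finset.single_le_sum (f := fun i => ∑ j, ‖(s m • A ^ m) i j‖)
            (fun i _ => Finset.sum_nonneg fun j _ => norm_nonneg _) (Finset.mem_univ _)
  simp at h1
  linarith

theorem exists_dotProduct_eq_zero {L : Type*} [Field L] {d : ℕ} (hd : 2 ≤ d) (a : Fin d → L) :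
    ∃ η : Fin d → L, η ≠ 0 ∧ η ⬝ᵥ a = 0 := by
  let i : Fin d := ⟨0, by lia⟩
  let j : Fin d := ⟨1, by lia⟩
  have hij : i ≠ j := by simp [i, j, Fin.ext_iff]
  by_cases h : a i = 0
  · exact ⟨Pi.single i 1, by simp, by simp [h]⟩
  · refine ⟨Pi.single j (a i) - Pi.single i (a j), fun h0 => h ?_, ?_⟩
    · simpa [hij.symm, hij] using congrFun h0 j
    · rw [sub_dotProduct, single_dotProduct, single_dotProduct, mul_comm, sub_self]

/-- A representation of a group in which general position can be achieved (`gen`), and in which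
the normalised powers of some `g` tend to a rank one matrix, has a free subgroup. The elements
`g ^ m * h * g⁻¹ ^ m` and their inverses are close to rank one matrices, projectively; a
translate by `t` is proximal together with its inverse, and it plays ping-pong with one of its
conjugates. -/
theorem exists_free_of_proximal {H L : Type*} [Group H] [NormedField L] (hL : LocallyProper L)
    {d : ℕ} (hd : 2 ≤ d) (π : H →* Matrix (Fin d) (Fin d) L)
    (gen : ∀ S : List ((Fin d → L) × (Fin d → L)), (∀ p ∈ S, p.1 ≠ 0 ∧ p.2 ≠ 0) →
      ∃ u : H, ∀ p ∈ S, p.1 ⬝ᵥ (π u *ᵥ p.2) ≠ 0 ∧ p.1 ⬝ᵥ (π u⁻¹ *ᵥ p.2) ≠ 0)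
    (g : H) (δ : L) (hδ : δ ≠ 0) (c φ : Fin d → L) (hc : c ≠ 0) (hφ : φ ≠ 0)
    (hlim : Tendsto (fun m : ℕ => (δ ^ m)⁻¹ • π (g ^ m)) atTop (𝓝 (vecMulVec c φ))) :
    ∃ ψ : FreeGroup (Fin 2) →* H, Function.Injective ψ := by
  have hpow : ∀ m, π g⁻¹ ^ m ≠ 0 := by
    intro m h
    rw [← map_pow] at h
    have : π (g ^ m) * π (g⁻¹ ^ m) = 1 := by rw [← map_mul]; simp
    rw [h, mul_zero] at this
    exact hc (by rw [← Matrix.one_mulVec c, ← this, Matrix.zero_mulVec])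
  obtain ⟨s, Q, hs, hQ0, hQ⟩ := exists_tendsto_pow hL (π g⁻¹) hpow
  have hlim' := hlim.mono_left Nat.hyperfilter_le_atTop
  obtain ⟨j, hj⟩ : ∃ j, (fun i => Q i j) ≠ 0 := by
    by_contra! h
    exact hQ0 (Matrix.ext fun i j => congrFun (h j) i)
  obtain ⟨h, hh⟩ := gen [(φ, fun i => Q i j)] (by simpa using ⟨hφ, hj⟩)
  simp only [List.mem_singleton, forall_eq] at hh
  have hψ : ∀ k : H, φ ⬝ᵥ (π k *ᵥ fun i => Q i j) ≠ 0 → φ ᵥ* (π k * Q) ≠ 0 := by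
    intro k hk h0
    exact hk (congrFun h0 j)
  let k : Bool → H := fun b => cond b h h⁻¹
  let ψ : Bool → Fin d → L := fun b => φ ᵥ* (π (k b) * Q)
  have hψ0 : ∀ b, ψ b ≠ 0 := by
    rintro (_ | _)
    exacts [hψ _ hh.2, hψ _ hh.1]
  obtain ⟨t, ht⟩ := gen [(ψ true, c), (ψ false, c)] (by simp [hψ0, hc])
  simp only [List.forall_mem_cons, List.not_mem_nil, IsEmpty.forall_iff, implies_true,
    and_true] at ht
  let x : ℕ → H := fun m => g ^ m * h * g⁻¹ ^ m
  -- attracting points and repelling functionals of `t * x m` and of its inverse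
  let a₀ : Bool → Fin d → L := fun b => cond b (π t *ᵥ c) c
  let f₀ : Bool → Fin d → L := fun b => cond b (ψ true) (ψ false ᵥ* π t⁻¹)
  have hfa : ∀ b, f₀ b ⬝ᵥ a₀ b ≠ 0 := by
    rintro (_ | _)
    · change (ψ false ᵥ* π t⁻¹) ⬝ᵥ c ≠ 0
      rw [← dotProduct_mulVec]
      exact ht.2.2
    · exact ht.1.1
  have hf₀ : ∀ b, f₀ b ≠ 0 := fun b h => hfa b (by rw [h, zero_dotProduct])
  have ha₀ : ∀ b, a₀ b ≠ 0 := fun b h => hfa b (by rw [h, dotProduct_zero])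
  have hx : ∀ b, Tendsto (fun m => ((δ ^ m)⁻¹ * s m) • π (g ^ m * k b * g⁻¹ ^ m))
      (hyperfilter ℕ) (𝓝 (vecMulVec c (ψ b))) := by
    intro b
    have := (hlim'.mul (tendsto_const_nhds (x := π (k b)))).mul hQ
    rw [vecMulVec_mul, vecMulVec_mul, Matrix.vecMul_vecMul] at this
    refine this.congr fun m => ?_
    rw [map_mul, map_mul, map_pow π g⁻¹, Matrix.smul_mul, Matrix.smul_mul, Matrix.mul_smul,
      smul_smul]
  have hy : ∀ b, Tendsto (fun m => ((δ ^ m)⁻¹ * s m) • π (cond b (t * x m) (t * x m)⁻¹))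
      (hyperfilter ℕ) (𝓝 (vecMulVec (a₀ b) (f₀ b))) := by
    rintro (_ | _)
    · have := (hx false).mul (tendsto_const_nhds (x := π t⁻¹))
      rw [vecMulVec_mul] at this
      refine this.congr fun m => ?_
      have e : (t * x m)⁻¹ = g ^ m * h⁻¹ * g⁻¹ ^ m * t⁻¹ := by simp [x, mul_assoc]
      rw [cond_false, e, map_mul π _ t⁻¹, Matrix.smul_mul]
      rfl
    · have := (tendsto_const_nhds (x := π t)).mul (hx true)
      rw [mul_vecMulVec] at this
      refine this.congr fun m => ?_
      rw [cond_true, map_mul π t, Matrix.mul_smul]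
      rfl
  -- the second generator is the conjugate of `t * x m` by `u`
  obtain ⟨u, hu⟩ := gen [(f₀ true, a₀ true), (f₀ true, a₀ false), (f₀ false, a₀ true),
    (f₀ false, a₀ false)] (by simp [hf₀, ha₀])
  have hu' : ∀ b b', f₀ b ⬝ᵥ (π u *ᵥ a₀ b') ≠ 0 ∧ f₀ b ⬝ᵥ (π u⁻¹ *ᵥ a₀ b') ≠ 0 := by
    intro b b'
    exact hu (f₀ b, a₀ b') (by cases b <;> cases b' <;> simp)
  let v : Fin 2 → H := ![1, u]
  let a : Fin 2 × Bool → Fin d → L := fun p => π (v p.1) *ᵥ a₀ p.2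
  let f : Fin 2 × Bool → Fin d → L := fun p => f₀ p.2 ᵥ* π (v p.1)⁻¹
  have hfa' : ∀ p p' : Fin 2 × Bool, (p.1 = p'.1 → p.2 = p'.2) → f p ⬝ᵥ a p' ≠ 0 := by
    rintro ⟨i, b⟩ ⟨i', b'⟩ hp
    have e : f (i, b) ⬝ᵥ a (i', b') = f₀ b ⬝ᵥ (π ((v i)⁻¹ * v i') *ᵥ a₀ b') := by
      rw [map_mul, ← Matrix.mulVec_mulVec, dotProduct_mulVec (f₀ b)]
    rw [e]
    by_cases hi : i = i'
    · have hb : b = b' := hp hi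
      rw [hi, hb, inv_mul_cancel, map_one, Matrix.one_mulVec]
      exact hfa b'
    · fin_cases i <;> fin_cases i'
      · simp at hi
      · simpa [v] using (hu' b b').1
      · simpa [v] using (hu' b b').2
      · simp at hi
  have hf : ∀ p, f p ≠ 0 := fun p h => hfa' p p (fun _ => rfl) (by rw [h, zero_dotProduct])
  choose η hη0 hη using fun p => exists_dotProduct_eq_zero hd (a p)
  obtain ⟨r, hr⟩ := gen ((Finset.univ : Finset (Fin 2 × Bool)).toList.map (fun p => (f p, c)) ++
    (Finset.univ : Finset (Fin 2 × Bool)).toList.map (fun p => (η p, c))) (by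
      simp only [List.mem_append, List.mem_map]
      rintro _ (⟨p, -, rfl⟩ | ⟨p, -, rfl⟩)
      exacts [⟨hf p, hc⟩, ⟨hη0 p, hc⟩])
  refine exists_free_of_tendsto π (l := (hyperfilter ℕ : Filter ℕ))
    (fun m i => v i * (t * x m) * (v i)⁻¹)
    (fun m _ => (δ ^ m)⁻¹ * s m) (fun m _ => mul_ne_zero (inv_ne_zero (pow_ne_zero _ hδ)) (hs m))
    a f η (π r *ᵥ c) ?_ hfa' (fun p => (hr (f p, c) (by simp)).1) hη
    (fun p => (hr (η p, c) (by simp)).1)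
  rintro ⟨i, b⟩
  have := ((tendsto_const_nhds (x := π (v i))).mul (hy b)).mul
    (tendsto_const_nhds (x := π (v i)⁻¹))
  rw [mul_vecMulVec, vecMulVec_mul] at this
  refine this.congr fun m => ?_
  have e : cond b (v i * (t * x m) * (v i)⁻¹) (v i * (t * x m) * (v i)⁻¹)⁻¹ =
      v i * cond b (t * x m) (t * x m)⁻¹ * (v i)⁻¹ := by
    cases b <;> simp [mul_assoc]
  change _ = _ • π (cond b (v i * (t * x m) * (v i)⁻¹) (v i * (t * x m) * (v i)⁻¹)⁻¹)
  rw [e, map_mul, map_mul, Matrix.mul_smul, Matrix.smul_mul]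

end TitsAlternative

/-! ### Properness of `ℂ` and of the algebraic closure of `ℚ_p` -/

namespace TitsAlternative
open Matrix Topology Filter

theorem locallyProper_complex : LocallyProper ℂ := by
  refine fun S _ => ⟨⊤, fun _ _ => trivial, ?_⟩
  convert isCompact_closedBall (0 : ℂ) 1 using 1
  ext x
  simp

theorem locallyProper_padicAlgCl (p : ℕ) [Fact p.Prime] : LocallyProper (PadicAlgCl p) := by
  intro S hS
  have := hS.to_subtype
  let E := IntermediateField.adjoin ℚ_[p] S
  have : FiniteDimensional ℚ_[p] E := IntermediateField.finiteDimensional_adjoin fun x _ =>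
    (Algebra.IsAlgebraic.isAlgebraic x).isIntegral
  have : FiniteDimensional ℚ_[p] (Subalgebra.toSubmodule E.toSubalgebra) := this
  have : ProperSpace (Subalgebra.toSubmodule E.toSubalgebra) := FiniteDimensional.proper ℚ_[p] _
  refine ⟨E.toSubfield, IntermediateField.subset_adjoin _ _, ?_⟩
  convert (isCompact_closedBall (0 : Subalgebra.toSubmodule E.toSubalgebra) 1).image
    continuous_subtype_val using 1
  ext x
  constructor
  · rintro ⟨hx, h⟩
    exact ⟨⟨x, hx⟩, by simpa using h, rfl⟩
  · rintro ⟨⟨y, hy⟩, h, rfl⟩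
    exact ⟨hy, by simpa using h⟩

end TitsAlternative

/-! ### Dominant eigenvalues and growth -/

namespace TitsAlternative
open Matrix Topology Filter

/-- The vectors whose orbit under `T` grows at most like `r ^ m`. -/
def growth {L V : Type*} [NormedField L] [NormedAddCommGroup V] [NormedSpace L V]
    (T : Module.End L V) (r : ℝ) : Submodule L V where
  carrier := {w | ∃ K : ℝ, ∀ m : ℕ, ‖(T ^ m) w‖ ≤ K * r ^ m}
  zero_mem' := ⟨0, fun m => by simp⟩
  add_mem' := by
    rintro v w ⟨K, hK⟩ ⟨K', hK'⟩
    refine ⟨K + K', fun m => ?_⟩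
    rw [map_add, add_mul]
    exact (norm_add_le _ _).trans (add_le_add (hK m) (hK' m))
  smul_mem' := by
    rintro c w ⟨K, hK⟩
    refine ⟨‖c‖ * K, fun m => ?_⟩
    rw [map_smul, norm_smul, mul_assoc]
    exact mul_le_mul_of_nonneg_left (hK m) (norm_nonneg _)

/-- The radius `r` is strictly larger than `‖μ‖` in order to absorb the polynomial factors coming
from Jordan blocks. -/
theorem maxGenEigenspace_le_growth {L V : Type*} [NormedField L] [NormedAddCommGroup V]
    [NormedSpace L V] (T : Module.End L V) {r : ℝ} {μ : L} (h : ‖μ‖ < r) :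
    T.maxGenEigenspace μ ≤ growth T r := by
  have hr : 0 < r := (norm_nonneg _).trans_lt h
  have key : ∀ (N : ℕ) (w : V), ((T - μ • 1) ^ N) w = 0 → w ∈ growth T r := by
    intro N
    induction N with
    | zero =>
      intro w hw
      have hw : w = 0 := by simpa using hw
      rw [hw]
      exact zero_mem _
    | succ N ih =>
      intro w hw
      obtain ⟨K, hK⟩ := ih ((T - μ • 1) w) (by rwa [pow_succ] at hw)
      have hrec : ∀ m, (T ^ (m + 1)) w = μ • (T ^ m) w + (T ^ m) ((T - μ • 1) w) := by
        intro m
        rw [pow_succ]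
        simp
      let C := max ‖w‖ (K / (r - ‖μ‖))
      have hC : K ≤ C * (r - ‖μ‖) := by
        rw [← div_le_iff₀ (by linarith)]
        exact le_max_right _ _
      refine ⟨C, fun m => ?_⟩
      induction m with
      | zero =>
        rw [pow_zero, pow_zero, mul_one]
        exact le_max_left ‖w‖ (K / (r - ‖μ‖))
      | succ m ihm =>
        rw [hrec]
        calc _ ≤ ‖μ‖ * ‖(T ^ m) w‖ + ‖(T ^ m) ((T - μ • 1) w)‖ := by
              rw [← norm_smul]; exact norm_add_le _ _
          _ ≤ ‖μ‖ * (C * r ^ m) + K * r ^ m :=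
              add_le_add (mul_le_mul_of_nonneg_left ihm (norm_nonneg _)) (hK m)
          _ ≤ ‖μ‖ * (C * r ^ m) + C * (r - ‖μ‖) * r ^ m :=
              add_le_add le_rfl (mul_le_mul_of_nonneg_right hC (by positivity))
          _ = C * r ^ (m + 1) := by ring
  intro w hw
  obtain ⟨N, hN⟩ := (Module.End.mem_maxGenEigenspace T μ w).1 hw
  exact key N w hN

/-- The generalized eigenspaces of `M` for eigenvalues of largest norm, in coordinates: `a * α` is
the projection onto their sum along the other generalized eigenspaces, and `α * M * a` is the
action of `M` there. The radii `R'` and `S` bound the growth of `M` on the whole space and on the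
complement. -/
theorem exists_dominant {L : Type*} [NormedField L] [IsAlgClosed L] {n : ℕ}
    (M : Matrix (Fin n) (Fin n) L) (μ₀ : L) (hμ₀ : μ₀ ∈ M.charpoly.roots) (h1 : 1 < ‖μ₀‖) :
    ∃ (r : ℕ) (α : Matrix (Fin r) (Fin n) L) (a : Matrix (Fin n) (Fin r) L) (R' S : ℝ),
      α * a = 1 ∧ M * (a * α) = a * α * M ∧ 0 < S ∧ 0 < R' ∧ 1 < ‖(α * M * a).det‖ ∧
      S / R' * R' ^ r < ‖(α * M * a).det‖ ∧
      (∀ v, ∃ K : ℝ, ∀ m : ℕ, ‖M ^ m *ᵥ v‖ ≤ K * R' ^ m) ∧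
      ∀ v, ∃ K : ℝ, ∀ m : ℕ, ‖M ^ m *ᵥ (v - (a * α) *ᵥ v)‖ ≤ K * S ^ m := by
  classical
  let T : Module.End L (Fin n → L) := Matrix.toLin' M
  have hroot : ∀ μ, T.HasEigenvalue μ ↔ μ ∈ M.charpoly.roots := by
    intro μ
    rw [Module.End.hasEigenvalue_iff_isRoot_charpoly, Matrix.charpoly_toLin',
      Polynomial.mem_roots (M.charpoly_monic.ne_zero)]
  obtain ⟨μ₁, hμ₁, hmax⟩ := Finset.exists_max_image M.charpoly.roots.toFinset (fun μ => ‖μ‖)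
    ⟨μ₀, by simpa using hμ₀⟩
  rw [Multiset.mem_toFinset] at hμ₁
  have hmax : ∀ μ ∈ M.charpoly.roots, ‖μ‖ ≤ ‖μ₁‖ := fun μ hμ => hmax μ (by simpa using hμ)
  let R := ‖μ₁‖
  have hR : 1 < R := h1.trans_le (hmax _ hμ₀)
  have hbot : ∀ μ, μ ∉ M.charpoly.roots → T.maxGenEigenspace μ = ⊥ := by
    intro μ hμ
    by_contra hne
    have : T.HasUnifEigenvalue μ ⊤ := hne
    exact hμ ((hroot μ).1 (this.lt (by simp)))
  let A : Submodule L (Fin n → L) := ⨆ μ ∈ {μ : L | R ≤ ‖μ‖}, T.maxGenEigenspace μ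
  let B : Submodule L (Fin n → L) := ⨆ μ ∈ {μ : L | ¬ R ≤ ‖μ‖}, T.maxGenEigenspace μ
  have hAB : IsCompl A B := by
    constructor
    · refine T.independent_maxGenEigenspace.disjoint_biSup_biSup ?_
      exact Set.disjoint_left.2 fun μ h h' => h' h
    · rw [codisjoint_iff, ← top_le_iff, ← T.iSup_maxGenEigenspace_eq_top]
      refine iSup_le fun μ => ?_
      by_cases h : R ≤ ‖μ‖
      · exact le_sup_of_le_left (le_biSup (fun μ => T.maxGenEigenspace μ) h)
      · exact le_sup_of_le_right (le_biSup (fun μ => T.maxGenEigenspace μ) h)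
  have hinv : ∀ (s : Set L), (⨆ μ ∈ s, T.maxGenEigenspace μ) ≤
      (⨆ μ ∈ s, T.maxGenEigenspace μ).comap T := by
    intro s
    refine iSup₂_le fun μ hμ v hv => ?_
    exact (le_biSup (fun μ => T.maxGenEigenspace μ) hμ)
      (Module.End.mapsTo_maxGenEigenspace_of_comm (Commute.refl T) μ hv)
  have hA : ∀ v ∈ A, T v ∈ A := hinv _
  have hB : ∀ v ∈ B, T v ∈ B := hinv _
  let P := A.projection B hAB
  have hPT : ∀ v, P (T v) = T (P v) := by
    intro v
    have e : T v = T (P v) + T (v - P v) := by rw [← map_add, add_sub_cancel]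
    have e1 : P (T (P v)) = T (P v) :=
      Submodule.projection_apply_of_mem_left hAB (hA _ (Submodule.projection_apply_mem hAB v))
    have e2 : P (T (v - P v)) = 0 :=
      (Submodule.projection_apply_eq_zero_iff hAB).2 (hB _ (Submodule.sub_projection_mem hAB v))
    rw [e, map_add, e1, e2, add_zero]
  let T' : Module.End L A := T.restrict hA
  -- all eigenvalues of the restriction of `T` to `A` have norm `R`
  have hdet : ‖LinearMap.det T'‖ = R ^ Module.finrank L A := by
    have hsp : T'.charpoly.Splits := IsAlgClosed.splits _
    have hnorm : ∀ μ ∈ T'.charpoly.roots, ‖μ‖ = R := by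
      intro μ hμ
      rw [Polynomial.mem_roots (LinearMap.charpoly_monic _).ne_zero,
        ← Module.End.hasEigenvalue_iff_isRoot_charpoly] at hμ
      obtain ⟨⟨v, hvA⟩, hv⟩ := hμ.exists_hasEigenvector
      have hv0 : v ≠ 0 := fun h => hv.2 (Subtype.ext h)
      have hTv : T v = μ • v := congrArg Subtype.val hv.apply_eq_smul
      have hvec : T.HasEigenvector μ v := ⟨Module.End.mem_eigenspace_iff.2 hTv, hv0⟩
      refine le_antisymm (hmax _ ((hroot μ).1 (Module.End.hasEigenvalue_of_hasEigenvector hvec))) ?_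
      by_contra hlt
      have : v ∈ B := (le_biSup (fun μ => T.maxGenEigenspace μ)
        (show μ ∈ {μ : L | ¬ R ≤ ‖μ‖} from hlt))
        (Module.End.eigenspace_le_maxGenEigenspace hvec.1)
      exact hv0 (Submodule.disjoint_def.1 hAB.1 v hvA this)
    rw [Module.End.det_eq_prod_roots_charpoly_of_splits hsp, ← LinearMap.charpoly_natDegree T',
      hsp.natDegree_eq_card_roots]
    generalize T'.charpoly.roots = s at hnorm
    induction s using Multiset.induction with
    | empty => simp
    | cons x s ih =>
      rw [Multiset.prod_cons, Multiset.card_cons, norm_mul, hnorm x (by simp),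
        ih fun μ hμ => hnorm μ (by simp [hμ]), pow_succ']
  have hAne : A ≠ ⊥ := by
    intro h
    have h2 : T.maxGenEigenspace μ₁ ≤ A := le_biSup (fun μ => T.maxGenEigenspace μ)
      (show μ₁ ∈ {μ : L | R ≤ ‖μ‖} from le_refl R)
    obtain ⟨v, hv⟩ := ((hroot μ₁).2 hμ₁).exists_hasEigenvector
    have := h2 (Module.End.eigenspace_le_maxGenEigenspace hv.1)
    rw [h] at this
    exact hv.2 ((Submodule.mem_bot L).1 this)
  have hrank : Module.finrank L A ≠ 0 := fun h => hAne (Submodule.finrank_eq_zero.1 h)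
  obtain ⟨S, hSR, hS0, hS⟩ : ∃ S : ℝ, S < R ∧ 0 < S ∧
      ∀ μ ∈ M.charpoly.roots.toFinset, ‖μ‖ < R → ‖μ‖ < S := by
    have : ∀ᶠ S in 𝓝[<] R, S < R ∧ 0 < S ∧
        ∀ μ ∈ M.charpoly.roots.toFinset, ‖μ‖ < R → ‖μ‖ < S := by
      refine (eventually_mem_nhdsWithin (s := Set.Iio R)).and (Eventually.and ?_ ?_)
      · exact Eventually.filter_mono nhdsWithin_le_nhds (lt_mem_nhds (by linarith))
      · rw [Filter.eventually_all_finset]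
        intro μ _
        by_cases h : ‖μ‖ < R
        · exact (Eventually.filter_mono nhdsWithin_le_nhds (lt_mem_nhds h)).mono fun _ h _ => h
        · exact Eventually.of_forall fun _ h' => absurd h' h
    exact this.exists
  obtain ⟨R', hR', hSR'⟩ : ∃ R' : ℝ, R < R' ∧
      S / R' * R' ^ Module.finrank L A < R ^ Module.finrank L A := by
    have hlt : S / R * R ^ Module.finrank L A < R ^ Module.finrank L A := by
      have : S / R < 1 := (div_lt_one (by linarith)).2 hSR
      exact mul_lt_of_lt_one_left (by positivity) this
    have hcont : ContinuousAt (fun x : ℝ => S / x * x ^ Module.finrank L A) R :=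
      (continuousAt_const.div continuousAt_id (hS0.trans hSR).ne').mul
        (continuousAt_id.pow _)
    have := (hcont.tendsto.eventually_lt_const hlt).filter_mono
      (nhdsWithin_le_nhds (s := Set.Ioi R))
    exact ((eventually_mem_nhdsWithin (s := Set.Ioi R)).and this).exists
  have hgtop : ∀ v, v ∈ growth T R' := by
    intro v
    have : (⊤ : Submodule L (Fin n → L)) ≤ growth T R' := by
      rw [← T.iSup_maxGenEigenspace_eq_top]
      refine iSup_le fun μ => ?_
      by_cases h : μ ∈ M.charpoly.roots
      · exact maxGenEigenspace_le_growth T ((hmax μ h).trans_lt hR')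
      · rw [hbot μ h]; exact bot_le
    exact this trivial
  have hgB : B ≤ growth T S := by
    refine iSup₂_le fun μ hμ => ?_
    by_cases h : μ ∈ M.charpoly.roots
    · exact maxGenEigenspace_le_growth T (hS μ (by simpa using h) (not_le.1 hμ))
    · rw [hbot μ h]; exact bot_le
  have hTm : ∀ (m : ℕ) v, (T ^ m) v = M ^ m *ᵥ v := by
    intro m v
    rw [← Matrix.toLin'_pow, Matrix.toLin'_apply]
  let b := Module.finBasis L A
  let e := Pi.basisFun L (Fin n)
  let α := LinearMap.toMatrix e b (A.projectionOnto B hAB)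
  let a := LinearMap.toMatrix b e A.subtype
  have hTe : LinearMap.toMatrix e e T = M := by
    rw [← LinearMap.toMatrix'_toLin' M]; rfl
  have hP : a * α = LinearMap.toMatrix e e P := (LinearMap.toMatrix_comp e b e _ _).symm
  have hPv : ∀ v, (a * α) *ᵥ v = P v := by
    intro v
    rw [hP]
    exact LinearMap.toMatrix'_mulVec P v
  have hD : α * M * a = LinearMap.toMatrix b b T' := by
    rw [← hTe, ← LinearMap.toMatrix_comp, ← LinearMap.toMatrix_comp]
    congr 1
    ext1 v
    exact Submodule.projectionOnto_apply_left hAB (T' v)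
  have hDdet : ‖(α * M * a).det‖ = R ^ Module.finrank L A := by
    rw [hD, LinearMap.det_toMatrix, hdet]
  refine ⟨Module.finrank L A, α, a, R', S, ?_, ?_, hS0, by linarith, ?_, ?_, ?_, ?_⟩
  · rw [← LinearMap.toMatrix_comp]
    have : (A.projectionOnto B hAB).comp A.subtype = LinearMap.id := by
      ext1 v
      exact Submodule.projectionOnto_apply_left hAB v
    rw [this, LinearMap.toMatrix_id]
  · rw [hP, ← hTe, ← LinearMap.toMatrix_comp, ← LinearMap.toMatrix_comp]
    congr 1
    exact LinearMap.ext fun v => (hPT v).symm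
  · rw [hDdet]
    exact one_lt_pow₀ hR hrank
  · rw [hDdet]
    exact hSR'
  · intro v
    obtain ⟨K, hK⟩ := hgtop v
    exact ⟨K, fun m => by rw [← hTm]; exact hK m⟩
  · intro v
    obtain ⟨K, hK⟩ := hgB (Submodule.sub_projection_mem hAB v)
    exact ⟨K, fun m => by rw [← hTm, hPv]; exact hK m⟩

end TitsAlternative

/-! ### Asymptotics on exterior powers -/

namespace TitsAlternative
open Matrix Topology Filter Asymptotics

theorem isBigO_prod {L ι : Type*} [NormedField L] (s : Finset ι) (f : ι → ℕ → L) (u : ℕ → ℝ)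
    (hf : ∀ i ∈ s, f i =O[atTop] u) :
    (fun m => ∏ i ∈ s, f i m) =O[atTop] fun m => u m ^ s.card := by
  classical
  induction s using Finset.induction_on with
  | empty => exact IsBigO.of_bound 1 (Eventually.of_forall fun m => by simp)
  | insert i s hi ih =>
    simp only [Finset.prod_insert hi, Finset.card_insert_of_notMem hi, pow_succ']
    exact (hf i (by simp)).mul (ih fun j hj => hf j (by simp [hj]))

theorem isBigO_prod_sub_prod {L ι : Type*} [NormedField L] (s : Finset ι) (f g : ι → ℕ → L)
    (u q : ℕ → ℝ) (hf : ∀ i ∈ s, f i =O[atTop] u) (hg : ∀ i ∈ s, g i =O[atTop] u)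
    (hfg : ∀ i ∈ s, (fun m => f i m - g i m) =O[atTop] fun m => q m * u m) :
    (fun m => ∏ i ∈ s, f i m - ∏ i ∈ s, g i m) =O[atTop] fun m => q m * u m ^ s.card := by
  classical
  induction s using Finset.induction_on with
  | empty => simpa using isBigO_zero _ _
  | insert i s hi ih =>
    have h1 := (hfg i (by simp)).mul (isBigO_prod s f u fun j hj => hf j (by simp [hj]))
    have h2 := (hg i (by simp)).mul (ih (fun j hj => hf j (by simp [hj]))
      (fun j hj => hg j (by simp [hj])) fun j hj => hfg j (by simp [hj]))
    simp only [Finset.prod_insert hi, Finset.card_insert_of_notMem hi]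
    have e : ∀ m, q m * u m ^ (s.card + 1) = q m * u m * u m ^ s.card := fun m => by ring
    have e' : ∀ m, u m * (q m * u m ^ s.card) = q m * u m * u m ^ s.card := fun m => by ring
    simp only [e'] at h2
    simp only [e]
    exact (h1.add h2).congr_left fun m => by ring

/-- The coefficient of `M ^ m` on the `r`-th exterior power, normalised by its dominant
eigenvalue `δ ^ m`, tends to a product: the limit has rank one. -/
theorem tendsto_det {L : Type*} [NormedField L] {n r : ℕ} (M : Matrix (Fin n) (Fin n) L)
    (α : Matrix (Fin r) (Fin n) L) (a : Matrix (Fin n) (Fin r) L) (R' S : ℝ)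
    (hαa : α * a = 1) (hcomm : M * (a * α) = a * α * M) (hS : 0 < S) (hR' : 0 < R')
    (hδ1 : 1 < ‖(α * M * a).det‖) (hδ : S / R' * R' ^ r < ‖(α * M * a).det‖)
    (hM : ∀ v, ∃ K : ℝ, ∀ m : ℕ, ‖M ^ m *ᵥ v‖ ≤ K * R' ^ m)
    (hM' : ∀ v, ∃ K : ℝ, ∀ m : ℕ, ‖M ^ m *ᵥ (v - (a * α) *ᵥ v)‖ ≤ K * S ^ m)
    (X : Matrix (Fin r) (Fin n) L) (Y : Matrix (Fin n) (Fin r) L) :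
    Tendsto (fun m : ℕ => ((α * M * a).det ^ m)⁻¹ * (X * M ^ m * Y).det) atTop
      (𝓝 ((X * a).det * (α * Y).det)) := by
  have entry : ∀ (i : Fin r) (v : Fin n → L) (K s : ℝ), 0 < s →
      (∀ m : ℕ, ‖M ^ m *ᵥ v‖ ≤ K * s ^ m) →
      (fun m => X i ⬝ᵥ (M ^ m *ᵥ v)) =O[atTop] fun m => s ^ m := by
    intro i v K s hs h
    refine IsBigO.of_bound ((∑ k, ‖X i k‖) * K) (Eventually.of_forall fun m => ?_)
    rw [Real.norm_of_nonneg (by positivity), mul_assoc, Finset.sum_mul]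
    refine (norm_sum_le _ _).trans (Finset.sum_le_sum fun k _ => ?_)
    rw [norm_mul]
    exact mul_le_mul_of_nonneg_left ((norm_le_pi_norm _ k).trans (h m)) (norm_nonneg _)
  let col : Matrix (Fin n) (Fin r) L → Fin r → Fin n → L := fun Z j k => Z k j
  have hentry : ∀ (Z : Matrix (Fin n) (Fin r) L) i j (m : ℕ),
      (X * M ^ m * Z) i j = X i ⬝ᵥ (M ^ m *ᵥ col Z j) := by
    intro Z i j m
    rw [Matrix.mul_assoc]
    rfl
  have hO : ∀ (Z : Matrix (Fin n) (Fin r) L) i j,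
      (fun m => (X * M ^ m * Z) i j) =O[atTop] fun m => R' ^ m := by
    intro Z i j
    obtain ⟨K, hK⟩ := hM (col Z j)
    simp only [hentry]
    exact entry i _ K R' hR' hK
  have hO' : ∀ i j, (fun m => (X * M ^ m * Y) i j - (X * M ^ m * (a * α * Y)) i j) =O[atTop]
      fun m => (S / R') ^ m * R' ^ m := by
    intro i j
    obtain ⟨K, hK⟩ := hM' (col Y j)
    have := entry i _ K S hS hK
    have e : ∀ m : ℕ, (S / R') ^ m * R' ^ m = S ^ m := fun m => by
      rw [← mul_pow, div_mul_cancel₀ _ hR'.ne']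
    simp only [e]
    refine this.congr_left fun m => ?_
    rw [hentry, hentry, Matrix.mulVec_sub, dotProduct_sub]
    rfl
  have hdet : (fun m => (X * M ^ m * Y).det - (X * M ^ m * (a * α * Y)).det) =O[atTop]
      fun m => (S / R') ^ m * (R' ^ m) ^ r := by
    simp only [Matrix.det_apply', ← Finset.sum_sub_distrib, ← mul_sub]
    refine IsBigO.fun_sum fun σ _ => ?_
    refine IsBigO.const_mul_left ?_ _
    simpa using isBigO_prod_sub_prod Finset.univ
      (fun i m => (X * M ^ m * Y) (σ i) i) (fun i m => (X * M ^ m * (a * α * Y)) (σ i) i)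
      (fun m => R' ^ m) (fun m => (S / R') ^ m) (fun i _ => hO _ _ _) (fun i _ => hO _ _ _)
      (fun i _ => hO' _ _)
  have hpow : ∀ m : ℕ, M ^ m * (a * α) = a * (α * M * a) ^ m * α := by
    intro m
    induction m with
    | zero => simp
    | succ m ih =>
      have hPa : a * α * a = a := by rw [Matrix.mul_assoc, hαa, Matrix.mul_one]
      have e1 : M * a = a * (α * M * a) := by
        calc M * a = M * (a * α) * a := by rw [Matrix.mul_assoc, hPa]
          _ = _ := by rw [hcomm]; simp only [Matrix.mul_assoc]
      calc M ^ (m + 1) * (a * α) = M * (M ^ m * (a * α)) := by rw [pow_succ', Matrix.mul_assoc]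
        _ = M * a * (α * M * a) ^ m * α := by rw [ih]; simp only [Matrix.mul_assoc]
        _ = _ := by rw [e1, pow_succ']; simp only [Matrix.mul_assoc]
  have hmain : ∀ m : ℕ, (X * M ^ m * (a * α * Y)).det =
      (α * M * a).det ^ m * ((X * a).det * (α * Y).det) := by
    intro m
    have : X * M ^ m * (a * α * Y) = (X * a) * (α * M * a) ^ m * (α * Y) := by
      calc _ = X * (M ^ m * (a * α)) * Y := by simp only [Matrix.mul_assoc]
        _ = _ := by rw [hpow]; simp only [Matrix.mul_assoc]
    rw [this, Matrix.det_mul, Matrix.det_mul, Matrix.det_pow]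
    ring
  have hδ0 : (α * M * a).det ≠ 0 := fun h => by rw [h, norm_zero] at hδ1; linarith
  set δ := (α * M * a).det
  have hsmall : Tendsto (fun m : ℕ =>
      (δ ^ m)⁻¹ * ((X * M ^ m * Y).det - (X * M ^ m * (a * α * Y)).det)) atTop (𝓝 0) := by
    have h2 : (fun m : ℕ => (δ ^ m)⁻¹) =O[atTop] fun m => (‖δ‖⁻¹) ^ m :=
      IsBigO.of_bound 1 (Eventually.of_forall fun m => by simp)
    refine (h2.mul hdet).trans_tendsto ?_
    have e : ∀ m : ℕ, ‖δ‖⁻¹ ^ m * ((S / R') ^ m * (R' ^ m) ^ r) =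
        (‖δ‖⁻¹ * (S / R' * R' ^ r)) ^ m := fun m => by
      rw [mul_pow, mul_pow, ← pow_mul, ← pow_mul, mul_comm m r]
    simp only [e]
    refine tendsto_pow_atTop_nhds_zero_of_lt_one (by positivity) ?_
    rw [inv_mul_lt_iff₀ (by linarith), mul_one]
    exact hδ
  have := hsmall.add (tendsto_const_nhds (x := (X * a).det * (α * Y).det))
  rw [zero_add] at this
  refine this.congr fun m => ?_
  rw [hmain, mul_sub, inv_mul_cancel_left₀ (pow_ne_zero _ hδ0), sub_add_cancel]

end TitsAlternative

/-! ### The representation generated by a function -/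

namespace TitsAlternative
open Matrix Topology Filter

/-- Right translation of functions on a group. -/
def rightTranslation (H L : Type*) [Group H] [Field L] : H →* Module.End L (H → L) where
  toFun h :=
    { toFun := fun f x => f (x * h), map_add' := fun _ _ => rfl, map_smul' := fun _ _ => rfl }
  map_one' := by ext1 f; funext x; simp
  map_mul' h h' := by
    ext1 f; funext x
    simp [mul_assoc]

/-- Restriction of right translation to an invariant space of functions. -/
def rightTranslationOn {H L : Type*} [Group H] [Field L] (W : Submodule L (H → L))
    (hW : ∀ h, ∀ f ∈ W, rightTranslation H L h f ∈ W) : H →* Module.End L W where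
  toFun h := (rightTranslation H L h).restrict (hW h)
  map_one' := by ext1 f; exact Subtype.ext (by simp)
  map_mul' h h' := by ext1 f; exact Subtype.ext (by simp)

/-- Functionals on a finite-dimensional space of functions are combinations of evaluations. -/
theorem mem_span_eval {X L : Type*} [Field L] (W : Submodule L (X → L)) [FiniteDimensional L W]
    (F : Module.Dual L W) :
    F ∈ Submodule.span L (Set.range fun x : X => (LinearMap.proj x).comp W.subtype) := by
  set Φ := Submodule.span L (Set.range fun x : X =>
    ((LinearMap.proj x).comp W.subtype : Module.Dual L W)) with hΦ
  have h : Φ.dualCoannihilator = ⊥ := by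
    rw [eq_bot_iff]
    intro w hw
    rw [Submodule.mem_dualCoannihilator] at hw
    refine Subtype.ext (funext fun x => ?_)
    exact hw _ (Submodule.subset_span ⟨x, rfl⟩)
  have := Subspace.dualCoannihilator_dualAnnihilator_eq (W := Φ)
  rw [h, Submodule.dualAnnihilator_bot] at this
  rw [← this]
  trivial

/-- The representation on the space `W` spanned by the translates of a function `c` on which `g`
acts proximally. It is irreducible, since the limit of the normalised powers of `g` maps
every `w ∈ W` to `w 1 • c`; general position is then a consequence of `coordAlg ρ` being a
domain. -/
theorem exists_free_of_function {H L : Type*} [Group H] [NormedField L] (hL : LocallyProper L)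
    {n : ℕ} (ρ : H →* GL (Fin n) L) [NoZeroDivisors (coordAlg ρ)] (c : H → L)
    (hc : c ∈ coordAlg ρ) (hc1 : c 1 = 1) (g : H) (hg : g ∈ commutator H) (hδ : 1 < ‖c g‖)
    (hfin : FiniteDimensional L (Submodule.span L (Set.range fun h : H => fun x => c (x * h))))
    (hlim : ∀ x h, Tendsto (fun m : ℕ => (c g ^ m)⁻¹ * c (x * g ^ m * h)) atTop (𝓝 (c x * c h))) :
    ∃ ψ : FreeGroup (Fin 2) →* H, Function.Injective ψ := by
  classical
  have hδ0 : c g ≠ 0 := fun h => by rw [h, norm_zero] at hδ; linarith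
  set δ := c g with hδdef
  let W := Submodule.span L (Set.range fun h : H => fun x => c (x * h))
  have hfin : FiniteDimensional L W := hfin
  have hWinv : ∀ h, ∀ f ∈ W, rightTranslation H L h f ∈ W := by
    intro h
    change W ≤ W.comap (rightTranslation H L h)
    refine Submodule.span_le.2 ?_
    rintro _ ⟨h', rfl⟩
    refine Submodule.subset_span ⟨h * h', ?_⟩
    funext x
    simp [rightTranslation, mul_assoc]
  let T := rightTranslationOn W hWinv
  have hT : ∀ h (w : W) x, (T h w).1 x = w.1 (x * h) := fun h w x => rfl
  let cW : W := ⟨c, Submodule.subset_span ⟨1, by simp⟩⟩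
  have hcoord : ∀ w : W, w.1 ∈ coordAlg ρ := by
    intro w
    have : W ≤ Subalgebra.toSubmodule (coordAlg ρ) := by
      refine Submodule.span_le.2 ?_
      rintro _ ⟨h, rfl⟩
      exact right_mem ρ h hc
    exact this w.2
  -- matrix coefficients of the representation are coordinate functions
  have hcoef : ∀ (F : Module.Dual L W) (w : W), (fun u => F (T u w)) ∈ coordAlg ρ := by
    intro F w
    induction mem_span_eval W F using Submodule.span_induction with
    | mem F h =>
      obtain ⟨x, rfl⟩ := h
      exact left_mem ρ x (hcoord w)
    | zero => exact (coordAlg ρ).zero_mem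
    | add F F' _ _ h h' => exact (coordAlg ρ).add_mem h h'
    | smul a F _ h => exact (coordAlg ρ).smul_mem h a
  have hev : ∀ (x : H) (w : W),
      Tendsto (fun m : ℕ => (δ ^ m)⁻¹ * w.1 (x * g ^ m)) atTop (𝓝 (w.1 1 * c x)) := by
    rintro x ⟨w, hw⟩
    dsimp only
    induction hw using Submodule.span_induction with
    | mem w h =>
      obtain ⟨h, rfl⟩ := h
      simpa [mul_comm] using hlim x h
    | zero => simp
    | add v w _ _ h h' => simpa [mul_add, add_mul] using h.add h'
    | smul a w _ h =>
      have := h.const_mul a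
      simpa [mul_left_comm, mul_assoc] using this
  have hF : ∀ (F : Module.Dual L W) (w : W),
      Tendsto (fun m : ℕ => (δ ^ m)⁻¹ * F (T (g ^ m) w)) atTop (𝓝 (w.1 1 * F cW)) := by
    intro F w
    induction mem_span_eval W F using Submodule.span_induction with
    | mem F h =>
      obtain ⟨x, rfl⟩ := h
      exact hev x w
    | zero => simp
    | add F F' _ _ h h' => simpa [mul_add] using h.add h'
    | smul a F _ h =>
      have := h.const_mul a
      simpa [mul_left_comm, mul_assoc] using this
  have hirr : ∀ (F : Module.Dual L W) (w : W), F ≠ 0 → w ≠ 0 → ∃ u, F (T u w) ≠ 0 := by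
    intro F w hF0 hw0
    by_contra! h
    apply hF0
    obtain ⟨y, hy⟩ : ∃ y, w.1 y ≠ 0 := by
      by_contra! hall
      exact hw0 (Subtype.ext (funext hall))
    have hzero : ∀ x, F (T x cW) = 0 := by
      intro x
      have h1 := hF (F.comp (T x)) (T y w)
      have h2 : ∀ m : ℕ, (δ ^ m)⁻¹ * (F.comp (T x)) (T (g ^ m) (T y w)) = 0 := by
        intro m
        have : (F.comp (T x)) (T (g ^ m) (T y w)) = F (T (x * (g ^ m * y)) w) := by
          rw [map_mul, map_mul]; rfl
        rw [this, h, mul_zero]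
      simp only [h2, hT, one_mul] at h1
      have h3 := tendsto_nhds_unique h1 tendsto_const_nhds
      exact (mul_eq_zero.1 h3).resolve_left hy
    ext ⟨v, hv⟩
    rw [LinearMap.zero_apply]
    induction hv using Submodule.span_induction with
    | mem v h =>
      obtain ⟨x, rfl⟩ := h
      exact hzero x
    | zero => exact map_zero F
    | add v w hv hw h h' =>
      have := map_add F ⟨v, hv⟩ ⟨w, hw⟩
      rw [h, h', add_zero] at this
      exact this
    | smul a v hv h =>
      have := map_smul F a ⟨v, hv⟩
      rw [h, smul_zero] at this
      exact this
  have hcW : cW ≠ 0 := fun h => by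
    have : c 1 = 0 := congrFun (congrArg Subtype.val h) 1
    rw [hc1] at this
    exact one_ne_zero this
  -- if `W` were a line, `c` would be a character, and trivial on commutators
  have hd : 2 ≤ Module.finrank L W := by
    by_contra hlt
    obtain ⟨v, hv⟩ := finrank_le_one_iff.1 (by lia : Module.finrank L W ≤ 1)
    obtain ⟨k₀, hk₀⟩ := hv cW
    have hmul : ∀ x h, c (x * h) = c x * c h := by
      intro x h
      obtain ⟨k, hk⟩ := hv (T h cW)
      have e0 : ∀ y, k₀ * v.1 y = c y := fun y => congrFun (congrArg Subtype.val hk₀) y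
      have e1 : ∀ y, k * v.1 y = c (y * h) := fun y => congrFun (congrArg Subtype.val hk) y
      have e2 := e1 1
      have e3 := e0 1
      rw [one_mul] at e2
      rw [hc1] at e3
      rw [← e1, ← e0, ← e2]
      linear_combination (-k * v.1 x) * e3
    let χ : H →* L := { toFun := c, map_one' := hc1, map_mul' := hmul }
    have h1 : χ.toHomUnits g = 1 := Abelianization.commutator_subset_ker χ.toHomUnits hg
    have h2 : δ = 1 := congrArg Units.val h1
    rw [h2, norm_one] at hδ
    exact lt_irrefl _ hδ
  let b := Module.finBasis L W
  let π : H →* Matrix (Fin (Module.finrank L W)) (Fin (Module.finrank L W)) L :=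
    (LinearMap.toMatrixAlgEquiv b : Module.End L W →* _).comp T
  have hπ : ∀ h, π h = LinearMap.toMatrix b b (T h) := fun h => rfl
  have hπv : ∀ (h : H) (w : W), π h *ᵥ b.repr w = b.repr (T h w) := by
    intro h w
    rw [hπ, LinearMap.toMatrix_mulVec_repr]
  let Fof : (Fin (Module.finrank L W) → L) → Module.Dual L W := fun φ => ∑ i, φ i • b.coord i
  let wof : (Fin (Module.finrank L W) → L) → W := fun v => b.equivFun.symm v
  have hwof : ∀ v, b.repr (wof v) = v := fun v => b.equivFun.apply_symm_apply v
  have hpair : ∀ φ v h, φ ⬝ᵥ (π h *ᵥ v) = Fof φ (T h (wof v)) := by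
    intro φ v h
    conv_lhs => rw [← hwof v, hπv]
    simp [Fof, dotProduct]
  have hFof : ∀ φ, φ ≠ 0 → Fof φ ≠ 0 := by
    intro φ hφ h
    apply hφ
    funext i
    have := LinearMap.congr_fun h (b i)
    simpa [Fof, Finsupp.single_apply] using this
  have hwof0 : ∀ v, v ≠ 0 → wof v ≠ 0 := by
    intro v hv h
    exact hv (b.equivFun.symm.map_eq_zero_iff.1 h)
  refine exists_free_of_proximal hL hd π ?_ g δ hδ0 (b.repr cW) (fun j => (b j).1 1) ?_ ?_ ?_
  · intro S hS
    obtain ⟨u, hu⟩ := exists_mul_ne_zero ρ (S.toFinset ×ˢ (Finset.univ : Finset Bool))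
      (fun q u => q.1.1 ⬝ᵥ (π (cond q.2 u u⁻¹) *ᵥ q.1.2)) (by
        rintro ⟨⟨φ, v⟩, _ | _⟩ -
        · simp only [hpair, cond_false]
          exact inv_arg_mem ρ (hcoef (Fof φ) (wof v))
        · simp only [hpair, cond_true]
          exact hcoef (Fof φ) (wof v)) (by
        rintro ⟨⟨φ, v⟩, e⟩ hq
        have hq' : (φ, v) ∈ S := by simpa using hq
        obtain ⟨h1, h2⟩ := hS _ hq'
        obtain ⟨u, hu⟩ := hirr _ _ (hFof φ h1) (hwof0 v h2)
        cases e
        · exact ⟨u⁻¹, by simpa [hpair] using hu⟩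
        · exact ⟨u, by simpa [hpair] using hu⟩)
    refine ⟨u, fun p hp => ⟨?_, ?_⟩⟩
    · exact hu (p, true) (by simpa using hp)
    · exact hu (p, false) (by simpa using hp)
  · intro h
    refine hcW (b.repr.map_eq_zero_iff.1 (Finsupp.ext fun i => congrFun h i))
  · intro h
    have : ∀ w : W, w.1 1 = 0 := by
      let ev : Module.Dual L W := (LinearMap.proj (1 : H)).comp W.subtype
      have : ev = 0 := b.ext fun j => congrFun h j
      exact fun w => LinearMap.congr_fun this w
    have h1 := this cW
    exact one_ne_zero (hc1.symm.trans h1)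
  · refine tendsto_pi_nhds.2 fun i => tendsto_pi_nhds.2 fun j => ?_
    have := hF (b.coord i) (b j)
    rw [vecMulVec_apply, mul_comm]
    refine this.congr fun m => ?_
    rw [Matrix.smul_apply, hπ, LinearMap.toMatrix_apply, smul_eq_mul]
    rfl

end TitsAlternative

/-! ### Free groups from eigenvalues outside the unit disc -/

namespace TitsAlternative
open Matrix Topology Filter

theorem det_mem {k Γ : Type*} [Field k] [Group Γ] {n r : ℕ} (ρ : Γ →* GL (Fin n) k)
    (M : Γ → Matrix (Fin r) (Fin r) k) (hM : ∀ i j, (fun x => M x i j) ∈ coordAlg ρ) :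
    (fun x => (M x).det) ∈ coordAlg ρ := by
  have e : (fun x => (M x).det) =
      ∑ σ : Equiv.Perm (Fin r), ((Equiv.Perm.sign σ : ℤ) : k) • ∏ i, fun x => M x (σ i) i := by
    funext x
    simp [Matrix.det_apply']
  rw [e]
  exact Subalgebra.sum_mem _ fun σ _ => Subalgebra.smul_mem _
    (Subalgebra.prod_mem _ fun i _ => hM _ _) _

/-- A group with irreducible Zariski closure whose commutator subgroup has an element with an
eigenvalue outside the unit disc contains a free group. With `r` the number of dominant
eigenvalues of that element, the function `c` is a matrix coefficient of the `r`-th exterior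
power at the dominant vector. -/
theorem exists_free_of_eigenvalue {H L : Type*} [Group H] [NormedField L] [IsAlgClosed L]
    (hL : LocallyProper L) {n : ℕ} (ρ : H →* GL (Fin n) L) [NoZeroDivisors (coordAlg ρ)] (g : H)
    (hg : g ∈ commutator H) (μ : L) (hμ : μ ∈ (ρ g).1.charpoly.roots) (h1 : 1 < ‖μ‖) :
    ∃ ψ : FreeGroup (Fin 2) →* H, Function.Injective ψ := by
  obtain ⟨r, α, a, R', S, hαa, hcomm, hS, hR', hδ1, hδ, hM, hM'⟩ :=
    exists_dominant (ρ g).1 μ hμ h1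
  let c : H → L := fun x => (α * (ρ x).1 * a).det
  refine exists_free_of_function hL ρ c ?_ ?_ g hg hδ1 ?_ ?_
  · refine det_mem ρ (fun x => α * (ρ x).1 * a) fun i j => ?_
    have e : (fun x => (α * (ρ x).1 * a) i j) =
        ∑ l, ∑ l', (α i l' * a l j) • fun x => (ρ x).1 l' l := by
      funext x
      simp only [Matrix.mul_apply, Finset.sum_mul, Finset.sum_apply, Pi.smul_apply, smul_eq_mul]
      exact Finset.sum_congr rfl fun l _ => Finset.sum_congr rfl fun l' _ => by ring
    rw [e]
    exact Subalgebra.sum_mem _ fun l _ => Subalgebra.sum_mem _ fun l' _ =>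
      Subalgebra.smul_mem _ (coord_mem ρ l' l) _
  · simp [c, hαa]
  · let e : Equiv.Perm (Fin r) × (Fin r → Fin n) → H → L :=
      fun q x => ∏ i, (α * (ρ x).1) (q.1 i) (q.2 i)
    have hle : Submodule.span L (Set.range fun h : H => fun x => c (x * h)) ≤
        Submodule.span L (Set.range e) := by
      refine Submodule.span_le.2 ?_
      rintro _ ⟨h, rfl⟩
      have : (fun x => c (x * h)) = ∑ σ : Equiv.Perm (Fin r), ∑ p : Fin r → Fin n,
          (((Equiv.Perm.sign σ : ℤ) : L) * ∏ i, ((ρ h).1 * a) (p i) i) • e (σ, p) := by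
        funext x
        have e1 : α * (ρ (x * h)).1 * a = (α * (ρ x).1) * ((ρ h).1 * a) := by
          rw [map_mul, Units.val_mul]
          simp only [Matrix.mul_assoc]
        simp only [c, e1, Matrix.det_apply', Finset.sum_apply, Pi.smul_apply, smul_eq_mul, e]
        refine Finset.sum_congr rfl fun σ _ => ?_
        simp only [Matrix.mul_apply (M := α * (ρ x).1), Finset.prod_univ_sum,
          Fintype.piFinset_univ, Finset.mul_sum, Finset.prod_mul_distrib]
        exact Finset.sum_congr rfl fun p _ => by ring
      beta_reduce
      rw [this]
      exact Submodule.sum_mem _ fun σ _ => Submodule.sum_mem _ fun p _ =>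
        Submodule.smul_mem _ _ (Submodule.subset_span ⟨(σ, p), rfl⟩)
    have : FiniteDimensional L (Submodule.span L (Set.range e)) :=
      FiniteDimensional.span_of_finite L (Set.finite_range e)
    exact Submodule.finiteDimensional_of_le hle
  · intro x h
    have := tendsto_det (ρ g).1 α a R' S hαa hcomm hS hR' hδ1 hδ hM hM' (α * (ρ x).1)
      ((ρ h).1 * a)
    simp only [← Matrix.mul_assoc] at this
    refine this.congr fun m => ?_
    simp only [c, map_mul, map_pow, Units.val_mul, Units.val_pow_eq_pow_val, Matrix.mul_assoc]

end TitsAlternative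

/-! ### The alternative -/

namespace TitsAlternative
open Matrix Topology Filter

/-- The alternative for an injective representation over a countable field with finite-dimensional
field of constants; both hypotheses hold for finitely generated extensions of `ℚ`. -/
theorem alternative_of_countable {k Γ : Type*} [Field k] [CharZero k] [Countable k]
    [FiniteDimensional ℚ (algebraicClosure ℚ k)] [Group Γ] {n : ℕ} (ρ : Γ →* GL (Fin n) k)
    (hρ : Function.Injective ρ) :
    (∃ H : Subgroup Γ, Group.IsSolvable H ∧ H.FiniteIndex) ∨
      ∃ φ : FreeGroup (Fin 2) →* Γ, Function.Injective φ := by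
  obtain ⟨H, hH, hdom⟩ := exists_irreducible ρ
  let ρH : H →* GL (Fin n) k := ρ.comp H.subtype
  have hρH : Function.Injective ρH := hρ.comp H.subtype_injective
  suffices h : Group.IsSolvable H ∨ ∃ φ : FreeGroup (Fin 2) →* H, Function.Injective φ by
    rcases h with h | ⟨φ, hφ⟩
    · exact Or.inl ⟨H, h, hH⟩
    · exact Or.inr ⟨H.subtype.comp φ, H.subtype_injective.comp hφ⟩
  by_cases hC : ∀ d ∈ commutator H, ∀ (σ : k →+* ℂ),
      ∀ μ ∈ (((ρH d).1.map σ).charpoly).roots, ‖μ‖ ≤ 1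
  · by_cases hP : ∀ d ∈ commutator H, ∀ (p : ℕ) [Fact p.Prime] (σ : k →+* PadicAlgCl p),
        ∀ μ ∈ (((ρH d).1.map σ).charpoly).roots, ‖μ‖ ≤ 1
    · left
      refine isSolvable_of_finite_trace ρH hρH ((finite_bounded (k := k) n).subset ?_)
      rintro _ ⟨d, hd, rfl⟩
      have e : ∀ {L : Type} [Field L] (σ : k →+* L),
          σ (ρH d).1.trace = ((ρH d).1.map σ).trace := fun σ => AddMonoidHom.map_trace σ _
      refine ⟨fun σ => ?_, fun p _ σ => ?_⟩
      · rw [e]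
        exact norm_trace_le _ (hC d hd σ)
      · rw [e]
        exact norm_trace_le_one _ (hP d hd p σ)
    · right
      push Not at hP
      obtain ⟨d, hd, p, hp, σ, μ, hμ, h1⟩ := hP
      have := noZeroDivisors_map ρH σ
      exact exists_free_of_eigenvalue (locallyProper_padicAlgCl p)
        ((Matrix.GeneralLinearGroup.map σ).comp ρH) d hd μ hμ h1
  · right
    push Not at hC
    obtain ⟨d, hd, σ, μ, hμ, h1⟩ := hC
    have := noZeroDivisors_map ρH σ
    exact exists_free_of_eigenvalue locallyProper_complex
      ((Matrix.GeneralLinearGroup.map σ).comp ρH) d hd μ hμ h1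

end TitsAlternative

/-- (Tits alternative) A finitely generated subgroup of `GL(n, k)`, `k` a field of
characteristic 0, either has a solvable subgroup of finite index or contains a
non-abelian free subgroup. -/
theorem tits_alternative (k : Type*) [Field k] [CharZero k] (n : ℕ)
    (G : Subgroup (Matrix.GeneralLinearGroup (Fin n) k)) (hG : Group.FG G) :
    (∃ H : Subgroup G, IsSolvable H ∧ H.FiniteIndex) ∨
      (∃ φ : FreeGroup (Fin 2) →* G, Function.Injective φ) := by
  obtain ⟨S, hS⟩ := (Group.fg_iff_subgroup_fg G).1 hG
  -- `F` is generated by the entries of the generators of `G` and of their inverses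
  let E : Set k := ⋃ s ∈ S, Set.range (fun q : Fin n × Fin n => s.1 q.1 q.2) ∪
    Set.range fun q : Fin n × Fin n => (s⁻¹).1 q.1 q.2
  have hE : E.Finite := S.finite_toSet.biUnion fun s _ =>
    (Set.finite_range _).union (Set.finite_range _)
  let F := IntermediateField.adjoin ℚ E
  have : Algebra.EssFiniteType ℚ F :=
    IntermediateField.essFiniteType_iff.2 (IntermediateField.fg_adjoin_of_finite hE)
  have : FiniteDimensional ℚ (algebraicClosure ℚ F) :=
    TitsAlternative.finiteDimensional_algebraicClosure
  have : Countable F := by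
    have h := IntermediateField.lift_cardinalMk_adjoin_le ℚ E
    have hle : Cardinal.lift.{0} (Cardinal.mk F) ≤ Cardinal.aleph0 := by
      refine h.trans ?_
      have := hE.countable.le_aleph0
      simp
    rw [← Cardinal.mk_le_aleph0_iff]
    simpa using hle
  let ι : Matrix.GeneralLinearGroup (Fin n) F →* Matrix.GeneralLinearGroup (Fin n) k :=
    Matrix.GeneralLinearGroup.map (algebraMap F k)
  have hι : Function.Injective ι := by
    intro A B h
    refine Units.ext (Matrix.ext fun i j => (algebraMap F k).injective ?_)
    have h1 : (ι A).1 = (ι B).1 := by rw [h]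
    exact congrFun (congrFun h1 i) j
  have hle : G ≤ ι.range := by
    rw [← hS, Subgroup.closure_le]
    intro s hs
    have h1 : ∀ i j, s.1 i j ∈ F := fun i j => IntermediateField.subset_adjoin _ _
      (Set.mem_biUnion hs (Or.inl ⟨(i, j), rfl⟩))
    have h2 : ∀ i j, (s⁻¹).1 i j ∈ F := fun i j => IntermediateField.subset_adjoin _ _
      (Set.mem_biUnion hs (Or.inr ⟨(i, j), rfl⟩))
    let M : Matrix (Fin n) (Fin n) F := fun i j => ⟨s.1 i j, h1 i j⟩
    let N : Matrix (Fin n) (Fin n) F := fun i j => ⟨(s⁻¹).1 i j, h2 i j⟩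
    have hinj : Function.Injective fun A : Matrix (Fin n) (Fin n) F => A.map (algebraMap F k) :=
      Matrix.map_injective (algebraMap F k).injective
    have hM : M.map (algebraMap F k) = s.1 := rfl
    have hN : N.map (algebraMap F k) = (s⁻¹).1 := rfl
    refine ⟨⟨M, N, hinj ?_, hinj ?_⟩, Units.ext hM⟩
    · simp only [Matrix.map_mul, hM, hN]
      rw [Units.mul_inv, Matrix.map_one _ (map_zero _) (map_one _)]
    · simp only [Matrix.map_mul, hM, hN]
      rw [Units.inv_mul, Matrix.map_one _ (map_zero _) (map_one _)]
  let ρ : G →* Matrix.GeneralLinearGroup (Fin n) F :=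
    ((MonoidHom.ofInjective hι).symm : ι.range →* _).comp (Subgroup.inclusion hle)
  exact TitsAlternative.alternative_of_countable ρ
    ((MonoidHom.ofInjective hι).symm.injective.comp (Subgroup.inclusion_injective hle))
end
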